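/- arXiv:1009.3857 — 5 statements merged into one kernel-verified Lean document; each statement's English description precedes it below -/
import Mathlib

section
/- Let Ω ⊂ ℝ^d be a compact convex set and μ, ν ∈ P(Ω). Then the minimal value of Beckmann's problem equals the 1-Wasserstein distance: min{ M(λ) : λ a finite ℝ^d-valued vector measure on Ω with ∇·λ = μ − ν in the weak sense } = W_1(μ,ν), where W_1(μ,ν) = min{ ∫_{Ω×Ω} |x − y| dγ : γ ∈ Π(μ,ν) }. Moreover, the minimum on the left is attained by the vector measure v_γ defined by ⟨v_γ, φ⟩ := ∫_{Ω×Ω} ∫_0^1 (y − x)·φ((1−t)x + ty) dt dγ(x,y), for any γ optimal in the right-hand problem. -/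
/-!
Two inequalities give the result.

*Every plan yields a flow of no larger mass* (`exists_flow`). For a plan `γ`, let `ρ` be the law of
`((1 - t) x + t y, y - x)` when `(x, y)` has law `γ` and `t` is independent and uniform on `[0, 1]`.
Disintegrate `ρ` over its first marginal `m` and let `h z` be the conditional mean of the velocity
`y - x` at the point `z`. Then `h · m` is the vector measure `v_γ`: its pairing with `φ` is the
double integral by Fubini, the divergence constraint is the fundamental theorem of calculus along
segments, and its mass is at most the cost of `γ` by Jensen's inequality.

*Some plan costs no more than any admissible flow* (`exists_plan_le_mass`). By
Kantorovich–Rubinstein duality (`exists_plan_le_dual`) there is a plan whose cost is at most the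
supremum of `∫ ψ dν - ∫ ψ dμ` over `1`-Lipschitz `ψ`. Mollifying `ψ` gives `C¹` functions with
gradient bounded by `1`, to which the divergence constraint applies, so this supremum is at most
the mass of any admissible vector measure (`lipschitz_pairing_le_mass`).

The duality theorem is proved by Hahn–Banach: `f ↦ inf {∫ φ dμ + ∫ χ dν : f ≤ φ ⊕ χ}` is sublinear
on `C(K × K)`, and a linear functional below it that touches it at minus the distance is
automatically positive with marginals `μ` and `ν`; by Riesz–Markov–Kakutani it is a plan.

For an optimal `γ` the two inequalities force the mass of `v_γ` to equal the cost of `γ`.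
-/

open MeasureTheory
open scoped RealInnerProductSpace


/-! ### Kantorovich–Rubinstein duality on a compact metric space -/

lemma integrable_of_compact {K : Type*} [TopologicalSpace K] [CompactSpace K]
    [MeasurableSpace K] [OpensMeasurableSpace K]
    (μ : Measure K) [IsFiniteMeasure μ] {f : K → ℝ} (hf : Continuous f) : Integrable f μ :=
  hf.integrable_of_hasCompactSupport (HasCompactSupport.of_compactSpace f)

/-- The values `∫ φ dμ + ∫ χ dν` over all pairs of continuous functions with
`f (x, y) ≤ φ x + χ y`. Its infimum, as a function of `f`, is the sublinear functional
to which Hahn–Banach is applied. -/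
def dualValues {K : Type*} [TopologicalSpace K] [MeasurableSpace K]
    (μ ν : Measure K) (f : C(K × K, ℝ)) : Set ℝ :=
  {r | ∃ φ χ : C(K, ℝ), (∀ x y, f (x, y) ≤ φ x + χ y) ∧ r = ∫ x, φ x ∂μ + ∫ y, χ y ∂ν}

section Kantorovich

variable {K : Type*} [MetricSpace K] [MeasurableSpace K] (μ ν : Measure K)

lemma dualValues_smul {c : ℝ} (hc : 0 < c) (f : C(K × K, ℝ)) {r : ℝ}
    (hr : r ∈ dualValues μ ν f) : c * r ∈ dualValues μ ν (c • f) := by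
  obtain ⟨φ, χ, h, rfl⟩ := hr
  refine ⟨c • φ, c • χ, fun x y => ?_, ?_⟩
  · simpa [mul_add] using mul_le_mul_of_nonneg_left (h x y) hc.le
  · simp [integral_const_mul, mul_add]

variable [CompactSpace K]

lemma dualValues_nonempty (f : C(K × K, ℝ)) : (dualValues μ ν f).Nonempty :=
  ⟨_, ContinuousMap.const K ‖f‖, 0,
    fun x y => by simpa using (abs_le.1 (f.norm_coe_le_norm (x, y))).2, rfl⟩

variable [BorelSpace K] [IsProbabilityMeasure μ] [IsProbabilityMeasure ν]

lemma dualValues_ge {f : C(K × K, ℝ)} {a : ℝ} (ha : ∀ p, a ≤ f p) {r : ℝ}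
    (hr : r ∈ dualValues μ ν f) : a ≤ r := by
  obtain ⟨φ, χ, h, rfl⟩ := hr
  have iφ := integrable_of_compact μ φ.continuous
  have iχ := integrable_of_compact ν χ.continuous
  have h1 : ∀ y, a - χ y ≤ ∫ x, φ x ∂μ := by
    intro y
    have := integral_mono (μ := μ) (integrable_const (a - χ y)) iφ
      (fun x => by have := h x y; have := ha (x, y); simp only; linarith)
    simpa using this
  have h2 := integral_mono (μ := ν) (integrable_const (a - ∫ x, φ x ∂μ)) iχ
    (fun y => by have := h1 y; simp only; linarith)
  simp at h2
  linarith

lemma dualValues_bddBelow (f : C(K × K, ℝ)) : BddBelow (dualValues μ ν f) :=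
  ⟨-‖f‖, fun _ hr => dualValues_ge μ ν (fun p => (abs_le.1 (f.norm_coe_le_norm p)).1) hr⟩

lemma sInf_dualValues_smul_le {c : ℝ} (hc : 0 < c) (f : C(K × K, ℝ)) :
    sInf (dualValues μ ν (c • f)) ≤ c * sInf (dualValues μ ν f) := by
  rw [← div_le_iff₀' hc]
  refine le_csInf (dualValues_nonempty μ ν f) fun r hr => ?_
  rw [div_le_iff₀' hc]
  exact csInf_le (dualValues_bddBelow μ ν _) (dualValues_smul μ ν hc f hr)

lemma sInf_dualValues_smul {c : ℝ} (hc : 0 < c) (f : C(K × K, ℝ)) :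
    sInf (dualValues μ ν (c • f)) = c * sInf (dualValues μ ν f) := by
  refine le_antisymm (sInf_dualValues_smul_le μ ν hc f) ?_
  have := sInf_dualValues_smul_le μ ν (inv_pos.2 hc) (c • f)
  rw [smul_smul, inv_mul_cancel₀ hc.ne', one_smul] at this
  rwa [← le_inv_mul_iff₀ hc]

lemma sInf_dualValues_add (f g : C(K × K, ℝ)) :
    sInf (dualValues μ ν (f + g)) ≤ sInf (dualValues μ ν f) + sInf (dualValues μ ν g) := by
  rw [← sub_le_iff_le_add]
  refine le_csInf (dualValues_nonempty μ ν f) ?_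
  rintro _ ⟨φ, χ, h, rfl⟩
  rw [sub_le_comm]
  refine le_csInf (dualValues_nonempty μ ν g) ?_
  rintro _ ⟨φ', χ', h', rfl⟩
  rw [sub_le_iff_le_add]
  refine csInf_le (dualValues_bddBelow μ ν _) ⟨φ + φ', χ + χ', fun x y => ?_, ?_⟩
  · have := h x y
    have := h' x y
    simp only [ContinuousMap.add_apply]
    linarith
  · simp only [ContinuousMap.add_apply]
    rw [integral_add (integrable_of_compact μ φ.continuous) (integrable_of_compact μ φ'.continuous),
      integral_add (integrable_of_compact ν χ.continuous) (integrable_of_compact ν χ'.continuous)]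
    ring

/-- Hahn–Banach: a linear functional below the dual value and touching it at a prescribed `c`. -/
lemma exists_dominated_functional (c : C(K × K, ℝ)) :
    ∃ L : C(K × K, ℝ) →ₗ[ℝ] ℝ, L c = sInf (dualValues μ ν c) ∧
      ∀ f, L f ≤ sInf (dualValues μ ν f) := by
  have h0 : sInf (dualValues μ ν 0) = 0 := by
    have := sInf_dualValues_smul μ ν (c := 2) two_pos 0
    rw [smul_zero] at this
    linarith
  have hneg : ∀ f, -sInf (dualValues μ ν (-f)) ≤ sInf (dualValues μ ν f) := fun f => by
    have := sInf_dualValues_add μ ν f (-f)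
    rw [add_neg_cancel, h0] at this
    linarith
  obtain ⟨L, hL, hle⟩ := exists_extension_of_le_sublinear
    (LinearPMap.mkSpanSingleton' (σ := RingHom.id ℝ) c (sInf (dualValues μ ν c)) (by
      intro t ht
      rcases smul_eq_zero.1 ht with rfl | rfl <;> simp [h0]))
    (fun f => sInf (dualValues μ ν f)) (fun t ht f => sInf_dualValues_smul μ ν ht f)
    (sInf_dualValues_add μ ν) (by
      rintro ⟨x, hx⟩
      obtain ⟨t, rfl⟩ := Submodule.mem_span_singleton.1 hx
      rw [LinearPMap.mkSpanSingleton'_apply]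
      simp only [RingHom.id_apply, smul_eq_mul]
      rcases lt_trichotomy t 0 with ht | rfl | ht
      · have h1 := hneg (t • c)
        rw [← neg_smul, sInf_dualValues_smul μ ν (neg_pos.2 ht)] at h1
        linarith
      · simp [h0]
      · rw [sInf_dualValues_smul μ ν ht])
  refine ⟨L, ?_, hle⟩
  exact (hL ⟨c, Submodule.mem_span_singleton_self c⟩).trans
    (LinearPMap.mkSpanSingleton'_apply_self _ _ _ _)

/-- A dual pair for the cost `-dist` can be improved to a single `1`-Lipschitz potential, namely
the inf-convolution `ψ y = inf_x (φ x + dist x y)`. -/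
lemma lipschitz_of_dual_pair {K : Type*} [MetricSpace K] [Nonempty K] (φ χ : C(K, ℝ)) (h : ∀ x y, -dist x y ≤ φ x + χ y) :
    ∃ ψ : K → ℝ, LipschitzWith 1 ψ ∧ (∀ x, ψ x ≤ φ x) ∧ ∀ y, -χ y ≤ ψ y := by
  have hb : ∀ y, ∀ x, -χ y ≤ φ x + dist x y := fun y x => by linarith [h x y]
  have hbdd : ∀ y, BddBelow (Set.range fun x => φ x + dist x y) := fun y =>
    ⟨-χ y, by rintro _ ⟨x, rfl⟩; exact hb y x⟩
  refine ⟨fun y => ⨅ x, (φ x + dist x y), ?_, fun x => ?_, fun y => le_ciInf (hb y)⟩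
  · refine LipschitzWith.of_le_add fun y y' => ?_
    rw [← sub_le_iff_le_add]
    refine le_ciInf fun x => ?_
    have := ciInf_le (hbdd y) x
    have := dist_triangle_right x y y'
    have := dist_triangle x y' y
    rw [dist_comm y' y] at this
    linarith
  · simpa using ciInf_le (hbdd x) x

/-- Kantorovich–Rubinstein duality: some plan has cost at most every upper bound of the dual
problem over `1`-Lipschitz potentials. -/
theorem exists_plan_le_dual [SecondCountableTopology K] :
    ∃ γ : Measure (K × K), γ.map Prod.fst = μ ∧ γ.map Prod.snd = ν ∧
      ∀ r : ℝ, (∀ ψ : K → ℝ, LipschitzWith 1 ψ → ∫ y, ψ y ∂ν - ∫ x, ψ x ∂μ ≤ r) →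
        ∫ p, dist p.1 p.2 ∂γ ≤ r := by
  have : Nonempty K := nonempty_of_isProbabilityMeasure μ
  let c : C(K × K, ℝ) := ⟨fun p => -dist p.1 p.2, by fun_prop⟩
  obtain ⟨L, hLc, hL⟩ := exists_dominated_functional μ ν c
  have hLle : ∀ (f : C(K × K, ℝ)) (φ χ : C(K, ℝ)),
      (∀ x y, f (x, y) ≤ φ x + χ y) → L f ≤ ∫ x, φ x ∂μ + ∫ y, χ y ∂ν :=
    fun f φ χ h => (hL f).trans (csInf_le (dualValues_bddBelow μ ν f) ⟨φ, χ, h, rfl⟩)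
  have hpos : ∀ f : C(K × K, ℝ), (∀ p, 0 ≤ f p) → 0 ≤ L f := by
    intro f hf
    have := hLle (-f) 0 0 (fun x y => by simpa using hf (x, y))
    simpa using this
  let Λ : CompactlySupportedContinuousMap (K × K) ℝ →ₚ[ℝ] ℝ := PositiveLinearMap.mk₀
    { toFun := fun f => L f.toContinuousMap
      map_add' := fun f g => by rw [← map_add]; rfl
      map_smul' := fun a f => by rw [RingHom.id_apply, ← map_smul]; rfl }
    (fun f hf => hpos _ fun p => hf p)
  have hint : ∀ f : C(K × K, ℝ), ∫ p, f p ∂(RealRMK.rieszMeasure Λ) = L f := fun f =>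
    RealRMK.integral_rieszMeasure Λ (CompactlySupportedContinuousMap.continuousMapEquiv f)
  have hLeq : ∀ (f : C(K × K, ℝ)) (φ χ : C(K, ℝ)),
      (∀ x y, f (x, y) = φ x + χ y) → L f = ∫ x, φ x ∂μ + ∫ y, χ y ∂ν := by
    intro f φ χ h
    refine le_antisymm (hLle f φ χ fun x y => (h x y).le) ?_
    have := hLle (-f) (-φ) (-χ) (fun x y => by simp [h])
    simp [integral_neg] at this
    linarith
  have : IsFiniteMeasure (RealRMK.rieszMeasure Λ) := by
    unfold RealRMK.rieszMeasure
    infer_instance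
  refine ⟨RealRMK.rieszMeasure Λ, ?_, ?_, fun r hr => ?_⟩
  · refine ext_of_forall_integral_eq_of_IsFiniteMeasure fun φ => ?_
    rw [integral_map measurable_fst.aemeasurable φ.continuous.aestronglyMeasurable]
    have := hint ⟨fun p => φ p.1, by fun_prop⟩
    rw [hLeq _ φ.toContinuousMap 0 (by simp)] at this
    simpa using this
  · refine ext_of_forall_integral_eq_of_IsFiniteMeasure fun χ => ?_
    rw [integral_map measurable_snd.aemeasurable χ.continuous.aestronglyMeasurable]
    have := hint ⟨fun p => χ p.2, by fun_prop⟩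
    rw [hLeq _ 0 χ.toContinuousMap (by simp)] at this
    simpa using this
  · have h1 := hint c
    simp only [c, ContinuousMap.coe_mk, integral_neg] at h1
    have h2 : -r ≤ L c := by
      rw [hLc]
      refine le_csInf (dualValues_nonempty μ ν c) ?_
      rintro _ ⟨φ, χ, h, rfl⟩
      obtain ⟨ψ, hψ, h3, h4⟩ := lipschitz_of_dual_pair φ χ h
      have i1 := integrable_of_compact μ hψ.continuous
      have i2 := integrable_of_compact ν hψ.continuous
      have h5 := integral_mono i1 (integrable_of_compact μ φ.continuous) h3
      have h6 := integral_mono (integrable_of_compact ν χ.continuous).neg i2 h4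
      have h7 := hr ψ hψ
      simp only [Pi.neg_apply, integral_neg] at h6
      linarith
    have h8 : -∫ p : K × K, dist p.1 p.2 ∂(RealRMK.rieszMeasure Λ) = L c := h1
    linarith

end Kantorovich

/-! ### Lipschitz potentials against admissible vector measures -/

open scoped Convolution in
/-- Convolution with a smooth probability density supported in the ball of radius `ε` moves a
`1`-Lipschitz function by at most `ε` and keeps it `1`-Lipschitz. -/
lemma exists_smooth_approx {d : ℕ} {ψ : EuclideanSpace ℝ (Fin d) → ℝ} (hψ : LipschitzWith 1 ψ)
    {ε : ℝ} (hε : 0 < ε) :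
    ∃ g : EuclideanSpace ℝ (Fin d) → ℝ, ContDiff ℝ 1 g ∧ (∀ x, |g x - ψ x| ≤ ε) ∧
      ∀ x, ‖gradient g x‖ ≤ 1 := by
  let b : ContDiffBump (0 : EuclideanSpace ℝ (Fin d)) := ⟨ε / 2, ε, by linarith, by linarith⟩
  let g := (b.normed volume ⋆[ContinuousLinearMap.lsmul ℝ ℝ, volume] ψ)
  have hcont : Continuous ψ := hψ.continuous
  have hg : ContDiff ℝ 1 g :=
    b.hasCompactSupport_normed.contDiff_convolution_left _ b.contDiff_normed
      hcont.locallyIntegrable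
  have hi : ∀ x, Integrable (fun t => b.normed volume t * ψ (x - t)) := fun x =>
    ((b.continuous_normed).mul (hcont.comp (continuous_const.sub continuous_id)))
      |>.integrable_of_hasCompactSupport b.hasCompactSupport_normed.mul_right
  have hlip : LipschitzWith 1 g := by
    refine LipschitzWith.of_le_add fun x y => ?_
    have h1 : g x ≤ ∫ t, (b.normed volume t * ψ (y - t) + b.normed volume t * dist x y) := by
      refine integral_mono (hi x) ((hi y).add (b.integrable_normed.mul_const _)) fun t => ?_
      have h2 := hψ.le_add_mul (x - t) (y - t)
      simp only [NNReal.coe_one, one_mul, dist_sub_right] at h2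
      simp only
      rw [← mul_add]
      exact mul_le_mul_of_nonneg_left h2 (b.nonneg_normed t)
    rw [integral_add (hi y) (b.integrable_normed.mul_const _), integral_mul_const,
      b.integral_normed, one_mul] at h1
    exact h1
  refine ⟨g, hg, fun x => ?_, fun x => ?_⟩
  · refine b.dist_normed_convolution_le hcont.aestronglyMeasurable fun y hy => ?_
    have := hψ.dist_le_mul y x
    simp only [NNReal.coe_one, one_mul] at this
    exact this.trans (Metric.mem_ball.1 hy).le
  · have := norm_fderiv_le_of_lipschitz ℝ hlip (x₀ := x)
    simpa [gradient] using this

lemma integrable_of_continuous_of_ae_mem {X F : Type*} [TopologicalSpace X] [MeasurableSpace X]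
    [OpensMeasurableSpace X] [SecondCountableTopology X] [NormedAddCommGroup F] [MeasurableSpace F]
    [BorelSpace F] [SecondCountableTopology F]
    {m : Measure X} [IsFiniteMeasure m] {S : Set X} (hS : IsCompact S) (hm : ∀ᵐ x ∂m, x ∈ S)
    {f : X → F} (hf : Continuous f) : Integrable f m := by
  obtain ⟨C, hC⟩ := hS.exists_bound_of_continuousOn hf.continuousOn
  exact Integrable.of_bound hf.aestronglyMeasurable C (hm.mono hC)

/-- The divergence constraint, assumed for `C¹` test functions only, bounds the mass of `h · m` from
below by the pairing of `ν - μ` with every `1`-Lipschitz function. -/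
lemma lipschitz_pairing_le_mass {d : ℕ} {Ω : Set (EuclideanSpace ℝ (Fin d))}
    (hΩc : IsCompact Ω) {μ ν m : Measure (EuclideanSpace ℝ (Fin d))}
    [IsProbabilityMeasure μ] [IsProbabilityMeasure ν]
    (hμ : ∀ᵐ x ∂μ, x ∈ Ω) (hν : ∀ᵐ x ∂ν, x ∈ Ω)
    {h : EuclideanSpace ℝ (Fin d) → EuclideanSpace ℝ (Fin d)} (hh : Integrable h m)
    (hdiv : ∀ ψ : EuclideanSpace ℝ (Fin d) → ℝ, ContDiff ℝ 1 ψ →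
          ∫ x, ⟪gradient ψ x, h x⟫ ∂m = ∫ x, ψ x ∂ν - ∫ x, ψ x ∂μ)
    {ψ : EuclideanSpace ℝ (Fin d) → ℝ} (hψ : LipschitzWith 1 ψ) :
    ∫ x, ψ x ∂ν - ∫ x, ψ x ∂μ ≤ ∫ x, ‖h x‖ ∂m := by
  refine le_of_forall_pos_le_add fun ε hε => ?_
  obtain ⟨g, hg, hgψ, hgrad⟩ := exists_smooth_approx hψ (half_pos hε)
  have h1 : ∫ x, g x ∂ν - ∫ x, g x ∂μ ≤ ∫ x, ‖h x‖ ∂m := by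
    rw [← hdiv g hg]
    refine (Real.le_norm_self _).trans (norm_integral_le_of_norm_le hh.norm (ae_of_all _ fun x => ?_))
    refine (norm_inner_le_norm _ _).trans ?_
    exact mul_le_of_le_one_left (norm_nonneg _) (hgrad x)
  have h2 : ∫ x, ψ x ∂ν ≤ ∫ x, (g x + ε / 2) ∂ν :=
    integral_mono (integrable_of_continuous_of_ae_mem hΩc hν hψ.continuous)
      (integrable_of_continuous_of_ae_mem hΩc hν (hg.continuous.add continuous_const))
      (fun x => by have := abs_le.1 (hgψ x); simp only; linarith)
  have h3 : ∫ x, g x ∂μ ≤ ∫ x, (ψ x + ε / 2) ∂μ :=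
    integral_mono (integrable_of_continuous_of_ae_mem hΩc hμ hg.continuous)
      (integrable_of_continuous_of_ae_mem hΩc hμ (hψ.continuous.add continuous_const))
      (fun x => by have := abs_le.1 (hgψ x); simp only; linarith)
  rw [integral_add (integrable_of_continuous_of_ae_mem hΩc hν hg.continuous)
    (integrable_const _)] at h2
  rw [integral_add (integrable_of_continuous_of_ae_mem hΩc hμ hψ.continuous)
    (integrable_const _)] at h3
  simp at h2 h3
  linarith

/-! ### The flow of a transport plan -/

section Flow

lemma plan_ae_mem {E : Type*} [MeasurableSpace E] {Ω : Set E}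
    {μ ν : Measure E}
    (hμ : ∀ᵐ x ∂μ, x ∈ Ω) (hν : ∀ᵐ x ∂ν, x ∈ Ω)
    {γ : Measure (E × E)}
    (h1 : γ.map Prod.fst = μ) (h2 : γ.map Prod.snd = ν) : ∀ᵐ p ∂γ, p ∈ Ω ×ˢ Ω := by
  subst h1 h2
  filter_upwards [ae_of_ae_map measurable_fst.aemeasurable hμ,
    ae_of_ae_map measurable_snd.aemeasurable hν] with p hp hq using ⟨hp, hq⟩

variable {E : Type*} [NormedAddCommGroup E] [InnerProductSpace ℝ E] [CompleteSpace E]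
  [SecondCountableTopology E] [MeasurableSpace E] [BorelSpace E]

/-- The vector measure `v_γ` of a plan `γ`, written as `h · m`. No optimality of `γ` is needed
for the bound of its mass by the cost. -/
lemma exists_flow {Ω : Set E}
    (hΩc : IsCompact Ω) (hΩconv : Convex ℝ Ω) {μ ν : Measure E}
    [IsProbabilityMeasure μ]
    (hμ : ∀ᵐ x ∂μ, x ∈ Ω) (hν : ∀ᵐ x ∂ν, x ∈ Ω)
    {γ : Measure (E × E)}
    (h1 : γ.map Prod.fst = μ) (h2 : γ.map Prod.snd = ν) :
    ∃ (m : Measure E)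
        (h : E → E),
        IsFiniteMeasure m ∧ m Ωᶜ = 0 ∧ Integrable h m ∧
        (∀ ψ : E → ℝ, ContDiff ℝ 1 ψ →
          ∫ x, ⟪gradient ψ x, h x⟫ ∂m = ∫ x, ψ x ∂ν - ∫ x, ψ x ∂μ) ∧
        (∫ x, ‖h x‖ ∂m ≤ ∫ p, ‖p.1 - p.2‖ ∂γ) ∧
        ∀ φ : E → E, Continuous φ →
          ∫ x, ⟪φ x, h x⟫ ∂m
            = ∫ p, (∫ t in Set.Icc (0:ℝ) 1,
                ⟪φ ((1 - t) • p.1 + t • p.2), p.2 - p.1⟫) ∂γ := by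
  have hγ := plan_ae_mem hμ hν h1 h2
  have : IsProbabilityMeasure γ := by
    have : IsProbabilityMeasure (γ.map Prod.fst) := by rw [h1]; infer_instance
    exact Measure.isProbabilityMeasure_of_map (μ := γ) Prod.fst
  -- `T` sends `((x, y), t)` to the position at time `t` on the segment and the velocity `y - x`.
  let P : Measure ((E × E) × ℝ) := γ.prod (volume.restrict (Set.Icc (0 : ℝ) 1))
  let T : (E × E) × ℝ → E × E := fun q =>
    ((1 - q.2) • q.1.1 + q.2 • q.1.2, q.1.2 - q.1.1)
  have hT : Continuous T := by fun_prop
  have : IsProbabilityMeasure (volume.restrict (Set.Icc (0 : ℝ) 1)) := ⟨by simp⟩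
  have hP : ∀ᵐ q ∂P, q ∈ (Ω ×ˢ Ω) ×ˢ Set.Icc (0 : ℝ) 1 := by
    have a1 : ∀ᵐ q ∂P, q.1 ∈ Ω ×ˢ Ω := Measure.quasiMeasurePreserving_fst.ae hγ
    have a2 : ∀ᵐ q ∂P, q.2 ∈ Set.Icc (0 : ℝ) 1 :=
      Measure.quasiMeasurePreserving_snd.ae (ae_restrict_mem measurableSet_Icc)
    filter_upwards [a1, a2] with q hq1 hq2 using ⟨hq1, hq2⟩
  let ρ : Measure (E × E) := P.map T
  have : IsProbabilityMeasure ρ := Measure.isProbabilityMeasure_map hT.aemeasurable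
  let D : Set (E × E) := T '' ((Ω ×ˢ Ω) ×ˢ Set.Icc (0 : ℝ) 1)
  have hD : IsCompact D := ((hΩc.prod hΩc).prod isCompact_Icc).image hT
  have hρD : ∀ᵐ z ∂ρ, z ∈ D := by
    refine (ae_map_iff (p := fun z => z ∈ D) hT.aemeasurable hD.measurableSet).2 ?_
    exact hP.mono fun q hq => ⟨q, hq, rfl⟩
  have hDΩ : ∀ z ∈ D, z.1 ∈ Ω := by
    rintro _ ⟨q, ⟨⟨hq1, hq2⟩, hq3⟩, rfl⟩
    exact hΩconv hq1 hq2 (by linarith [hq3.2]) hq3.1 (by ring)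
  have hsnd : Integrable (fun z : E × E => z.2) ρ :=
    integrable_of_continuous_of_ae_mem hD hρD continuous_snd
  -- The conditional mean of the velocity given the position.
  let h : E → E := fun x => ∫ v, v ∂(ρ.condKernel x)
  have hh : Integrable h ρ.fst := hsnd.integral_condKernel
  have hpair : ∀ φ : E → E, Continuous φ → ∫ x, ⟪φ x, h x⟫ ∂ρ.fst
            = ∫ p, (∫ t in Set.Icc (0:ℝ) 1,
                ⟪φ ((1 - t) • p.1 + t • p.2), p.2 - p.1⟫) ∂γ := by
    intro φ hφ
    have hc : Continuous fun z : E × E => ⟪φ z.1, z.2⟫ := by fun_prop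
    calc ∫ x, ⟪φ x, h x⟫ ∂ρ.fst
        = ∫ x, ∫ v, ⟪φ x, v⟫ ∂(ρ.condKernel x) ∂ρ.fst := by
          refine integral_congr_ae ?_
          filter_upwards [hsnd.condKernel_ae] with x hx
          exact (integral_inner hx _).symm
      _ = ∫ z, ⟪φ z.1, z.2⟫ ∂ρ :=
          Measure.integral_condKernel (integrable_of_continuous_of_ae_mem hD hρD hc)
      _ = ∫ q, ⟪φ (T q).1, (T q).2⟫ ∂P :=
          integral_map hT.aemeasurable hc.aestronglyMeasurable
      _ = _ := integral_prod (fun q => ⟪φ (T q).1, (T q).2⟫)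
          (integrable_of_continuous_of_ae_mem ((hΩc.prod hΩc).prod isCompact_Icc) hP
            (hc.comp hT))
  refine ⟨ρ.fst, h, inferInstance, ?_, hh, fun ψ hψ => ?_, ?_, hpair⟩
  · have : ∀ᵐ x ∂ρ.fst, x ∈ Ω := by
      refine (ae_map_iff (p := fun x => x ∈ Ω) measurable_fst.aemeasurable hΩc.measurableSet).2 ?_
      exact hρD.mono hDΩ
    exact this
  · have hgc : Continuous (gradient ψ) :=
      (InnerProductSpace.toDual ℝ E).symm.continuous.comp (hψ.continuous_fderiv one_ne_zero)
    rw [hpair _ hgc, ← h1, ← h2, integral_map measurable_fst.aemeasurable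
        hψ.continuous.aestronglyMeasurable, integral_map measurable_snd.aemeasurable
        hψ.continuous.aestronglyMeasurable,
      ← integral_sub
        (integrable_of_continuous_of_ae_mem (hΩc.prod hΩc) hγ (by fun_prop))
        (integrable_of_continuous_of_ae_mem (hΩc.prod hΩc) hγ (by fun_prop))]
    refine integral_congr_ae (ae_of_all _ fun p => ?_)
    simp only
    rw [integral_Icc_eq_integral_Ioc, ← intervalIntegral.integral_of_le zero_le_one]
    have hder : ∀ t : ℝ, HasDerivAt (fun t : ℝ => ψ ((1 - t) • p.1 + t • p.2))
        ⟪gradient ψ ((1 - t) • p.1 + t • p.2), p.2 - p.1⟫ t := by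
      intro t
      have e1 : HasDerivAt (fun t : ℝ => (1 - t) • p.1 + t • p.2) (p.2 - p.1) t := by
        have := ((((hasDerivAt_id t).const_sub 1).smul_const p.1).add
          ((hasDerivAt_id t).smul_const p.2))
        convert! this using 1
        module
      have e2 := (hψ.differentiable one_ne_zero
        ((1 - t) • p.1 + t • p.2)).hasFDerivAt.comp_hasDerivAt t e1
      rwa [← inner_gradient_left] at e2
    rw [intervalIntegral.integral_eq_sub_of_hasDerivAt (fun t _ => hder t)
      (Continuous.intervalIntegrable (by fun_prop) _ _)]
    simp
  · calc ∫ x, ‖h x‖ ∂ρ.fst ≤ ∫ x, ∫ v, ‖v‖ ∂(ρ.condKernel x) ∂ρ.fst :=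
          integral_mono hh.norm hsnd.integral_norm_condKernel fun x => norm_integral_le_integral_norm _
      _ = ∫ z, ‖z.2‖ ∂ρ := Measure.integral_condKernel hsnd.norm
      _ = ∫ q, ‖(T q).2‖ ∂P :=
          integral_map hT.aemeasurable (by fun_prop)
      _ = ∫ p, (∫ _t in Set.Icc (0 : ℝ) 1, ‖p.2 - p.1‖) ∂γ :=
          integral_prod (fun q => ‖(T q).2‖)
          (integrable_of_continuous_of_ae_mem ((hΩc.prod hΩc).prod isCompact_Icc) hP
            (by fun_prop))
      _ = ∫ p, ‖p.1 - p.2‖ ∂γ := by simp [norm_sub_rev]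

end Flow

/-! ### The minimal flux equals the minimal cost -/

/-- The inequality `W₁ ≤` Beckmann, with a single plan beating all admissible vector measures.
The duality theorem is applied on the compact space `Ω`, and the plan is pushed forward. -/
lemma exists_plan_le_mass {d : ℕ} {Ω : Set (EuclideanSpace ℝ (Fin d))} (hΩc : IsCompact Ω)
    {μ ν : Measure (EuclideanSpace ℝ (Fin d))}
    [IsProbabilityMeasure μ] [IsProbabilityMeasure ν]
    (hμ : ∀ᵐ x ∂μ, x ∈ Ω) (hν : ∀ᵐ x ∂ν, x ∈ Ω) :
    ∃ γ : Measure (EuclideanSpace ℝ (Fin d) × EuclideanSpace ℝ (Fin d)),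
      γ.map Prod.fst = μ ∧ γ.map Prod.snd = ν ∧
      ∀ (m : Measure (EuclideanSpace ℝ (Fin d)))
        (h : EuclideanSpace ℝ (Fin d) → EuclideanSpace ℝ (Fin d)), Integrable h m →
        (∀ ψ : EuclideanSpace ℝ (Fin d) → ℝ, ContDiff ℝ 1 ψ →
          ∫ x, ⟪gradient ψ x, h x⟫ ∂m = ∫ x, ψ x ∂ν - ∫ x, ψ x ∂μ) →
        ∫ p, ‖p.1 - p.2‖ ∂γ ≤ ∫ x, ‖h x‖ ∂m := by
  have : CompactSpace Ω := isCompact_iff_compactSpace.1 hΩc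
  have hemb := MeasurableEmbedding.subtype_coe hΩc.measurableSet
  have hmap : ∀ σ : Measure (EuclideanSpace ℝ (Fin d)), (∀ᵐ x ∂σ, x ∈ Ω) →
      (σ.comap (Subtype.val : Ω → _)).map Subtype.val = σ := fun σ hσ => by
    rw [hemb.map_comap, Subtype.range_coe, Measure.restrict_eq_self_of_ae_mem hσ]
  have hprob : ∀ σ : Measure (EuclideanSpace ℝ (Fin d)), IsProbabilityMeasure σ →
      (∀ᵐ x ∂σ, x ∈ Ω) → IsProbabilityMeasure (σ.comap (Subtype.val : Ω → _)) := by
    intro σ _ hσ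
    have : IsProbabilityMeasure ((σ.comap (Subtype.val : Ω → _)).map Subtype.val) := by
      rwa [hmap σ hσ]
    exact Measure.isProbabilityMeasure_of_map (μ := σ.comap (Subtype.val : Ω → _)) Subtype.val
  have := hprob μ inferInstance hμ
  have := hprob ν inferInstance hν
  obtain ⟨γ, h1, h2, h3⟩ := exists_plan_le_dual (μ.comap (Subtype.val : Ω → _))
    (ν.comap (Subtype.val : Ω → _))
  have hval : Measurable (Prod.map Subtype.val Subtype.val :
      Ω × Ω → EuclideanSpace ℝ (Fin d) × EuclideanSpace ℝ (Fin d)) := by fun_prop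
  refine ⟨γ.map (Prod.map Subtype.val Subtype.val), ?_, ?_, fun m h hh hdiv => ?_⟩
  · rw [Measure.map_map measurable_fst hval, ← hmap μ hμ, ← h1,
      Measure.map_map measurable_subtype_coe measurable_fst]
    rfl
  · rw [Measure.map_map measurable_snd hval, ← hmap ν hν, ← h2,
      Measure.map_map measurable_subtype_coe measurable_snd]
    rfl
  · rw [integral_map hval.aemeasurable (by fun_prop)]
    have key := h3 (∫ x, ‖h x‖ ∂m) fun ψ hψ => ?_
    · simpa [Subtype.dist_eq, dist_eq_norm] using key
    -- Extend the potential from `Ω` to the whole space without increasing its Lipschitz constant.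
    -- The values `0` of `Function.extend` off `Ω` play no role.
    obtain ⟨g, hg, hgψ⟩ := LipschitzOnWith.extend_real (s := Ω) (K := 1)
      (f := Function.extend Subtype.val ψ 0) (by
        rw [lipschitzOnWith_iff_restrict]
        have e : Ω.domRestrict (Function.extend Subtype.val ψ 0) = ψ :=
          funext fun x => Subtype.val_injective.extend_apply ψ 0 x
        rwa [e])
    have hψg : ∀ x : Ω, ψ x = g x := fun x => by
      rw [← hgψ x.2, Subtype.val_injective.extend_apply]
    have hle := lipschitz_pairing_le_mass hΩc hμ hν hh hdiv hg
    rw [← hmap μ hμ, ← hmap ν hν, hemb.integral_map, hemb.integral_map] at hle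
    simpa only [hψg] using hle

/-- (Beckmann problem = Monge–Kantorovich with cost `|x-y|`.)
A finite vector measure `λ = h·m` on `Ω` (encoded by its polar-type decomposition: a finite
positive measure `m` supported on `Ω` together with an `m`-integrable density `h`, with mass
`M(λ) = ∫‖h‖ dm`) is admissible if `∇·λ = μ - ν` weakly, i.e. `∫⟪∇ψ, h⟫ dm = ∫ψ dν - ∫ψ dμ`
for all `ψ ∈ C¹`. Then the infimum of the masses of admissible vector measures equals
`W₁(μ,ν) = min { ∫|x-y| dγ : γ ∈ Π(μ,ν) }`, and for every optimal plan `γ` the minimum on the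
Beckmann side is attained by the vector measure `v_γ` (characterized by its pairing
`⟨v_γ, φ⟩ = ∫∫₀¹ ⟪φ((1-t)x+ty), y-x⟫ dt dγ` against continuous vector fields `φ`). -/
theorem stmt2 {d : ℕ} (Ω : Set (EuclideanSpace ℝ (Fin d)))
    (hΩc : IsCompact Ω) (hΩconv : Convex ℝ Ω) (hΩne : Ω.Nonempty)
    (μ ν : Measure (EuclideanSpace ℝ (Fin d)))
    [IsProbabilityMeasure μ] [IsProbabilityMeasure ν] (hμ : μ Ω = 1) (hν : ν Ω = 1) :
    sInf {r : ℝ | ∃ (m : Measure (EuclideanSpace ℝ (Fin d)))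
        (h : EuclideanSpace ℝ (Fin d) → EuclideanSpace ℝ (Fin d)),
        IsFiniteMeasure m ∧ m Ωᶜ = 0 ∧ Integrable h m ∧
        (∀ ψ : EuclideanSpace ℝ (Fin d) → ℝ, ContDiff ℝ 1 ψ →
          ∫ x, ⟪gradient ψ x, h x⟫ ∂m = ∫ x, ψ x ∂ν - ∫ x, ψ x ∂μ) ∧
        r = ∫ x, ‖h x‖ ∂m}
      = sInf {r : ℝ | ∃ γ : Measure (EuclideanSpace ℝ (Fin d) × EuclideanSpace ℝ (Fin d)),
          γ.map Prod.fst = μ ∧ γ.map Prod.snd = ν ∧ r = ∫ p, ‖p.1 - p.2‖ ∂γ} ∧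
    ∀ γ : Measure (EuclideanSpace ℝ (Fin d) × EuclideanSpace ℝ (Fin d)),
      γ.map Prod.fst = μ → γ.map Prod.snd = ν →
      (∀ γ' : Measure (EuclideanSpace ℝ (Fin d) × EuclideanSpace ℝ (Fin d)),
        γ'.map Prod.fst = μ → γ'.map Prod.snd = ν →
        ∫ p, ‖p.1 - p.2‖ ∂γ ≤ ∫ p, ‖p.1 - p.2‖ ∂γ') →
      ∃ (m : Measure (EuclideanSpace ℝ (Fin d)))
        (h : EuclideanSpace ℝ (Fin d) → EuclideanSpace ℝ (Fin d)),
        IsFiniteMeasure m ∧ m Ωᶜ = 0 ∧ Integrable h m ∧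
        (∀ ψ : EuclideanSpace ℝ (Fin d) → ℝ, ContDiff ℝ 1 ψ →
          ∫ x, ⟪gradient ψ x, h x⟫ ∂m = ∫ x, ψ x ∂ν - ∫ x, ψ x ∂μ) ∧
        (∫ x, ‖h x‖ ∂m = ∫ p, ‖p.1 - p.2‖ ∂γ) ∧
        ∀ φ : EuclideanSpace ℝ (Fin d) → EuclideanSpace ℝ (Fin d), Continuous φ →
          ∫ x, ⟪φ x, h x⟫ ∂m
            = ∫ p, (∫ t in Set.Icc (0:ℝ) 1,
                ⟪φ ((1 - t) • p.1 + t • p.2), p.2 - p.1⟫) ∂γ := by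
  have hμ' : ∀ᵐ x ∂μ, x ∈ Ω := (prob_compl_eq_zero_iff hΩc.measurableSet).2 hμ
  have hν' : ∀ᵐ x ∂ν, x ∈ Ω := (prob_compl_eq_zero_iff hΩc.measurableSet).2 hν
  obtain ⟨γ₀, h₁, h₂, h₀⟩ := exists_plan_le_mass hΩc hμ' hν'
  refine ⟨le_antisymm ?_ ?_, fun γ hγ₁ hγ₂ hopt => ?_⟩
  · refine le_csInf ⟨_, γ₀, h₁, h₂, rfl⟩ ?_
    rintro _ ⟨γ, hγ₁, hγ₂, rfl⟩
    obtain ⟨m, h, hm, hmΩ, hh, hdiv, hle, -⟩ := exists_flow hΩc hΩconv hμ' hν' hγ₁ hγ₂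
    refine le_trans (csInf_le ⟨0, ?_⟩ ⟨m, h, hm, hmΩ, hh, hdiv, rfl⟩) hle
    rintro _ ⟨m', h', -, -, -, -, rfl⟩
    exact integral_nonneg fun _ => norm_nonneg _
  · obtain ⟨m, h, hm, hmΩ, hh, hdiv, -⟩ := exists_flow hΩc hΩconv hμ' hν' h₁ h₂
    refine le_csInf ⟨_, m, h, hm, hmΩ, hh, hdiv, rfl⟩ ?_
    rintro _ ⟨m', h', -, -, hh', hdiv', rfl⟩
    refine le_trans (csInf_le ⟨0, ?_⟩ ⟨γ₀, h₁, h₂, rfl⟩) (h₀ m' h' hh' hdiv')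
    rintro _ ⟨γ', -, -, rfl⟩
    exact integral_nonneg fun _ => norm_nonneg _
  · obtain ⟨m, h, hm, hmΩ, hh, hdiv, hle, hpair⟩ := exists_flow hΩc hΩconv hμ' hν' hγ₁ hγ₂
    exact ⟨m, h, hm, hmΩ, hh, hdiv,
      le_antisymm hle ((hopt γ₀ h₁ h₂).trans (h₀ m h hh hdiv)), hpair⟩
end

section
/- Let Ω ⊂ ℝ^d be a compact convex set, let k : Ω → ℝ be a continuous function with k ≥ c_0 > 0, and let μ, ν ∈ P(Ω). Then the weighted Beckmann problem and the Kantorovich problem for the induced Riemannian distance have the same value: min{ ∫_Ω k d|λ| : λ a vector measure with ∇·λ = μ − ν } = min{ ∫_{Ω×Ω} d_k(x,y) dγ(x,y) : γ ∈ Π(μ,ν) }, where d_k(x,y) = inf{ ∫_0^1 k(ω(t)) |ω'(t)| dt : ω Lipschitz, ω(0)=x, ω(1)=y, ω([0,1]) ⊂ Ω }. -/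
/-!
The two infima are compared by producing competitors.

Kantorovich ≤ Beckmann (`exists_plan_le_flow`). By Kantorovich duality
(`kantorovich_exists_plan`, from Hahn–Banach and Riesz–Markov) it suffices that the cost of a flow
`h • m` dominates `∫ φ dμ + ∫ ψ dν` whenever `φ x + ψ y ≤ d_k(x, y)`. Replacing `φ` by the
`c`-transform `f` of `ψ`, which satisfies `f x - f y ≤ d_k(x, y)`, this becomes
`∫ f dμ - ∫ f dν ≤ ∫ k ‖h‖ dm` (`potential_le_flow`). Since `d_k` is bounded by the weighted length
of segments, `f` is locally Lipschitz with constant close to `k`; composing with the projection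
onto `Ω` and mollifying gives `C¹` functions close to `f` with gradient at most `k + ε`
(`exists_smooth_approx`), which can be tested in the divergence constraint.

Beckmann ≤ Kantorovich (`exists_flow_le_plan`). Given a plan `γ`, near-optimal curves joining the
pairs `(x, y)` must be chosen measurably. Quantizing the endpoints by a finitely valued map leaves
finitely many near-optimal curves to choose, and the quantization error is bridged by short
segments. The law of (position, velocity) along the curves is a measure on `𝔼 × 𝔼` with the right
divergence and cost (`exists_lift`); averaging the velocity conditionally on the position yields
the density `h` of a vector measure, at no greater cost (`IsLift.exists_flow`).
-/

open MeasureTheory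
open scoped RealInnerProductSpace NNReal

/-- The geodesic distance `d_k(x,y)` inside `Ω` associated with the conformal metric `k`:
the infimum of `∫₀¹ k(ω(t)) |ω'(t)| dt` over Lipschitz paths `ω` in `Ω` joining `x` to `y`. -/
noncomputable def geodDist {d : ℕ} (Ω : Set (EuclideanSpace ℝ (Fin d)))
    (k : EuclideanSpace ℝ (Fin d) → ℝ) (x y : EuclideanSpace ℝ (Fin d)) : ℝ :=
  sInf {r : ℝ | ∃ ω : ℝ → EuclideanSpace ℝ (Fin d),
    (∃ K : ℝ≥0, LipschitzOnWith K ω (Set.Icc 0 1)) ∧ ω 0 = x ∧ ω 1 = y ∧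
    (∀ t ∈ Set.Icc (0:ℝ) 1, ω t ∈ Ω) ∧
    r = ∫ t in Set.Icc (0:ℝ) 1, k (ω t) * ‖deriv ω t‖}

section Helpers

/-! ### Kantorovich duality on compact metric spaces -/

/-- The hard half of Kantorovich duality on a compact metric space: if `r` bounds the dual value, then
some plan costs at most `r`. Hahn–Banach gives a linear functional on `C(X × X)` below the
sublinear price of majorants `φ ⊕ ψ + t c`; it is positive, and its Riesz–Markov measure is the
plan. -/
theorem kantorovich_exists_plan {X : Type*} [MetricSpace X] [CompactSpace X]
    [SecondCountableTopology X] [MeasurableSpace X] [BorelSpace X]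
    (μ ν : Measure X) [IsProbabilityMeasure μ] [IsProbabilityMeasure ν]
    (c : C(X × X, ℝ)) (r : ℝ)
    (H : ∀ φ ψ : C(X, ℝ), (∀ x y, φ x + ψ y ≤ c (x, y)) → ∫ x, φ x ∂μ + ∫ y, ψ y ∂ν ≤ r) :
    ∃ γ : Measure (X × X), γ.map Prod.fst = μ ∧ γ.map Prod.snd = ν ∧ ∫ p, c p ∂γ ≤ r := by
  have hint : ∀ (ρ : Measure X) [IsProbabilityMeasure ρ] (φ : C(X, ℝ)), Integrable φ ρ :=
    fun ρ _ φ => φ.continuous.integrable_of_hasCompactSupport (HasCompactSupport.of_compactSpace φ)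
  -- The gauge: the cheapest majorant of `f` of the form `φ ⊕ ψ + t c`, `c` being priced at `r`.
  let S : C(X × X, ℝ) → Set ℝ := fun f => {s | ∃ (φ ψ : C(X, ℝ)) (t : ℝ), 0 ≤ t ∧
    (∀ x y, f (x, y) ≤ φ x + ψ y + t * c (x, y)) ∧ s = ∫ x, φ x ∂μ + ∫ y, ψ y ∂ν + t * r}
  let N : C(X × X, ℝ) → ℝ := fun f => sInf (S f)
  -- Majorants of `0` have nonnegative price, by the hypothesis on admissible potentials.
  have key : ∀ (φ ψ : C(X, ℝ)) (t : ℝ), 0 ≤ t → (∀ x y, 0 ≤ φ x + ψ y + t * c (x, y)) →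
      0 ≤ ∫ x, φ x ∂μ + ∫ y, ψ y ∂ν + t * r := by
    intro φ ψ t ht h
    rcases ht.eq_or_lt with rfl | ht
    · have h' : 0 ≤ ∫ x, (∫ y, (φ x + ψ y) ∂ν) ∂μ :=
        integral_nonneg fun x => integral_nonneg fun y => by simpa using h x y
      have h1 : ∀ x, ∫ y, (φ x + ψ y) ∂ν = φ x + ∫ y, ψ y ∂ν := fun x => by
        rw [integral_add (integrable_const _) (hint ν ψ)]; simp
      simp_rw [h1] at h'
      rw [integral_add (hint μ φ) (integrable_const _)] at h'
      simpa using h'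
    · have := H (-(t⁻¹) • φ) (-(t⁻¹) • ψ) (fun x y => by
        have := h x y
        have h2 : t⁻¹ * (φ x + ψ y + t * c (x, y)) = t⁻¹ * φ x + t⁻¹ * ψ y + c (x, y) := by
          field_simp
        have h3 : 0 ≤ t⁻¹ * (φ x + ψ y + t * c (x, y)) := by positivity
        simp only [ContinuousMap.coe_smul, Pi.smul_apply, smul_eq_mul]
        linarith)
      simp only [ContinuousMap.coe_smul, Pi.smul_apply, smul_eq_mul, integral_const_mul] at this
      have h4 : t * (-t⁻¹ * ∫ x, φ x ∂μ + -t⁻¹ * ∫ y, ψ y ∂ν) ≤ t * r :=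
        mul_le_mul_of_nonneg_left this ht.le
      have h5 : t * (-t⁻¹ * ∫ x, φ x ∂μ + -t⁻¹ * ∫ y, ψ y ∂ν)
          = -(∫ x, φ x ∂μ) - ∫ y, ψ y ∂ν := by field_simp; ring
      linarith
  have hbdd : ∀ f, BddBelow (S f) := by
    intro f
    refine ⟨-‖f‖, ?_⟩
    rintro s ⟨φ, ψ, t, ht, h, rfl⟩
    have := key (φ + ContinuousMap.const X ‖f‖) ψ t ht (fun x y => by
      have h1 := h x y
      have h2 := (abs_le.1 (f.norm_coe_le_norm (x, y))).1
      simp only [ContinuousMap.add_apply, ContinuousMap.const_apply]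
      linarith)
    simp only [ContinuousMap.add_apply, ContinuousMap.const_apply] at this
    rw [integral_add (hint μ φ) (integrable_const _)] at this
    simp at this
    linarith
  have hne : ∀ f, (S f).Nonempty := by
    intro f
    refine ⟨_, ContinuousMap.const X ‖f‖, 0, 0, le_rfl, fun x y => ?_, rfl⟩
    simpa using (abs_le.1 (f.norm_coe_le_norm (x, y))).2
  have hmem : ∀ (f : C(X × X, ℝ)) (φ ψ : C(X, ℝ)) (t : ℝ), 0 ≤ t →
      (∀ x y, f (x, y) ≤ φ x + ψ y + t * c (x, y)) →
      N f ≤ ∫ x, φ x ∂μ + ∫ y, ψ y ∂ν + t * r := fun f φ ψ t ht h =>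
    csInf_le (hbdd f) ⟨φ, ψ, t, ht, h, rfl⟩
  have N_le : ∀ a : ℝ, 0 < a → ∀ f, N (a • f) ≤ a * N f := by
    intro a ha f
    have : a⁻¹ * N (a • f) ≤ N f := by
      refine le_csInf (hne f) ?_
      rintro s ⟨φ, ψ, t, ht, h, rfl⟩
      have := hmem (a • f) (a • φ) (a • ψ) (a * t) (by positivity) (fun x y => by
        have := mul_le_mul_of_nonneg_left (h x y) ha.le
        simp only [ContinuousMap.coe_smul, Pi.smul_apply, smul_eq_mul]
        linarith)
      simp only [ContinuousMap.coe_smul, Pi.smul_apply, smul_eq_mul, integral_const_mul] at this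
      rw [inv_mul_le_iff₀ ha]
      linarith
    rwa [inv_mul_le_iff₀ ha] at this
  have N_hom : ∀ a : ℝ, 0 < a → ∀ f, N (a • f) = a * N f := by
    intro a ha f
    refine le_antisymm (N_le a ha f) ?_
    have := N_le a⁻¹ (inv_pos.2 ha) (a • f)
    rw [smul_smul, inv_mul_cancel₀ ha.ne', one_smul] at this
    rwa [← inv_mul_le_iff₀ (inv_pos.2 ha), inv_inv] at this
  have N_add : ∀ f g, N (f + g) ≤ N f + N g := by
    intro f g
    rw [← sub_le_iff_le_add]
    refine le_csInf (hne f) ?_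
    rintro s ⟨φ, ψ, t, ht, h, rfl⟩
    rw [sub_le_comm]
    refine le_csInf (hne g) ?_
    rintro s ⟨φ', ψ', t', ht', h', rfl⟩
    have := hmem (f + g) (φ + φ') (ψ + ψ') (t + t') (by positivity) (fun x y => by
      have := h x y
      have := h' x y
      simp only [ContinuousMap.add_apply]
      linarith)
    simp only [ContinuousMap.add_apply] at this
    rw [integral_add (hint μ φ) (hint μ φ'), integral_add (hint ν ψ) (hint ν ψ')] at this
    linarith
  obtain ⟨L, -, hL⟩ := exists_extension_of_le_sublinear (E := C(X × X, ℝ)) ⟨⊥, 0⟩ N N_hom N_add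
    (by
      rintro ⟨x, hx⟩
      obtain rfl : x = 0 := hx
      refine le_csInf (hne 0) ?_
      rintro s ⟨φ, ψ, t, ht, h, rfl⟩
      exact key φ ψ t ht h)
  have hneg : ∀ f : C(X × X, ℝ), (∀ p, f p ≤ 0) → L f ≤ 0 := fun f hf =>
    (hL f).trans ((hmem f 0 0 0 le_rfl (fun x y => by simpa using hf (x, y))).trans (by simp))
  let Λ₀ : CompactlySupportedContinuousMap (X × X) ℝ →ₗ[ℝ] ℝ :=
    { toFun := fun f => L f.toContinuousMap
      map_add' := fun f g => L.map_add f.toContinuousMap g.toContinuousMap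
      map_smul' := fun a f => L.map_smul a f.toContinuousMap }
  let Λ : CompactlySupportedContinuousMap (X × X) ℝ →ₚ[ℝ] ℝ :=
    PositiveLinearMap.mk₀ Λ₀ (fun f hf => by
      have := hneg (-f.toContinuousMap) (fun p => by simpa using hf p)
      rw [map_neg] at this
      simpa using! this)
  let γ := RealRMK.rieszMeasure Λ
  have hγ : ∀ f : C(X × X, ℝ), ∫ p, f p ∂γ = L f := fun f =>
    RealRMK.integral_rieszMeasure Λ (CompactlySupportedContinuousMap.continuousMapEquiv f)
  have hfst : ∀ φ : C(X, ℝ), L (φ.comp ContinuousMap.fst) ≤ ∫ x, φ x ∂μ := fun φ =>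
    (hL _).trans ((hmem _ φ 0 0 le_rfl (fun x y => by simp)).trans (by simp))
  have hsnd : ∀ φ : C(X, ℝ), L (φ.comp ContinuousMap.snd) ≤ ∫ x, φ x ∂ν := fun φ =>
    (hL _).trans ((hmem _ 0 φ 0 le_rfl (fun x y => by simp)).trans (by simp))
  refine ⟨γ, ?_, ?_, ?_⟩
  · refine ext_of_forall_integral_eq_of_IsFiniteMeasure fun f => ?_
    rw [integral_map (by fun_prop) (by fun_prop)]
    have h1 := hfst f.toContinuousMap
    have h2 := hfst (-f.toContinuousMap)
    have h3 : (-f.toContinuousMap).comp ContinuousMap.fst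
      = -(f.toContinuousMap.comp (ContinuousMap.fst : C(X × X, X))) := rfl
    rw [h3, map_neg, ← hγ] at h2
    rw [← hγ] at h1
    simp [integral_neg] at h1 h2
    exact le_antisymm h1 h2
  · refine ext_of_forall_integral_eq_of_IsFiniteMeasure fun f => ?_
    rw [integral_map (by fun_prop) (by fun_prop)]
    have h1 := hsnd f.toContinuousMap
    have h2 := hsnd (-f.toContinuousMap)
    have h3 : (-f.toContinuousMap).comp ContinuousMap.snd
      = -(f.toContinuousMap.comp (ContinuousMap.snd : C(X × X, X))) := rfl
    rw [h3, map_neg, ← hγ] at h2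
    rw [← hγ] at h1
    simp [integral_neg] at h1 h2
    exact le_antisymm h1 h2
  · rw [hγ]
    exact (hL c).trans ((hmem c 0 0 1 zero_le_one (fun x y => by simp)).trans (by simp))

variable {d : ℕ}

local notation "𝔼" => EuclideanSpace ℝ (Fin d)

/-! ### Curves and the geodesic distance -/

/-- A globally Lipschitz curve staying in `Ω`, parametrized so that it is at `x` at time `0` and
at `y` at time `1`. -/
structure IsCurve (Ω : Set 𝔼) (ω : ℝ → 𝔼) (x y : 𝔼) : Prop where
  lip : ∃ K : ℝ≥0, LipschitzWith K ω
  zero : ω 0 = x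
  one : ω 1 = y
  mem : ∀ t, ω t ∈ Ω

/-- The `k`-weighted length of the curve `ω` on `[0, 1]`. -/
noncomputable def curveCost (k : 𝔼 → ℝ) (ω : ℝ → 𝔼) : ℝ :=
  ∫ t in (0:ℝ)..1, k (ω t) * ‖deriv ω t‖

theorem intervalIntegrable_cost {k : 𝔼 → ℝ} (hk : Continuous k) {ω : ℝ → 𝔼} {K : ℝ≥0}
    (hω : LipschitzWith K ω) (a b : ℝ) :
    IntervalIntegrable (fun t => k (ω t) * ‖deriv ω t‖) volume a b := by
  have h1 : IntervalIntegrable (fun t => k (ω t)) volume a b :=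
    (hk.comp hω.continuous).intervalIntegrable a b
  rw [intervalIntegrable_iff] at h1 ⊢
  refine h1.mul_bdd (c := K) ?_ ?_
  · exact (measurable_deriv ω).norm.aestronglyMeasurable
  · refine Filter.Eventually.of_forall fun t => ?_
    rw [norm_norm]
    exact norm_deriv_le_of_lipschitz hω

theorem bddBelow_geod (Ω : Set 𝔼) {k : 𝔼 → ℝ} (hk0 : ∀ x, 0 ≤ k x) (x y : 𝔼) :
    BddBelow {r : ℝ | ∃ ω : ℝ → 𝔼,
    (∃ K : ℝ≥0, LipschitzOnWith K ω (Set.Icc 0 1)) ∧ ω 0 = x ∧ ω 1 = y ∧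
    (∀ t ∈ Set.Icc (0:ℝ) 1, ω t ∈ Ω) ∧
    r = ∫ t in Set.Icc (0:ℝ) 1, k (ω t) * ‖deriv ω t‖} := by
  refine ⟨0, ?_⟩
  rintro r ⟨ω, -, -, -, -, rfl⟩
  exact integral_nonneg fun t => mul_nonneg (hk0 _) (norm_nonneg _)

theorem geodDist_nonneg (Ω : Set 𝔼) {k : 𝔼 → ℝ} (hk0 : ∀ x, 0 ≤ k x) (x y : 𝔼) :
    0 ≤ geodDist Ω k x y := by
  refine Real.sInf_nonneg ?_
  rintro r ⟨ω, -, -, -, -, rfl⟩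
  exact integral_nonneg fun t => mul_nonneg (hk0 _) (norm_nonneg _)

theorem geodDist_le_cost {Ω : Set 𝔼} {k : 𝔼 → ℝ} (hk0 : ∀ x, 0 ≤ k x) {ω : ℝ → 𝔼} {x y : 𝔼}
    (hω : IsCurve Ω ω x y) : geodDist Ω k x y ≤ curveCost k ω := by
  refine csInf_le (bddBelow_geod Ω hk0 x y)
    ⟨ω, ?_, hω.zero, hω.one, fun t _ => hω.mem t, ?_⟩
  · obtain ⟨K, hK⟩ := hω.lip
    exact ⟨K, hK.lipschitzOnWith⟩
  · rw [curveCost, intervalIntegral.integral_of_le zero_le_one, integral_Icc_eq_integral_Ioc]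

theorem isCurve_segment {Ω : Set 𝔼} (hΩ : Convex ℝ Ω) {x y : 𝔼} (hx : x ∈ Ω) (hy : y ∈ Ω) :
    IsCurve Ω (fun t => x + (Set.projIcc (0:ℝ) 1 zero_le_one t : ℝ) • (y - x)) x y := by
  refine ⟨⟨‖y - x‖₊, ?_⟩, ?_, ?_, fun t => ?_⟩
  · refine LipschitzWith.of_dist_le_mul fun s t => ?_
    have := (LipschitzWith.projIcc (zero_le_one (α := ℝ))).dist_le_mul s t
    rw [dist_add_left, dist_eq_norm, ← sub_smul, norm_smul, mul_comm]
    refine mul_le_mul_of_nonneg_left ?_ (norm_nonneg _)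
    simpa [Subtype.dist_eq, Real.dist_eq] using this
  · simp
  · simp
  · have h := (Set.projIcc (0:ℝ) 1 zero_le_one t).2
    have := hΩ.add_smul_sub_mem hx hy h
    exact this

/-- Near-optimal competitors for `geodDist` may be taken Lipschitz and `Ω`-valued on all of `ℝ`, by
freezing them outside `[0, 1]`. -/
theorem exists_isCurve {Ω : Set 𝔼} (hΩ : Convex ℝ Ω) {k : 𝔼 → ℝ} {x y : 𝔼} (hx : x ∈ Ω)
    (hy : y ∈ Ω) {ε : ℝ} (hε : 0 < ε) :
    ∃ ω, IsCurve Ω ω x y ∧ curveCost k ω < geodDist Ω k x y + ε := by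
  have hne : {r : ℝ | ∃ ω : ℝ → 𝔼,
      (∃ K : ℝ≥0, LipschitzOnWith K ω (Set.Icc 0 1)) ∧ ω 0 = x ∧ ω 1 = y ∧
      (∀ t ∈ Set.Icc (0:ℝ) 1, ω t ∈ Ω) ∧
      r = ∫ t in Set.Icc (0:ℝ) 1, k (ω t) * ‖deriv ω t‖}.Nonempty := by
    have h := isCurve_segment hΩ hx hy
    obtain ⟨K, hK⟩ := h.lip
    exact ⟨_, _, ⟨K, hK.lipschitzOnWith⟩, h.zero, h.one, fun t _ => h.mem t, rfl⟩
  obtain ⟨r, ⟨ω, ⟨K, hK⟩, h0, h1, hm, rfl⟩, hr⟩ := Real.lt_sInf_add_pos hne hε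
  refine ⟨fun t => ω (Set.projIcc (0:ℝ) 1 zero_le_one t), ⟨⟨K, ?_⟩, by simp [h0], by simp [h1],
    fun t => hm _ (Set.projIcc (0:ℝ) 1 zero_le_one t).2⟩, ?_⟩
  · have := (hK.to_restrict).comp (LipschitzWith.projIcc (zero_le_one (α := ℝ)))
    simpa [Function.comp_def, Set.domRestrict] using this
  · refine lt_of_eq_of_lt ?_ hr
    rw [curveCost, intervalIntegral.integral_of_le zero_le_one, ← integral_Icc_eq_integral_Ioc,
      integral_Icc_eq_integral_Ioo, integral_Icc_eq_integral_Ioo]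
    refine setIntegral_congr_fun measurableSet_Ioo fun t ht => ?_
    have hpt : ∀ s ∈ Set.Ioo (0:ℝ) 1, (Set.projIcc (0:ℝ) 1 zero_le_one s : ℝ) = s := fun s hs => by
      rw [Set.projIcc_of_mem _ (Set.Ioo_subset_Icc_self hs)]
    have he : (fun t => ω (Set.projIcc (0:ℝ) 1 zero_le_one t)) =ᶠ[nhds t] ω := by
      filter_upwards [isOpen_Ioo.mem_nhds ht] with s hs
      rw [hpt s hs]
    simp only [he.deriv_eq, hpt t ht]

/-- Two curves sharing an endpoint can be concatenated, and the costs add up. -/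
theorem exists_concat {Ω : Set 𝔼} {k : 𝔼 → ℝ} (hk : Continuous k) {ω₁ ω₂ : ℝ → 𝔼} {x y z : 𝔼}
    (h₁ : IsCurve Ω ω₁ x y) (h₂ : IsCurve Ω ω₂ y z) :
    ∃ ω, IsCurve Ω ω x z ∧ curveCost k ω = curveCost k ω₁ + curveCost k ω₂ := by
  obtain ⟨K₁, hK₁⟩ := h₁.lip
  obtain ⟨K₂, hK₂⟩ := h₂.lip
  let ω : ℝ → 𝔼 := fun t => ω₁ (min (2 * t) 1) + ω₂ (max (2 * t - 1) 0) - y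
  have hl : ∀ t ≤ (1/2 : ℝ), ω t = ω₁ (2 * t) := fun t ht => by
    simp only [ω]
    rw [min_eq_left (by linarith), max_eq_right (by linarith), h₂.zero, add_sub_cancel_right]
  have hr : ∀ t ≥ (1/2 : ℝ), ω t = ω₂ (2 * t - 1) := fun t ht => by
    simp only [ω]
    rw [min_eq_right (by linarith), max_eq_left (by linarith), h₁.one, add_sub_cancel_left]
  have h2 : LipschitzWith 2 (fun t : ℝ => 2 * t) := by
    refine LipschitzWith.of_dist_le_mul fun s t => ?_
    rw [Real.dist_eq, Real.dist_eq, ← mul_sub, abs_mul]; simp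
  have hlip : ∃ K : ℝ≥0, LipschitzWith K ω := by
    have e1 := hK₁.comp (h2.min_const 1)
    have e2 := hK₂.comp ((h2.sub (LipschitzWith.const (1:ℝ))).max_const 0)
    exact ⟨_, (e1.add e2).sub (LipschitzWith.const y)⟩
  obtain ⟨K, hK⟩ := hlip
  refine ⟨ω, ⟨⟨K, hK⟩, ?_, ?_, fun t => ?_⟩, ?_⟩
  · rw [hl 0 (by norm_num), mul_zero, h₁.zero]
  · rw [hr 1 (by norm_num)]; norm_num [h₂.one]
  · rcases le_total t (1/2) with h | h
    · rw [hl t h]; exact h₁.mem _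
    · rw [hr t h]; exact h₂.mem _
  · rw [curveCost, ← intervalIntegral.integral_add_adjacent_intervals
      (intervalIntegrable_cost hk hK 0 (1/2)) (intervalIntegrable_cost hk hK (1/2) 1)]
    congr 1
    · have : ∫ t in (0:ℝ)..(1/2), k (ω t) * ‖deriv ω t‖
          = ∫ t in (0:ℝ)..(1/2), 2 * (k (ω₁ (2 * t)) * ‖deriv ω₁ (2 * t)‖) := by
        refine intervalIntegral.integral_congr_ae ?_
        have hne : ∀ᵐ t : ℝ, t ≠ 1/2 := by simp [ae_iff]
        filter_upwards [hne] with t ht hmem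
        rw [Set.uIoc_of_le (by norm_num)] at hmem
        have hlt : t < 1/2 := lt_of_le_of_ne hmem.2 ht
        have he : ω =ᶠ[nhds t] fun s => ω₁ (2 * s) := by
          filter_upwards [isOpen_Iio.mem_nhds hlt] with s hs using hl s (le_of_lt hs)
        rw [he.deriv_eq, deriv_comp_mul_left (2:ℝ) ω₁ t, hl t hlt.le, norm_smul]
        simp; ring
      rw [this, intervalIntegral.integral_const_mul,
        intervalIntegral.integral_comp_mul_left (fun t => k (ω₁ t) * ‖deriv ω₁ t‖) two_ne_zero]
      norm_num [curveCost]
      ring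
    · have : ∫ t in (1/2:ℝ)..1, k (ω t) * ‖deriv ω t‖
          = ∫ t in (1/2:ℝ)..1, 2 * (k (ω₂ (2 * t - 1)) * ‖deriv ω₂ (2 * t - 1)‖) := by
        refine intervalIntegral.integral_congr_ae (Filter.Eventually.of_forall fun t hmem => ?_)
        rw [Set.uIoc_of_le (by norm_num)] at hmem
        have he : ω =ᶠ[nhds t] fun s => (fun u => ω₂ (u - 1)) (2 * s) := by
          filter_upwards [isOpen_Ioi.mem_nhds hmem.1] with s hs using hr s (le_of_lt hs)
        rw [he.deriv_eq, deriv_comp_mul_left (2:ℝ) (fun u => ω₂ (u - 1)) t, hr t hmem.1.le,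
          deriv_comp_sub_const, norm_smul]
        simp; ring
      rw [this, intervalIntegral.integral_const_mul,
        intervalIntegral.integral_comp_mul_sub (fun t => k (ω₂ t) * ‖deriv ω₂ t‖) two_ne_zero]
      norm_num [curveCost]
      ring

theorem geodDist_triangle {Ω : Set 𝔼} (hΩ : Convex ℝ Ω) {k : 𝔼 → ℝ} (hk : Continuous k)
    (hk0 : ∀ x, 0 ≤ k x) {x y z : 𝔼} (hx : x ∈ Ω) (hy : y ∈ Ω) (hz : z ∈ Ω) :
    geodDist Ω k x z ≤ geodDist Ω k x y + geodDist Ω k y z := by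
  refine le_of_forall_pos_le_add fun ε hε => ?_
  obtain ⟨ω₁, h₁, c₁⟩ := exists_isCurve hΩ (k := k) hx hy (half_pos hε)
  obtain ⟨ω₂, h₂, c₂⟩ := exists_isCurve hΩ (k := k) hy hz (half_pos hε)
  obtain ⟨ω, h, c⟩ := exists_concat hk h₁ h₂
  have := geodDist_le_cost hk0 h
  linarith

theorem deriv_segment (x y : 𝔼) {t : ℝ} (ht : t ∈ Set.Ioo (0:ℝ) 1) :
    deriv (fun t => x + (Set.projIcc (0:ℝ) 1 zero_le_one t : ℝ) • (y - x)) t = y - x := by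
  have he : (fun t => x + (Set.projIcc (0:ℝ) 1 zero_le_one t : ℝ) • (y - x))
      =ᶠ[nhds t] fun t => x + t • (y - x) := by
    filter_upwards [isOpen_Ioo.mem_nhds ht] with s hs
    rw [Set.projIcc_of_mem _ (Set.Ioo_subset_Icc_self hs)]
  rw [he.deriv_eq]
  have := (((hasDerivAt_id t).smul_const (y - x)).const_add x).deriv
  simpa using this

theorem curveCost_segment_le {Ω : Set 𝔼} (hΩ : Convex ℝ Ω) {k : 𝔼 → ℝ}
    (hk : Continuous k) {x y : 𝔼} (hx : x ∈ Ω) (hy : y ∈ Ω) {M : ℝ}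
    (hM : ∀ z ∈ segment ℝ x y, k z ≤ M) :
    curveCost k (fun t => x + (Set.projIcc (0:ℝ) 1 zero_le_one t : ℝ) • (y - x))
      ≤ M * ‖y - x‖ := by
  obtain ⟨K, hK⟩ := (isCurve_segment hΩ hx hy).lip
  have : ∫ t in (0:ℝ)..1, M * ‖y - x‖ = M * ‖y - x‖ := by simp
  rw [curveCost, ← this]
  refine intervalIntegral.integral_mono_on_of_le_Ioo zero_le_one (intervalIntegrable_cost hk hK 0 1)
    (by simp) fun t ht => ?_
  rw [deriv_segment x y ht]
  refine mul_le_mul_of_nonneg_right (hM _ ?_) (norm_nonneg _)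
  rw [segment_eq_image']
  exact ⟨_, (Set.projIcc (0:ℝ) 1 zero_le_one t).2, rfl⟩

/-- Convexity of `Ω` makes the straight segment a competitor, so `geodDist` is locally controlled by
the Euclidean distance times an upper bound of `k`. -/
theorem geodDist_le_segment {Ω : Set 𝔼} (hΩ : Convex ℝ Ω) {k : 𝔼 → ℝ}
    (hk : Continuous k) (hk0 : ∀ x, 0 ≤ k x) {x y : 𝔼} (hx : x ∈ Ω) (hy : y ∈ Ω) {M : ℝ}
    (hM : ∀ z ∈ segment ℝ x y, k z ≤ M) :
    geodDist Ω k x y ≤ M * ‖y - x‖ :=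
  (geodDist_le_cost hk0 (isCurve_segment hΩ hx hy)).trans (curveCost_segment_le hΩ hk hx hy hM)

theorem geodDist_self {Ω : Set 𝔼} (hΩ : Convex ℝ Ω) {k : 𝔼 → ℝ} (hk : Continuous k)
    (hk0 : ∀ x, 0 ≤ k x) {x : 𝔼} (hx : x ∈ Ω) : geodDist Ω k x x = 0 := by
  refine le_antisymm ?_ (geodDist_nonneg Ω hk0 x x)
  have := geodDist_le_segment hΩ hk hk0 hx hx (M := k x) (fun z hz => by
    rw [segment_same] at hz
    rw [Set.mem_singleton_iff.1 hz])
  simpa using this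

theorem geodDist_le_geodDist_add {Ω : Set 𝔼} (hΩ : Convex ℝ Ω) {k : 𝔼 → ℝ} (hk : Continuous k)
    (hk0 : ∀ x, 0 ≤ k x) {M : ℝ} (hM : ∀ x ∈ Ω, k x ≤ M) {x y x' y' : 𝔼} (hx : x ∈ Ω)
    (hy : y ∈ Ω) (hx' : x' ∈ Ω) (hy' : y' ∈ Ω) :
    geodDist Ω k x' y' ≤ geodDist Ω k x y + M * ‖x' - x‖ + M * ‖y' - y‖ := by
  have h1 := geodDist_triangle hΩ hk hk0 hx' hx hy'
  have h2 := geodDist_triangle hΩ hk hk0 hx hy hy'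
  have h3 := geodDist_le_segment hΩ hk hk0 hx' hx (M := M)
    fun z hz => hM z (hΩ.segment_subset hx' hx hz)
  have h4 := geodDist_le_segment hΩ hk hk0 hy hy' (M := M)
    fun z hz => hM z (hΩ.segment_subset hy hy' hz)
  rw [norm_sub_rev] at h3
  linarith

theorem continuousOn_geodDist {Ω : Set 𝔼} (hΩc : IsCompact Ω) (hΩ : Convex ℝ Ω)
    {k : 𝔼 → ℝ} (hk : Continuous k) (hk0 : ∀ x, 0 ≤ k x) :
    ContinuousOn (fun p : 𝔼 × 𝔼 => geodDist Ω k p.1 p.2) (Ω ×ˢ Ω) := by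
  obtain ⟨M, hM⟩ := hΩc.bddAbove_image hk.continuousOn
  have hM' : ∀ x ∈ Ω, k x ≤ M := fun x hx => hM ⟨x, hx, rfl⟩
  rcases Ω.eq_empty_or_nonempty with rfl | ⟨x₀, hx₀⟩
  · simp
  have hM0 : 0 ≤ M := (hk0 x₀).trans (hM' x₀ hx₀)
  have key : ∀ p ∈ Ω ×ˢ Ω, ∀ q ∈ Ω ×ˢ Ω,
      geodDist Ω k p.1 p.2 - geodDist Ω k q.1 q.2 ≤ 2 * M * dist p q := by
    intro p hp q hq
    have h1 := geodDist_le_geodDist_add hΩ hk hk0 hM' hq.1 hq.2 hp.1 hp.2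
    have h2 : ‖p.1 - q.1‖ ≤ dist p q := by
      rw [← dist_eq_norm, Prod.dist_eq]; exact le_max_left _ _
    have h3 : ‖p.2 - q.2‖ ≤ dist p q := by
      rw [← dist_eq_norm, Prod.dist_eq]; exact le_max_right _ _
    have h4 := mul_le_mul_of_nonneg_left h2 hM0
    have h5 := mul_le_mul_of_nonneg_left h3 hM0
    linarith
  refine (LipschitzOnWith.of_dist_le_mul (K := ⟨2 * M, by positivity⟩)
    fun p hp q hq => ?_).continuousOn
  rw [Real.dist_eq, abs_sub_le_iff]
  refine ⟨key p hp q hq, ?_⟩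
  rw [dist_comm p q]
  exact key q hq p hp

/-! ### Smooth approximation of potentials and weak duality -/

/-- The nonexpansive nearest-point projection onto a compact convex set. -/
theorem exists_proj {Ω : Set 𝔼} (hΩc : IsCompact Ω) (hΩ : Convex ℝ Ω) (hne : Ω.Nonempty) :
    ∃ P : 𝔼 → 𝔼, (∀ u, P u ∈ Ω) ∧ (∀ x ∈ Ω, P x = x) ∧ ∀ u v, ‖P u - P v‖ ≤ ‖u - v‖ := by
  choose P hP hmin using exists_norm_eq_iInf_of_complete_convex hne hΩc.isComplete hΩ
  have hin : ∀ u, ∀ w ∈ Ω, ⟪u - P u, w - P u⟫ ≤ 0 := fun u =>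
    (norm_eq_iInf_iff_real_inner_le_zero hΩ (hP u)).1 (hmin u)
  refine ⟨P, hP, fun x hx => ?_, fun u v => ?_⟩
  · have h := hin x x hx
    rw [real_inner_self_eq_norm_sq] at h
    have : ‖x - P x‖ = 0 := by nlinarith [norm_nonneg (x - P x)]
    exact (sub_eq_zero.1 (norm_eq_zero.1 this)).symm
  · have h1 := hin u (P v) (hP v)
    have h2 := hin v (P u) (hP u)
    have h3 : ⟪u - P u, P v - P u⟫ + ⟪v - P v, P u - P v⟫
        = ‖P u - P v‖ ^ 2 - ⟪u - v, P u - P v⟫ := by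
      rw [← real_inner_self_eq_norm_sq, ← neg_sub (P u) (P v), inner_neg_right,
        ← inner_sub_left, neg_add_eq_sub, ← inner_sub_left]
      congr 1
      abel
    have h4 := real_inner_le_norm (u - v) (P u - P v)
    by_contra! hcon
    nlinarith [norm_nonneg (u - v)]

/-- A function that is `1`-Lipschitz for `geodDist` is uniformly close on `Ω` to a `C¹` function whose
gradient is at most `k + ε`. The function is extended by the projection onto `Ω`, which keeps its
local Lipschitz constants, and then mollified. -/
theorem exists_smooth_approx_s3 {Ω : Set 𝔼} (hΩc : IsCompact Ω) (hΩ : Convex ℝ Ω)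
    (hne : Ω.Nonempty) {k : 𝔼 → ℝ} (hk : Continuous k) (hk0 : ∀ x, 0 ≤ k x) {f : 𝔼 → ℝ}
    (hf : ∀ x ∈ Ω, ∀ y ∈ Ω, f x - f y ≤ geodDist Ω k x y) {ε : ℝ} (hε : 0 < ε) :
    ∃ G : 𝔼 → ℝ, ContDiff ℝ 1 G ∧ (∀ x ∈ Ω, |G x - f x| ≤ ε) ∧
      ∀ x ∈ Ω, ‖gradient G x‖ ≤ k x + ε := by
  obtain ⟨P, hPm, hPx, hPl⟩ := exists_proj hΩc hΩ hne
  obtain ⟨M, hM⟩ := hΩc.bddAbove_image hk.continuousOn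
  have hM' : ∀ x ∈ Ω, k x ≤ M := fun x hx => hM ⟨x, hx, rfl⟩
  have hM0 : 0 ≤ M := by
    obtain ⟨x, hx⟩ := hne
    exact (hk0 x).trans (hM' x hx)
  -- a convex set on which `k ≤ C` carries a `C`-Lipschitz `f`
  have hfl : ∀ (U : Set 𝔼), Convex ℝ U → ∀ C, (∀ z ∈ U ∩ Ω, k z ≤ C) →
      ∀ x ∈ U ∩ Ω, ∀ y ∈ U ∩ Ω, |f x - f y| ≤ C * ‖x - y‖ := by
    intro U hU C hC x hx y hy
    have hc := hU.inter hΩ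
    have h1 := geodDist_le_segment hΩ hk hk0 hx.2 hy.2 (M := C)
      fun z hz => hC z (hc.segment_subset hx hy hz)
    have h2 := geodDist_le_segment hΩ hk hk0 hy.2 hx.2 (M := C)
      fun z hz => hC z (hc.segment_subset hy hx hz)
    rw [norm_sub_rev] at h1
    rw [abs_le]
    constructor
    · have := hf y hy.2 x hx.2
      linarith
    · exact (hf x hx.2 y hy.2).trans h1
  let F : 𝔼 → ℝ := fun u => f (P u)
  have hFM : ∀ u v, |F u - F v| ≤ M * ‖u - v‖ := fun u v =>
    (hfl Set.univ convex_univ M (fun z hz => hM' z hz.2) _ ⟨trivial, hPm u⟩ _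
      ⟨trivial, hPm v⟩).trans (mul_le_mul_of_nonneg_left (hPl u v) hM0)
  have hFc : Continuous F := by
    refine (LipschitzWith.of_dist_le_mul (K := ⟨M, hM0⟩) fun u v => ?_).continuous
    rw [Real.dist_eq, dist_eq_norm]
    exact hFM u v
  obtain ⟨δ₀, hδ₀, huc⟩ := Metric.uniformContinuousOn_iff.1
    (hΩc.uniformContinuousOn_of_continuous hk.continuousOn) ε hε
  have hFloc : ∀ x ∈ Ω, ∀ u ∈ Metric.ball x δ₀, ∀ v ∈ Metric.ball x δ₀,
      |F u - F v| ≤ (k x + ε) * ‖u - v‖ := by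
    intro x hx u hu v hv
    have hb : ∀ w ∈ Metric.ball x δ₀, P w ∈ Metric.ball x δ₀ ∩ Ω := fun w hw => by
      refine ⟨?_, hPm w⟩
      rw [Metric.mem_ball, dist_eq_norm] at hw ⊢
      have := hPl w x
      rw [hPx x hx] at this
      linarith
    refine (hfl _ (convex_ball x δ₀) (k x + ε) (fun z hz => ?_) _ (hb u hu) _ (hb v hv)).trans
      (mul_le_mul_of_nonneg_left (hPl u v) (by linarith [hk0 x]))
    have := huc z hz.2 x hx hz.1
    rw [Real.dist_eq, abs_lt] at this
    linarith [this.2]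
  obtain ⟨δ, hδ, hδ1, hδ2⟩ : ∃ δ > 0, δ ≤ δ₀ / 2 ∧ M * δ ≤ ε := by
    refine ⟨min (δ₀ / 2) (ε / (M + 1)), by positivity, min_le_left _ _, ?_⟩
    calc M * min (δ₀ / 2) (ε / (M + 1)) ≤ (M + 1) * (ε / (M + 1)) :=
          mul_le_mul (by linarith) (min_le_right _ _) (by positivity) (by positivity)
      _ = ε := by field_simp
  let φ : ContDiffBump (0 : 𝔼) := ⟨δ / 2, δ, half_pos hδ, half_lt_self hδ⟩
  let G : 𝔼 → ℝ := convolution (φ.normed volume) F (ContinuousLinearMap.lsmul ℝ ℝ) volume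
  have hG : ∀ x, G x = ∫ t, φ.normed volume t * F (x - t) := fun x => rfl
  have hcs : HasCompactSupport (φ.normed volume) := φ.hasCompactSupport_normed
  have hex : ∀ x, Integrable (fun t => φ.normed volume t * F (x - t)) := fun x =>
    Continuous.integrable_of_hasCompactSupport
      (φ.continuous_normed.mul (hFc.comp (by fun_prop))) hcs.mul_right
  refine ⟨G, hcs.contDiff_convolution_left _ φ.contDiff_normed hFc.locallyIntegrable, ?_, ?_⟩
  · intro x hx
    have := φ.dist_normed_convolution_le (μ := volume) (g := F) (x₀ := x) (ε := ε)
      hFc.aestronglyMeasurable (fun y hy => by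
        rw [Real.dist_eq]
        refine (hFM y x).trans (le_trans (mul_le_mul_of_nonneg_left ?_ hM0) hδ2)
        rw [Metric.mem_ball, dist_eq_norm] at hy
        exact hy.le)
    rw [Real.dist_eq] at this
    simpa only [F, hPx x hx] using this
  · intro x hx
    rw [gradient, LinearIsometryEquiv.norm_map]
    refine norm_fderiv_le_of_lip' ℝ (by linarith [hk0 x]) ?_
    filter_upwards [Metric.ball_mem_nhds x (half_pos hδ₀)] with u hu
    rw [hG, hG, ← integral_sub (hex u) (hex x)]
    have hb : ∀ t, ‖φ.normed volume t * F (u - t) - φ.normed volume t * F (x - t)‖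
        ≤ φ.normed volume t * ((k x + ε) * ‖u - x‖) := by
      intro t
      by_cases ht : φ.normed volume t = 0
      · simp [ht]
      · have ht' : t ∈ Metric.ball (0 : 𝔼) δ := by
          have : t ∈ Function.support (φ.normed volume) := ht
          rwa [φ.support_normed_eq] at this
        rw [← mul_sub, norm_mul, Real.norm_of_nonneg (φ.nonneg_normed t)]
        refine mul_le_mul_of_nonneg_left ?_ (φ.nonneg_normed t)
        rw [mem_ball_zero_iff] at ht'
        rw [Metric.mem_ball, dist_eq_norm] at hu
        have := hFloc x hx (u - t) ?_ (x - t) ?_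
        · simpa using this
        · rw [Metric.mem_ball, dist_eq_norm, sub_right_comm]
          have := norm_sub_le (u - x) t
          linarith
        · rw [Metric.mem_ball, dist_eq_norm, sub_right_comm, sub_self, zero_sub, norm_neg]
          linarith
    refine (norm_integral_le_of_norm_le ?_ (Filter.Eventually.of_forall hb)).trans ?_
    · exact (φ.integrable_normed).mul_const _
    · rw [integral_mul_const, φ.integral_normed, one_mul]

/-- Feasible pairs for the Beckmann problem, the vector measure being `h • m`. -/
def IsFlow (Ω : Set 𝔼) (μ ν m : Measure 𝔼) (h : 𝔼 → 𝔼) : Prop :=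
  IsFiniteMeasure m ∧ m Ωᶜ = 0 ∧ Integrable h m ∧
    ∀ ψ : 𝔼 → ℝ, ContDiff ℝ 1 ψ →
      ∫ x, ⟪gradient ψ x, h x⟫ ∂m = ∫ x, ψ x ∂ν - ∫ x, ψ x ∂μ

theorem integrable_of_continuousOn {Ω : Set 𝔼} (hΩc : IsCompact Ω) {m : Measure 𝔼}
    [IsFiniteMeasure m] (hm : m Ωᶜ = 0) {f : 𝔼 → ℝ} (hf : ContinuousOn f Ω) : Integrable f m := by
  rw [← Measure.restrict_eq_self_of_ae_mem (s := Ω) (μ := m) (by rwa [ae_iff])]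
  exact hf.integrableOn_compact hΩc

theorem integrable_continuous_mul_norm {Ω : Set 𝔼} (hΩc : IsCompact Ω) {m : Measure 𝔼}
    (hm : m Ωᶜ = 0) {k : 𝔼 → ℝ} (hk : Continuous k) {h : 𝔼 → 𝔼} (hh : Integrable h m) :
    Integrable (fun x => k x * ‖h x‖) m := by
  obtain ⟨M, hM⟩ := hΩc.exists_bound_of_continuousOn hk.continuousOn
  refine hh.norm.bdd_mul (c := M) hk.aestronglyMeasurable ?_
  have : ∀ᵐ x ∂m, x ∈ Ω := by rwa [ae_iff]
  filter_upwards [this] with x hx using hM x hx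

/-- Weak duality between flows and `geodDist`-Lipschitz potentials, obtained by testing the
divergence constraint on smooth approximations of the potential. -/
theorem potential_le_flow {Ω : Set 𝔼} (hΩc : IsCompact Ω) (hΩ : Convex ℝ Ω)
    (hne : Ω.Nonempty) {k : 𝔼 → ℝ} (hk : Continuous k) (hk0 : ∀ x, 0 ≤ k x)
    {μ ν : Measure 𝔼} [IsProbabilityMeasure μ] [IsProbabilityMeasure ν]
    (hμ : μ Ωᶜ = 0) (hν : ν Ωᶜ = 0) {f : 𝔼 → ℝ} (hfc : ContinuousOn f Ω)
    (hf : ∀ x ∈ Ω, ∀ y ∈ Ω, f x - f y ≤ geodDist Ω k x y)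
    {m : Measure 𝔼} {h : 𝔼 → 𝔼} (hflow : IsFlow Ω μ ν m h) :
    ∫ x, f x ∂μ - ∫ x, f x ∂ν ≤ ∫ x, k x * ‖h x‖ ∂m := by
  obtain ⟨hfin, hm, hh, hdiv⟩ := hflow
  have hmΩ : ∀ᵐ x ∂m, x ∈ Ω := by rwa [ae_iff]
  have hμΩ : ∀ᵐ x ∂μ, x ∈ Ω := by rwa [ae_iff]
  have hνΩ : ∀ᵐ x ∂ν, x ∈ Ω := by rwa [ae_iff]
  have hI := integrable_continuous_mul_norm hΩc hm hk hh
  have key : ∀ ε : ℝ, 0 < ε → ∫ x, f x ∂μ - ∫ x, f x ∂ν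
      ≤ ∫ x, k x * ‖h x‖ ∂m + ε * (∫ x, ‖h x‖ ∂m + 2) := by
    intro ε hε
    obtain ⟨G, hG1, hGf, hGg⟩ := exists_smooth_approx_s3 hΩc hΩ hne hk hk0 hf hε
    have hGi : ∀ (ρ : Measure 𝔼) [IsProbabilityMeasure ρ], ρ Ωᶜ = 0 → Integrable G ρ :=
      fun ρ _ hρ => integrable_of_continuousOn hΩc hρ hG1.continuous.continuousOn
    have h1 : ∫ x, f x ∂μ ≤ ∫ x, G x ∂μ + ε := by
      have : ∫ x, f x ∂μ ≤ ∫ x, (G x + ε) ∂μ := by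
        refine integral_mono_ae (integrable_of_continuousOn hΩc hμ hfc)
          ((hGi μ hμ).add (integrable_const _)) ?_
        filter_upwards [hμΩ] with x hx
        linarith [(abs_le.1 (hGf x hx)).1]
      rw [integral_add (hGi μ hμ) (integrable_const _)] at this
      simpa using this
    have h2 : ∫ x, G x ∂ν ≤ ∫ x, f x ∂ν + ε := by
      have hfi := integrable_of_continuousOn hΩc hν hfc
      have : ∫ x, G x ∂ν ≤ ∫ x, (f x + ε) ∂ν := by
        refine integral_mono_ae (hGi ν hν) (hfi.add (integrable_const _)) ?_
        filter_upwards [hνΩ] with x hx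
        linarith [(abs_le.1 (hGf x hx)).2]
      rw [integral_add hfi (integrable_const _)] at this
      simpa using this
    have h3 : ‖∫ x, ⟪gradient G x, h x⟫ ∂m‖ ≤ ∫ x, (k x * ‖h x‖ + ε * ‖h x‖) ∂m := by
      refine norm_integral_le_of_norm_le (hI.add (hh.norm.const_mul ε)) ?_
      filter_upwards [hmΩ] with x hx
      refine (norm_inner_le_norm _ _).trans ?_
      rw [← add_mul]
      exact mul_le_mul_of_nonneg_right (hGg x hx) (norm_nonneg _)
    rw [integral_add hI (hh.norm.const_mul ε), integral_const_mul, hdiv G hG1, Real.norm_eq_abs]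
      at h3
    have h4 := (abs_le.1 h3).1
    linarith
  have hC : 0 < ∫ x, ‖h x‖ ∂m + 2 := by
    have : 0 ≤ ∫ x, ‖h x‖ ∂m := integral_nonneg fun _ => norm_nonneg _
    linarith
  refine le_of_forall_pos_le_add fun η hη => ?_
  have := key (η / (∫ x, ‖h x‖ ∂m + 2)) (by positivity)
  rwa [div_mul_cancel₀ _ hC.ne'] at this

/-! ### From flows to plans -/

/-- The Kantorovich value is at most the Beckmann value: every flow is dominated by a plan. Given an
admissible pair `(φ, ψ)`, the `c`-transform of `ψ` is a `geodDist`-Lipschitz potential doing at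
least as well, so the cost of the flow bounds the dual Kantorovich value. -/
theorem exists_plan_le_flow {Ω : Set 𝔼} (hΩc : IsCompact Ω) (hΩ : Convex ℝ Ω)
    (hne : Ω.Nonempty) {k : 𝔼 → ℝ} (hk : Continuous k) (hk0 : ∀ x, 0 ≤ k x)
    {μ ν : Measure 𝔼} [IsProbabilityMeasure μ] [IsProbabilityMeasure ν]
    (hμ : μ Ωᶜ = 0) (hν : ν Ωᶜ = 0)
    {m : Measure 𝔼} {h : 𝔼 → 𝔼} (hflow : IsFlow Ω μ ν m h) :
    ∃ γ : Measure (𝔼 × 𝔼), γ.map Prod.fst = μ ∧ γ.map Prod.snd = ν ∧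
      ∫ p, geodDist Ω k p.1 p.2 ∂γ ≤ ∫ x, k x * ‖h x‖ ∂m := by
  have : CompactSpace Ω := isCompact_iff_compactSpace.1 hΩc
  have : Nonempty Ω := hne.to_subtype
  obtain ⟨M, hM⟩ := hΩc.bddAbove_image hk.continuousOn
  have hM' : ∀ x ∈ Ω, k x ≤ M := fun x hx => hM ⟨x, hx, rfl⟩
  have hemb : MeasurableEmbedding (Subtype.val : Ω → 𝔼) :=
    MeasurableEmbedding.subtype_coe hΩc.measurableSet
  have hmap : ∀ ρ : Measure 𝔼, ρ Ωᶜ = 0 → (ρ.comap (Subtype.val : Ω → 𝔼)).map Subtype.val = ρ := by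
    intro ρ hρ
    rw [map_comap_subtype_coe hΩc.measurableSet]
    exact Measure.restrict_eq_self_of_ae_mem (by rwa [ae_iff])
  have hprob : ∀ (ρ : Measure 𝔼) [IsProbabilityMeasure ρ], ρ Ωᶜ = 0 →
      IsProbabilityMeasure (ρ.comap (Subtype.val : Ω → 𝔼)) := by
    intro ρ _ hρ
    constructor
    rw [hemb.comap_apply, Set.image_univ, Subtype.range_coe]
    exact (prob_compl_eq_zero_iff hΩc.measurableSet).1 hρ
  have := hprob μ hμ
  have := hprob ν hν
  let c : C(Ω × Ω, ℝ) := ⟨fun p => geodDist Ω k p.1 p.2, by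
    have h1 := continuousOn_geodDist hΩc hΩ hk hk0
    exact h1.comp_continuous (f := fun p : Ω × Ω => ((p.1 : 𝔼), (p.2 : 𝔼))) (by fun_prop)
      fun p => ⟨p.1.2, p.2.2⟩⟩
  obtain ⟨γ, h1, h2, h3⟩ := kantorovich_exists_plan (μ.comap (Subtype.val : Ω → 𝔼))
      (ν.comap (Subtype.val : Ω → 𝔼)) c (∫ x, k x * ‖h x‖ ∂m) (by
    intro φ ψ hφψ
    -- the `c`-transform of `ψ`
    let f : 𝔼 → ℝ := fun x => ⨅ y : Ω, (geodDist Ω k x y - ψ y)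
    have hbdd : ∀ x, BddBelow (Set.range fun y : Ω => geodDist Ω k x y - ψ y) := by
      intro x
      refine ⟨-‖ψ‖, ?_⟩
      rintro _ ⟨y, rfl⟩
      have := (abs_le.1 (ψ.norm_coe_le_norm y)).2
      have := geodDist_nonneg Ω hk0 x y
      simp only
      linarith
    have hf : ∀ x ∈ Ω, ∀ y ∈ Ω, f x - f y ≤ geodDist Ω k x y := by
      intro x hx y hy
      rw [sub_le_comm]
      refine le_ciInf fun z => ?_
      have h1 : f x ≤ geodDist Ω k x z - ψ z := ciInf_le (hbdd x) z
      have h2 := geodDist_triangle hΩ hk hk0 hx hy z.2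
      linarith
    have hfc : ContinuousOn f Ω := by
      have hM0 : 0 ≤ M := by
        obtain ⟨x, hx⟩ := hne
        exact (hk0 x).trans (hM' x hx)
      have hle : ∀ x ∈ Ω, ∀ y ∈ Ω, f x - f y ≤ M * ‖y - x‖ := fun x hx y hy =>
        (hf x hx y hy).trans (geodDist_le_segment hΩ hk hk0 hx hy
          fun z hz => hM' z (hΩ.segment_subset hx hy hz))
      refine (LipschitzOnWith.of_dist_le_mul (K := ⟨M, hM0⟩) fun x hx y hy => ?_).continuousOn
      rw [Real.dist_eq, abs_sub_le_iff, dist_eq_norm]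
      refine ⟨?_, hle y hy x hx⟩
      rw [norm_sub_rev]
      exact hle x hx y hy
    have hfΩ : Continuous fun x : Ω => f x :=
      hfc.comp_continuous continuous_subtype_val fun x => x.2
    have hint : ∀ (ρ : Measure Ω) [IsProbabilityMeasure ρ] (g : Ω → ℝ), Continuous g →
        Integrable g ρ := fun ρ _ g hg =>
      hg.integrable_of_hasCompactSupport (HasCompactSupport.of_compactSpace g)
    have e1 : ∫ x, φ x ∂(μ.comap (Subtype.val : Ω → 𝔼)) ≤ ∫ x, f x ∂μ := by
      conv_rhs => rw [← hmap μ hμ]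
      rw [hemb.integral_map]
      refine integral_mono (hint _ _ φ.continuous) (hint _ _ hfΩ) fun x => ?_
      refine le_ciInf fun y => ?_
      have : φ x + ψ y ≤ geodDist Ω k x y := hφψ x y
      linarith
    have e2 : ∫ x, ψ x ∂(ν.comap (Subtype.val : Ω → 𝔼)) ≤ -∫ x, f x ∂ν := by
      conv_rhs => rw [← hmap ν hν]
      rw [hemb.integral_map, ← integral_neg]
      refine integral_mono (hint _ _ ψ.continuous) (hint _ _ hfΩ.neg) fun x => ?_
      have : f x ≤ geodDist Ω k x x - ψ x := ciInf_le (hbdd x) x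
      rw [geodDist_self hΩ hk hk0 x.2] at this
      simp only
      linarith
    have e3 := potential_le_flow hΩc hΩ hne hk hk0 hμ hν hfc hf hflow
    linarith)
  have hemb2 : MeasurableEmbedding (fun p : Ω × Ω => ((p.1 : 𝔼), (p.2 : 𝔼))) :=
    hemb.prodMap hemb
  refine ⟨γ.map fun p : Ω × Ω => ((p.1 : 𝔼), (p.2 : 𝔼)), ?_, ?_, ?_⟩
  · rw [Measure.map_map measurable_fst hemb2.measurable, ← hmap μ hμ, ← h1,
      Measure.map_map measurable_subtype_coe measurable_fst]
    rfl
  · rw [Measure.map_map measurable_snd hemb2.measurable, ← hmap ν hν, ← h2,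
      Measure.map_map measurable_subtype_coe measurable_snd]
    rfl
  · rw [hemb2.integral_map]
    exact h3

/-! ### From plans to flows -/

/-- The fundamental theorem of calculus for `ψ` along a Lipschitz curve. -/
theorem integral_gradient_curve {Ω : Set 𝔼} (hΩc : IsCompact Ω) (hΩ : Convex ℝ Ω)
    {ω : ℝ → 𝔼} {x y : 𝔼} (hω : IsCurve Ω ω x y) {ψ : 𝔼 → ℝ} (hψ : ContDiff ℝ 1 ψ) :
    ∫ t in (0:ℝ)..1, ⟪gradient ψ (ω t), deriv ω t⟫ = ψ y - ψ x := by
  obtain ⟨K, hK⟩ := hω.lip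
  have hd : ∀ z, DifferentiableAt ℝ ψ z := fun z => hψ.differentiable one_ne_zero z
  obtain ⟨C, hC⟩ := hΩc.exists_bound_of_continuousOn
    (hψ.continuous_fderiv one_ne_zero).continuousOn
  have hL : LipschitzOnWith C.toNNReal ψ Ω :=
    hΩ.lipschitzOnWith_of_nnnorm_fderiv_le (𝕜 := ℝ) (fun z _ => hd z) fun z hz => by
      rw [← NNReal.coe_le_coe, coe_nnnorm]
      exact (hC z hz).trans (Real.le_coe_toNNReal C)
  have hcomp : LipschitzWith (C.toNNReal * K) (ψ ∘ ω) := by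
    rw [← lipschitzOnWith_univ]
    exact hL.comp hK.lipschitzOnWith fun t _ => hω.mem t
  have hac := (hcomp.lipschitzOnWith (s := Set.uIcc (0:ℝ) 1)).absolutelyContinuousOnInterval
  have := hac.integral_deriv_eq_sub
  simp only [Function.comp_apply, hω.zero, hω.one] at this
  rw [← this]
  refine intervalIntegral.integral_congr_ae ?_
  filter_upwards [hK.ae_differentiableAt_real] with t ht _
  have h1 := (hd (ω t)).hasFDerivAt.comp_hasDerivAt t ht.hasDerivAt
  rw [h1.deriv, gradient, InnerProductSpace.toDual_symm_apply]

/-- A lifted flow: a finite measure of positions in `Ω` and velocities that moves the marginal law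
of `a` to that of `b`. Unlike vector measures given by densities, these add up trivially. -/
structure IsLift {P : Type*} [MeasurableSpace P] (Ω : Set 𝔼) (γ : Measure P) (a b : P → 𝔼)
    (ρ : Measure (𝔼 × 𝔼)) : Prop where
  fin : IsFiniteMeasure ρ
  mem : ∀ᵐ p ∂ρ, p.1 ∈ Ω
  int : Integrable Prod.snd ρ
  div : ∀ ψ : 𝔼 → ℝ, ContDiff ℝ 1 ψ →
    ∫ p, ⟪gradient ψ p.1, p.2⟫ ∂ρ = ∫ p, ψ (b p) ∂γ - ∫ p, ψ (a p) ∂γ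

theorem continuous_gradient {ψ : 𝔼 → ℝ} (hψ : ContDiff ℝ 1 ψ) : Continuous (gradient ψ) :=
  (InnerProductSpace.toDual ℝ 𝔼).symm.continuous.comp (hψ.continuous_fderiv one_ne_zero)

theorem integrable_inner_gradient {Ω : Set 𝔼} (hΩc : IsCompact Ω) {ρ : Measure (𝔼 × 𝔼)}
    (hmem : ∀ᵐ p ∂ρ, p.1 ∈ Ω) (hint : Integrable Prod.snd ρ) {ψ : 𝔼 → ℝ}
    (hψ : ContDiff ℝ 1 ψ) : Integrable (fun p : 𝔼 × 𝔼 => ⟪gradient ψ p.1, p.2⟫) ρ := by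
  have hc := continuous_gradient hψ
  obtain ⟨C, hC⟩ := hΩc.exists_bound_of_continuousOn hc.continuousOn
  refine (hint.norm.const_mul C).mono' (by fun_prop) ?_
  filter_upwards [hmem] with p hp
  exact (norm_inner_le_norm _ _).trans (mul_le_mul_of_nonneg_right (hC _ hp) (norm_nonneg _))

theorem integrable_lift_cost {Ω : Set 𝔼} (hΩc : IsCompact Ω) {ρ : Measure (𝔼 × 𝔼)}
    (hmem : ∀ᵐ p ∂ρ, p.1 ∈ Ω) (hint : Integrable Prod.snd ρ) {k : 𝔼 → ℝ}
    (hk : Continuous k) : Integrable (fun p : 𝔼 × 𝔼 => k p.1 * ‖p.2‖) ρ := by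
  obtain ⟨C, hC⟩ := hΩc.exists_bound_of_continuousOn hk.continuousOn
  refine hint.norm.bdd_mul (c := C) (by fun_prop) ?_
  filter_upwards [hmem] with p hp using hC _ hp

/-- Averaging the velocities over each position turns a lifted flow into a vector measure with
density, and by Jensen's inequality does not increase the cost. -/
theorem IsLift.exists_flow {P : Type*} [MeasurableSpace P] {Ω : Set 𝔼} (hΩc : IsCompact Ω)
    {γ : Measure P} {a b : P → 𝔼} {ρ : Measure (𝔼 × 𝔼)} (hρ : IsLift Ω γ a b ρ) {k : 𝔼 → ℝ}
    (hk : Continuous k) (hk0 : ∀ x, 0 ≤ k x) {μ ν : Measure 𝔼}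
    (ha : ∀ ψ : 𝔼 → ℝ, Continuous ψ → ∫ p, ψ (a p) ∂γ = ∫ x, ψ x ∂μ)
    (hb : ∀ ψ : 𝔼 → ℝ, Continuous ψ → ∫ p, ψ (b p) ∂γ = ∫ x, ψ x ∂ν) :
    ∃ m h, IsFlow Ω μ ν m h ∧ ∫ x, k x * ‖h x‖ ∂m ≤ ∫ p, k p.1 * ‖p.2‖ ∂ρ := by
  have := hρ.fin
  have hae := hρ.int.condKernel_ae
  have hh : Integrable (fun x => ∫ w, w ∂ρ.condKernel x) ρ.fst := hρ.int.integral_condKernel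
  have hm : ρ.fst Ωᶜ = 0 := by
    rw [Measure.fst_apply hΩc.measurableSet.compl]
    exact hρ.mem
  refine ⟨ρ.fst, fun x => ∫ w, w ∂ρ.condKernel x, ⟨inferInstance, hm, hh, fun ψ hψ => ?_⟩, ?_⟩
  · rw [← ha ψ hψ.continuous, ← hb ψ hψ.continuous, ← hρ.div ψ hψ,
      ← Measure.integral_condKernel (integrable_inner_gradient hΩc hρ.mem hρ.int hψ)]
    refine integral_congr_ae ?_
    filter_upwards [hae] with x hx
    exact (integral_inner hx _).symm
  · have hc := integrable_lift_cost hΩc hρ.mem hρ.int hk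
    rw [← Measure.integral_condKernel hc]
    refine integral_mono (integrable_continuous_mul_norm hΩc hm hk hh) hc.integral_condKernel
      fun x => ?_
    simp only [integral_const_mul]
    exact mul_le_mul_of_nonneg_left (norm_integral_le_integral_norm _) (hk0 x)

theorem IsLift.add {P : Type*} [MeasurableSpace P] {Ω : Set 𝔼} (hΩc : IsCompact Ω)
    {γ : Measure P} {a b c : P → 𝔼} {ρ₁ ρ₂ : Measure (𝔼 × 𝔼)} (h₁ : IsLift Ω γ a b ρ₁)
    (h₂ : IsLift Ω γ b c ρ₂) : IsLift Ω γ a c (ρ₁ + ρ₂) := by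
  have := h₁.fin
  have := h₂.fin
  refine ⟨inferInstance, ae_add_measure_iff.2 ⟨h₁.mem, h₂.mem⟩, h₁.int.add_measure h₂.int,
    fun ψ hψ => ?_⟩
  rw [integral_add_measure (integrable_inner_gradient hΩc h₁.mem h₁.int hψ)
    (integrable_inner_gradient hΩc h₂.mem h₂.int hψ), h₁.div ψ hψ, h₂.div ψ hψ]
  ring

/-- A measurable, uniformly Lipschitz family of curves yields a lifted flow. -/
theorem exists_lift {P : Type*} [MeasurableSpace P] {Ω : Set 𝔼} (hΩc : IsCompact Ω)
    (hΩ : Convex ℝ Ω) {γ : Measure P} [IsFiniteMeasure γ] {a b : P → 𝔼} (ha : Measurable a)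
    (hb : Measurable b) {Z : P → ℝ → 𝔼}
    (hZ : ∀ p, IsCurve Ω (Z p) (a p) (b p)) {K : ℝ≥0} (hK : ∀ p, LipschitzWith K (Z p))
    (hm : Measurable fun q : P × ℝ => Z q.1 q.2)
    (hm' : Measurable fun q : P × ℝ => deriv (Z q.1) q.2) {k : 𝔼 → ℝ} (hk : Continuous k) :
    ∃ ρ, IsLift Ω γ a b ρ ∧ ∫ p, k p.1 * ‖p.2‖ ∂ρ = ∫ p, curveCost k (Z p) ∂γ := by
  let σ : Measure (P × ℝ) := γ.prod (volume.restrict (Set.Ioc (0:ℝ) 1))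
  have hmm : Measurable fun q : P × ℝ => (Z q.1 q.2, deriv (Z q.1) q.2) := hm.prodMk hm'
  -- the law of (position, velocity) at a uniform time along a curve drawn from `γ`
  let ρ : Measure (𝔼 × 𝔼) := σ.map fun q => (Z q.1 q.2, deriv (Z q.1) q.2)
  have hfin : IsFiniteMeasure ρ := inferInstance
  have hmem : ∀ᵐ p ∂ρ, p.1 ∈ Ω := by
    refine (ae_map_iff hmm.aemeasurable (measurable_fst hΩc.measurableSet)).2 ?_
    exact Filter.Eventually.of_forall fun q => (hZ q.1).mem q.2
  have hint : Integrable Prod.snd ρ := by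
    refine (integrable_map_measure (by fun_prop) hmm.aemeasurable).2 ?_
    refine Integrable.of_bound (C := K) hm'.aestronglyMeasurable
      (Filter.Eventually.of_forall fun q => ?_)
    exact norm_deriv_le_of_lipschitz (hK q.1)
  have hcomp : ∀ f : 𝔼 × 𝔼 → ℝ, Integrable f ρ →
      ∫ p, f p ∂ρ = ∫ p, (∫ t in (0:ℝ)..1, f (Z p t, deriv (Z p) t)) ∂γ := by
    intro f hf
    rw [integral_map hmm.aemeasurable hf.1]
    have hi : Integrable (fun q : P × ℝ => f (Z q.1 q.2, deriv (Z q.1) q.2))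
        (γ.prod (volume.restrict (Set.Ioc (0:ℝ) 1))) :=
      (integrable_map_measure hf.1 hmm.aemeasurable).1 hf
    refine (integral_prod _ hi).trans ?_
    simp only [intervalIntegral.integral_of_le zero_le_one]
  refine ⟨ρ, ⟨hfin, hmem, hint, fun ψ hψ => ?_⟩, ?_⟩
  · rw [hcomp _ (integrable_inner_gradient hΩc hmem hint hψ)]
    obtain ⟨C, hC⟩ := hΩc.exists_bound_of_continuousOn hψ.continuous.continuousOn
    have hia : Integrable (fun p => ψ (a p)) γ :=
      Integrable.of_bound (hψ.continuous.measurable.comp ha).aestronglyMeasurable C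
        (Filter.Eventually.of_forall fun p => hC _ ((hZ p).zero ▸ (hZ p).mem 0))
    have hib : Integrable (fun p => ψ (b p)) γ :=
      Integrable.of_bound (hψ.continuous.measurable.comp hb).aestronglyMeasurable C
        (Filter.Eventually.of_forall fun p => hC _ ((hZ p).one ▸ (hZ p).mem 1))
    rw [← integral_sub hib hia]
    exact integral_congr_ae (Filter.Eventually.of_forall fun p =>
      integral_gradient_curve hΩc hΩ (hZ p) hψ)
  · rw [hcomp _ (integrable_lift_cost hΩc hmem hint hk)]
    rfl

/-- Moving `a p` to `b p` along straight segments costs at most an upper bound of `k` on `Ω` times the mean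
distance. -/
theorem exists_segment_lift {P : Type*} [MeasurableSpace P] {Ω : Set 𝔼} (hΩc : IsCompact Ω)
    (hΩ : Convex ℝ Ω) {γ : Measure P} [IsFiniteMeasure γ] {a b : P → 𝔼} (ha : Measurable a)
    (hb : Measurable b) (haΩ : ∀ p, a p ∈ Ω) (hbΩ : ∀ p, b p ∈ Ω) {k : 𝔼 → ℝ}
    (hk : Continuous k) (hk0 : ∀ x, 0 ≤ k x) {M : ℝ} (hM : ∀ x ∈ Ω, k x ≤ M) :
    ∃ ρ, IsLift Ω γ a b ρ ∧ ∫ p, k p.1 * ‖p.2‖ ∂ρ ≤ ∫ p, M * ‖b p - a p‖ ∂γ := by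
  let W : 𝔼 × 𝔼 → ℝ → 𝔼 :=
    fun u t => u.1 + (Set.projIcc (0:ℝ) 1 zero_le_one t : ℝ) • (u.2 - u.1)
  have hW : Continuous W.uncurry := by
    simp only [W, Function.uncurry_def]
    have : Continuous fun t => (Set.projIcc (0:ℝ) 1 zero_le_one t : ℝ) :=
      continuous_subtype_val.comp continuous_projIcc
    fun_prop
  have hab : Measurable fun q : P × ℝ => ((a q.1, b q.1), q.2) := by fun_prop
  obtain ⟨D, hD⟩ := hΩc.isBounded.exists_norm_le
  have hn : ∀ p, ‖b p - a p‖ ≤ D + D := fun p =>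
    (norm_sub_le _ _).trans (add_le_add (hD _ (hbΩ p)) (hD _ (haΩ p)))
  obtain ⟨ρ, h1, h2⟩ := exists_lift hΩc hΩ (γ := γ) ha hb (Z := fun p => W (a p, b p))
    (fun p => isCurve_segment hΩ (haΩ p) (hbΩ p)) (K := (D + D).toNNReal) (fun p => by
      refine LipschitzWith.of_dist_le_mul fun s t => ?_
      have := (LipschitzWith.projIcc (zero_le_one (α := ℝ))).dist_le_mul s t
      simp only [W]
      rw [dist_add_left, dist_eq_norm, ← sub_smul, norm_smul, mul_comm]
      refine mul_le_mul ((hn p).trans (Real.le_coe_toNNReal _)) ?_ (norm_nonneg _) (by positivity)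
      simpa [Subtype.dist_eq, Real.dist_eq] using this)
    (hW.measurable.comp hab) ((measurable_deriv_with_param hW).comp hab) hk
  refine ⟨ρ, h1, ?_⟩
  rw [h2]
  refine integral_mono_of_nonneg (Filter.Eventually.of_forall fun p => ?_) ?_
    (Filter.Eventually.of_forall fun p => ?_)
  · exact intervalIntegral.integral_nonneg zero_le_one fun t _ =>
      mul_nonneg (hk0 _) (norm_nonneg _)
  · exact (Integrable.of_bound (by fun_prop) (D + D)
      (Filter.Eventually.of_forall fun p => by rw [norm_norm]; exact hn p)).const_mul M
  · exact curveCost_segment_le hΩ hk (haΩ p) (hbΩ p)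
      fun z hz => hM z (hΩ.segment_subset (haΩ p) (hbΩ p) hz)

/-- Near-optimal curves can be chosen measurably when the endpoints take finitely many values. -/
theorem exists_geodesic_lift {P : Type*} [MeasurableSpace P] {Ω : Set 𝔼} (hΩc : IsCompact Ω)
    (hΩ : Convex ℝ Ω) {γ : Measure P} [IsFiniteMeasure γ] (s : SimpleFunc P (𝔼 × 𝔼))
    (hs : ∀ p, s p ∈ Ω ×ˢ Ω) {k : 𝔼 → ℝ} (hk : Continuous k)
    (hk0 : ∀ x, 0 ≤ k x) {ε : ℝ} (hε : 0 < ε) :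
    ∃ ρ, IsLift Ω γ (fun p => (s p).1) (fun p => (s p).2) ρ ∧
      ∫ p, k p.1 * ‖p.2‖ ∂ρ ≤ ∫ p, (geodDist Ω k (s p).1 (s p).2 + ε) ∂γ := by
  have hex : ∀ u : 𝔼 × 𝔼, ∃ ω : ℝ → 𝔼, u ∈ Ω ×ˢ Ω →
      IsCurve Ω ω u.1 u.2 ∧ curveCost k ω < geodDist Ω k u.1 u.2 + ε := fun u => by
    by_cases hu : u ∈ Ω ×ˢ Ω
    · obtain ⟨ω, hω⟩ := exists_isCurve hΩ (k := k) hu.1 hu.2 hε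
      exact ⟨ω, fun _ => hω⟩
    · exact ⟨0, fun h => absurd h hu⟩
  choose W hW using hex
  have hlip : ∀ u : 𝔼 × 𝔼, ∃ K : ℝ≥0, u ∈ Ω ×ˢ Ω → LipschitzWith K (W u) := fun u => by
    by_cases hu : u ∈ Ω ×ˢ Ω
    · obtain ⟨K, hK⟩ := (hW u hu).1.lip
      exact ⟨K, fun _ => hK⟩
    · exact ⟨0, fun h => absurd h hu⟩
  choose K hK using hlip
  have hrange : ∀ p, s p ∈ s.range := fun p => s.mem_range_self p
  let s' : SimpleFunc (P × ℝ) (𝔼 × 𝔼) := s.comp Prod.fst measurable_fst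
  obtain ⟨ρ, h1, h2⟩ := exists_lift hΩc hΩ (γ := γ) (a := fun p => (s p).1)
    (b := fun p => (s p).2) (Z := fun p => W (s p)) (by fun_prop) (by fun_prop)
    (fun p => (hW _ (hs p)).1)
    (K := s.range.sup K) (fun p => (hK _ (hs p)).weaken (Finset.le_sup (hrange p)))
    (by
      classical
      have := SimpleFunc.measurable_bind s' (fun u q => if u ∈ Ω ×ˢ Ω then W u q.2 else 0) (by
        intro u
        by_cases hu : u ∈ Ω ×ˢ Ω
        · simp only [hu, if_true]
          exact (hK u hu).continuous.measurable.comp measurable_snd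
        · simp only [hu, if_false]
          exact measurable_const)
      convert this using 2 with q
      exact (if_pos (hs q.1)).symm)
    (SimpleFunc.measurable_bind s' (fun u q => deriv (W u) q.2)
      fun u => (measurable_deriv (W u)).comp measurable_snd) hk
  refine ⟨ρ, h1, ?_⟩
  rw [h2]
  refine integral_mono_of_nonneg (Filter.Eventually.of_forall fun p => ?_) ?_
    (Filter.Eventually.of_forall fun p => ?_)
  · exact intervalIntegral.integral_nonneg zero_le_one fun t _ =>
      mul_nonneg (hk0 _) (norm_nonneg _)
  · have hint : Integrable (s.map fun u : 𝔼 × 𝔼 => geodDist Ω k u.1 u.2 + ε) γ :=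
      SimpleFunc.integrable_of_isFiniteMeasure _
    exact hint
  · exact (hW _ (hs p)).2.le

/-- A finitely valued map into `Ω` that is close to the identity in mean, for both `μ` and `ν`. -/
theorem exists_quantization {Ω : Set 𝔼} (hΩc : IsCompact Ω) (hne : Ω.Nonempty)
    {μ ν : Measure 𝔼} [IsProbabilityMeasure μ] [IsProbabilityMeasure ν]
    (hμ : μ Ωᶜ = 0) (hν : ν Ωᶜ = 0) {ε : ℝ} (hε : 0 < ε) :
    ∃ q : SimpleFunc 𝔼 𝔼, (∀ x, q x ∈ Ω) ∧ ∫ x, ‖q x - x‖ ∂μ < ε ∧ ∫ x, ‖q x - x‖ ∂ν < ε := by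
  obtain ⟨x₀, hx₀⟩ := hne
  obtain ⟨D, hD⟩ := hΩc.isBounded.exists_norm_le
  let q : ℕ → SimpleFunc 𝔼 𝔼 := SimpleFunc.approxOn id measurable_id Ω x₀ hx₀
  have hq : ∀ n x, q n x ∈ Ω := SimpleFunc.approxOn_mem measurable_id hx₀
  have hlim : ∀ (ρ : Measure 𝔼) [IsProbabilityMeasure ρ], ρ Ωᶜ = 0 →
      Filter.Tendsto (fun n => ∫ x, ‖q n x - x‖ ∂ρ) Filter.atTop (nhds 0) := by
    intro ρ _ hρ
    have hρΩ : ∀ᵐ x ∂ρ, x ∈ Ω := by rwa [ae_iff]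
    have := tendsto_integral_of_dominated_convergence (μ := ρ) (F := fun n x => ‖q n x - x‖)
      (f := fun _ => 0) (fun _ => D + D)
      (fun n => ((q n).measurable.sub measurable_id).norm.aestronglyMeasurable)
      (integrable_const _) (fun n => by
        filter_upwards [hρΩ] with x hx
        rw [norm_norm]
        exact (norm_sub_le _ _).trans (add_le_add (hD _ (hq n x)) (hD _ hx))) (by
        filter_upwards [hρΩ] with x hx
        have h1 : Filter.Tendsto (fun n => q n x) Filter.atTop (nhds x) :=
          SimpleFunc.tendsto_approxOn measurable_id hx₀ (subset_closure hx)
        simpa using (h1.sub_const x).norm)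
    simpa using this
  obtain ⟨n, h1, h2⟩ := (((hlim μ hμ).eventually_lt_const hε).and
    ((hlim ν hν).eventually_lt_const hε)).exists
  exact ⟨q n, hq n, h1, h2⟩

/-- The Beckmann value is at most the Kantorovich value: every plan is almost dominated by a flow. A
pair `(x, y)` is moved along the segment from `x` to its quantization `q x`, a near-optimal curve
from `q x` to `q y`, and the segment from `q y` to `y`. The projection `Pr` only serves to have
endpoints in `Ω` everywhere rather than almost everywhere. -/
theorem exists_flow_le_plan {Ω : Set 𝔼} (hΩc : IsCompact Ω) (hΩ : Convex ℝ Ω)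
    (hne : Ω.Nonempty) {k : 𝔼 → ℝ} (hk : Continuous k) (hk0 : ∀ x, 0 ≤ k x)
    {μ ν : Measure 𝔼} [IsProbabilityMeasure μ] [IsProbabilityMeasure ν]
    (hμ : μ Ωᶜ = 0) (hν : ν Ωᶜ = 0) {γ : Measure (𝔼 × 𝔼)} (h₁ : γ.map Prod.fst = μ)
    (h₂ : γ.map Prod.snd = ν) {ε : ℝ} (hε : 0 < ε) :
    ∃ m h, IsFlow Ω μ ν m h ∧
      ∫ x, k x * ‖h x‖ ∂m ≤ ∫ p, geodDist Ω k p.1 p.2 ∂γ + ε := by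
  obtain ⟨Pr, hPm, hPx, hPl⟩ := exists_proj hΩc hΩ hne
  have hPc : Continuous Pr := (LipschitzWith.of_dist_le_mul (K := 1) fun u v => by
    rw [dist_eq_norm, dist_eq_norm, NNReal.coe_one, one_mul]; exact hPl u v).continuous
  obtain ⟨M, hM⟩ := hΩc.bddAbove_image hk.continuousOn
  have hM' : ∀ x ∈ Ω, k x ≤ M := fun x hx => hM ⟨x, hx, rfl⟩
  have hM0 : 0 ≤ M := by
    obtain ⟨x, hx⟩ := hne
    exact (hk0 x).trans (hM' x hx)
  obtain ⟨D, hD⟩ := hΩc.isBounded.exists_norm_le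
  have hγ : IsProbabilityMeasure γ := by
    constructor
    have : γ.map Prod.fst Set.univ = 1 := by rw [h₁]; exact measure_univ
    rwa [Measure.map_apply measurable_fst MeasurableSet.univ] at this
  have hγ1 : ∀ᵐ p ∂γ, p.1 ∈ Ω := by
    have : ∀ᵐ x ∂(γ.map Prod.fst), x ∈ Ω := by rw [h₁]; rwa [ae_iff]
    exact ae_of_ae_map measurable_fst.aemeasurable this
  have hγ2 : ∀ᵐ p ∂γ, p.2 ∈ Ω := by
    have : ∀ᵐ x ∂(γ.map Prod.snd), x ∈ Ω := by rw [h₂]; rwa [ae_iff]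
    exact ae_of_ae_map measurable_snd.aemeasurable this
  have hm1 : ∀ f : 𝔼 → ℝ, Measurable f → ∫ p, f p.1 ∂γ = ∫ x, f x ∂μ := fun f hf => by
    rw [← h₁, integral_map measurable_fst.aemeasurable hf.aestronglyMeasurable]
  have hm2 : ∀ f : 𝔼 → ℝ, Measurable f → ∫ p, f p.2 ∂γ = ∫ x, f x ∂ν := fun f hf => by
    rw [← h₂, integral_map measurable_snd.aemeasurable hf.aestronglyMeasurable]
  -- the total error below is `η (4 M + 1)`
  obtain ⟨η, hη, hηε⟩ : ∃ η > 0, η * (4 * M + 1) ≤ ε :=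
    ⟨ε / (4 * M + 1), by positivity, by rw [div_mul_cancel₀]; positivity⟩
  obtain ⟨q, hqΩ, hq1, hq2⟩ := exists_quantization hΩc hne hμ hν hη
  have hqm : Measurable fun x => ‖q x - x‖ := (q.measurable.sub measurable_id).norm
  let s : SimpleFunc (𝔼 × 𝔼) (𝔼 × 𝔼) :=
    (q.comp Prod.fst measurable_fst).pair (q.comp Prod.snd measurable_snd)
  have hs : ∀ p, s p = (q p.1, q p.2) := fun p => rfl
  obtain ⟨ρ₁, hρ₁, c₁⟩ := exists_segment_lift hΩc hΩ (γ := γ) (a := fun p => Pr p.1)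
    (b := fun p => (s p).1) (by fun_prop) (by fun_prop) (fun p => hPm _) (fun p => hqΩ _)
    hk hk0 hM'
  obtain ⟨ρ₂, hρ₂, c₂⟩ := exists_geodesic_lift hΩc hΩ (γ := γ) s
    (fun p => ⟨hqΩ _, hqΩ _⟩) hk hk0 hη
  obtain ⟨ρ₃, hρ₃, c₃⟩ := exists_segment_lift hΩc hΩ (γ := γ) (a := fun p => (s p).2)
    (b := fun p => Pr p.2) (by fun_prop) (by fun_prop) (fun p => hqΩ _) (fun p => hPm _)
    hk hk0 hM'
  have hρ := (hρ₁.add hΩc hρ₂).add hΩc hρ₃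
  obtain ⟨m, h, hflow, hcost⟩ := hρ.exists_flow hΩc hk hk0 (μ := μ) (ν := ν)
    (fun ψ hψ => by
      rw [← hm1 ψ hψ.measurable]
      refine integral_congr_ae ?_
      filter_upwards [hγ1] with p hp
      rw [hPx _ hp])
    (fun ψ hψ => by
      rw [← hm2 ψ hψ.measurable]
      refine integral_congr_ae ?_
      filter_upwards [hγ2] with p hp
      rw [hPx _ hp])
  refine ⟨m, h, hflow, hcost.trans ?_⟩
  have i₁ := integrable_lift_cost hΩc hρ₁.mem hρ₁.int hk
  have i₂ := integrable_lift_cost hΩc hρ₂.mem hρ₂.int hk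
  have i₃ := integrable_lift_cost hΩc hρ₃.mem hρ₃.int hk
  rw [integral_add_measure (i₁.add_measure i₂) i₃, integral_add_measure i₁ i₂]
  have e₁ : ∫ p, M * ‖(s p).1 - Pr p.1‖ ∂γ = M * ∫ x, ‖q x - x‖ ∂μ := by
    rw [integral_const_mul, ← hm1 _ hqm]
    congr 1
    refine integral_congr_ae ?_
    filter_upwards [hγ1] with p hp
    rw [hPx _ hp, hs]
  have e₃ : ∫ p, M * ‖Pr p.2 - (s p).2‖ ∂γ = M * ∫ x, ‖q x - x‖ ∂ν := by
    rw [integral_const_mul, ← hm2 _ hqm]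
    congr 1
    refine integral_congr_ae ?_
    filter_upwards [hγ2] with p hp
    rw [hPx _ hp, hs, norm_sub_rev]
  have j₁ : Integrable (fun p : 𝔼 × 𝔼 => ‖q p.1 - p.1‖) γ :=
    Integrable.of_bound (hqm.comp measurable_fst).aestronglyMeasurable (D + D) (by
      filter_upwards [hγ1] with p hp
      rw [norm_norm]
      exact (norm_sub_le _ _).trans (add_le_add (hD _ (hqΩ _)) (hD _ hp)))
  have j₂ : Integrable (fun p : 𝔼 × 𝔼 => ‖q p.2 - p.2‖) γ :=
    Integrable.of_bound (hqm.comp measurable_snd).aestronglyMeasurable (D + D) (by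
      filter_upwards [hγ2] with p hp
      rw [norm_norm]
      exact (norm_sub_le _ _).trans (add_le_add (hD _ (hqΩ _)) (hD _ hp)))
  have j₀ : Integrable (fun p : 𝔼 × 𝔼 => geodDist Ω k p.1 p.2) γ := by
    rw [← Measure.restrict_eq_self_of_ae_mem (s := Ω ×ˢ Ω) (μ := γ)
      (by filter_upwards [hγ1, hγ2] with p h1 h2 using ⟨h1, h2⟩)]
    exact (continuousOn_geodDist hΩc hΩ hk hk0).integrableOn_compact (hΩc.prod hΩc)
  have jₛ : Integrable (s.map fun u : 𝔼 × 𝔼 => geodDist Ω k u.1 u.2 + η) γ :=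
    SimpleFunc.integrable_of_isFiniteMeasure _
  have k₁ : Integrable (fun p : 𝔼 × 𝔼 => geodDist Ω k p.1 p.2 + M * ‖q p.1 - p.1‖) γ :=
    j₀.add (j₁.const_mul M)
  have k₂ : Integrable (fun p : 𝔼 × 𝔼 => geodDist Ω k p.1 p.2 + M * ‖q p.1 - p.1‖
      + M * ‖q p.2 - p.2‖) γ := k₁.add (j₂.const_mul M)
  have e₂ : ∫ p, (geodDist Ω k (s p).1 (s p).2 + η) ∂γ ≤ ∫ p, geodDist Ω k p.1 p.2 ∂γ
      + M * ∫ x, ‖q x - x‖ ∂μ + M * ∫ x, ‖q x - x‖ ∂ν + η := by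
    have : ∫ p, (geodDist Ω k (s p).1 (s p).2 + η) ∂γ ≤ ∫ p, (geodDist Ω k p.1 p.2
        + M * ‖q p.1 - p.1‖ + M * ‖q p.2 - p.2‖ + η) ∂γ := by
      refine integral_mono_ae jₛ (k₂.add (integrable_const η)) ?_
      filter_upwards [hγ1, hγ2] with p hp1 hp2
      have := geodDist_le_geodDist_add hΩ hk hk0 hM' hp1 hp2 (hqΩ p.1) (hqΩ p.2)
      rw [hs]
      simp only
      linarith
    rw [integral_add k₂ (integrable_const η), integral_add k₁ (j₂.const_mul M),
      integral_add j₀ (j₁.const_mul M), integral_const_mul, integral_const_mul,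
      hm1 (fun x => ‖q x - x‖) hqm, hm2 (fun x => ‖q x - x‖) hqm] at this
    simpa using this
  have hA := mul_le_mul_of_nonneg_left hq1.le hM0
  have hB := mul_le_mul_of_nonneg_left hq2.le hM0
  rw [e₁] at c₁
  rw [e₃] at c₃
  linarith

end Helpers

/-! ### Equality of the two values -/

/-- (Weighted Beckmann = Kantorovich for the geodesic distance `d_k`.)
For a continuous weight `k ≥ c₀ > 0` on a compact convex `Ω`, the minimal value of
`∫ k d|λ|` over vector measures `λ = h·m` (encoded by a finite positive measure `m` on `Ω` and
an integrable density `h`, so that `∫ k d|λ| = ∫ k ‖h‖ dm`) with `∇·λ = μ - ν` weakly, equals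
the minimal value of `∫ d_k(x,y) dγ` over transport plans `γ ∈ Π(μ,ν)`. -/
theorem stmt3 {d : ℕ} (Ω : Set (EuclideanSpace ℝ (Fin d)))
    (hΩc : IsCompact Ω) (hΩconv : Convex ℝ Ω) (hΩne : Ω.Nonempty)
    (k : EuclideanSpace ℝ (Fin d) → ℝ) (hk : ContinuousOn k Ω)
    (c₀ : ℝ) (hc₀ : 0 < c₀) (hklb : ∀ x ∈ Ω, c₀ ≤ k x)
    (μ ν : Measure (EuclideanSpace ℝ (Fin d)))
    [IsProbabilityMeasure μ] [IsProbabilityMeasure ν] (hμ : μ Ω = 1) (hν : ν Ω = 1) :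
    sInf {r : ℝ | ∃ (m : Measure (EuclideanSpace ℝ (Fin d)))
        (h : EuclideanSpace ℝ (Fin d) → EuclideanSpace ℝ (Fin d)),
        IsFiniteMeasure m ∧ m Ωᶜ = 0 ∧ Integrable h m ∧
        (∀ ψ : EuclideanSpace ℝ (Fin d) → ℝ, ContDiff ℝ 1 ψ →
          ∫ x, ⟪gradient ψ x, h x⟫ ∂m = ∫ x, ψ x ∂ν - ∫ x, ψ x ∂μ) ∧
        r = ∫ x, k x * ‖h x‖ ∂m}
      = sInf {r : ℝ | ∃ γ : Measure (EuclideanSpace ℝ (Fin d) × EuclideanSpace ℝ (Fin d)),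
          γ.map Prod.fst = μ ∧ γ.map Prod.snd = ν ∧
          r = ∫ p, geodDist Ω k p.1 p.2 ∂γ} := by
  have hμ' : μ Ωᶜ = 0 := (prob_compl_eq_zero_iff hΩc.measurableSet).2 hμ
  have hν' : ν Ωᶜ = 0 := (prob_compl_eq_zero_iff hΩc.measurableSet).2 hν
  obtain ⟨Pr, hPm, hPx, hPl⟩ := exists_proj hΩc hΩconv hΩne
  have hPc : Continuous Pr := (LipschitzWith.of_dist_le_mul (K := 1) fun u v => by
    rw [dist_eq_norm, dist_eq_norm, NNReal.coe_one, one_mul]; exact hPl u v).continuous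
  -- extend `k` continuously to the whole space by composing with the projection onto `Ω`
  obtain ⟨k', hk', hk'0, hkk'⟩ : ∃ k' : EuclideanSpace ℝ (Fin d) → ℝ, Continuous k' ∧
      (∀ x, 0 ≤ k' x) ∧ ∀ x ∈ Ω, k x = k' x :=
    ⟨fun x => k (Pr x), hk.comp_continuous hPc hPm, fun x => hc₀.le.trans (hklb _ (hPm x)),
      fun x hx => congrArg k (hPx x hx).symm⟩
  have hgeod : ∀ x y, geodDist Ω k x y = geodDist Ω k' x y := fun x y => by
    refine congrArg sInf (Set.ext fun r => exists_congr fun ω => and_congr_right fun _ =>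
      and_congr_right fun _ => and_congr_right fun _ => and_congr_right fun hω => ?_)
    rw [setIntegral_congr_fun measurableSet_Icc fun t ht => by
      show k (ω t) * ‖deriv ω t‖ = k' (ω t) * ‖deriv ω t‖
      rw [hkk' _ (hω t ht)]]
  have hcost : ∀ (m : Measure (EuclideanSpace ℝ (Fin d)))
      (h : EuclideanSpace ℝ (Fin d) → EuclideanSpace ℝ (Fin d)), m Ωᶜ = 0 →
      ∫ x, k x * ‖h x‖ ∂m = ∫ x, k' x * ‖h x‖ ∂m := fun m h hm => by
    have hmΩ : ∀ᵐ x ∂m, x ∈ Ω := by rwa [ae_iff]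
    refine integral_congr_ae ?_
    filter_upwards [hmΩ] with x hx
    rw [hkk' x hx]
  simp only [hgeod]
  refine le_antisymm (le_csInf ?_ ?_) (le_csInf ?_ ?_)
  · exact ⟨_, μ.prod ν, by simp, by simp, rfl⟩
  · rintro _ ⟨γ, h₁, h₂, rfl⟩
    refine le_of_forall_pos_le_add fun ε hε => ?_
    obtain ⟨m, h, ⟨hfin, hm, hh, hdiv⟩, hle⟩ :=
      exists_flow_le_plan hΩc hΩconv hΩne hk' hk'0 hμ' hν' h₁ h₂ hε
    refine csInf_le_of_le ⟨0, ?_⟩ ⟨m, h, hfin, hm, hh, hdiv, rfl⟩ ((hcost m h hm).trans_le hle)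
    rintro _ ⟨m, h, -, hm, -, -, rfl⟩
    rw [hcost m h hm]
    exact integral_nonneg fun x => mul_nonneg (hk'0 x) (norm_nonneg _)
  · obtain ⟨m, h, ⟨hfin, hm, hh, hdiv⟩, -⟩ := exists_flow_le_plan hΩc hΩconv hΩne hk' hk'0 hμ' hν'
      (γ := μ.prod ν) (by simp) (by simp) one_pos
    exact ⟨_, m, h, hfin, hm, hh, hdiv, rfl⟩
  · rintro _ ⟨m, h, hfin, hm, hh, hdiv, rfl⟩
    obtain ⟨γ, h₁, h₂, hle⟩ := exists_plan_le_flow hΩc hΩconv hΩne hk' hk'0 hμ' hν'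
      ⟨hfin, hm, hh, hdiv⟩
    refine csInf_le_of_le ⟨0, ?_⟩ ⟨γ, h₁, h₂, rfl⟩ (hle.trans_eq (hcost m h hm).symm)
    rintro _ ⟨γ, -, -, rfl⟩
    exact integral_nonneg fun p => geodDist_nonneg Ω hk'0 p.1 p.2
end

section
/- Consider a finite graph with edge set E, finite classes of paths C(s,d) from sources s to destinations d, and a nonempty closed convex set Γ of demand matrices. Let H : [0,∞) → ℝ be convex, increasing and differentiable, and suppose q (with q_ω ≥ 0 and γ_q ∈ Γ) minimizes J(q) = Σ_{e∈E} H(i_q(e)) over all admissible strategies. Define the congested metric ξ(e) := H'(i_q(e)), the length L_ξ(ω) := Σ_{e∈ω} ξ(e), and the induced distance d_ξ(s,d) := min{ L_ξ(ω̃) : ω̃ ∈ C(s,d) }. Then q is a Wardrop equilibrium for g = H': for every pair (s,d) and every path ω ∈ C(s,d) with q_ω > 0, one has L_ξ(ω) = d_ξ(s,d). -/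
/-!
Moving a small mass `t` from a used path `ω₀` to a competing path `ω'` with the same source and
destination keeps the strategy nonnegative (for `t ≤ q ω₀`) and does not change the demand, so the
perturbed strategy is admissible. By minimality, the right derivative of the cost at `t = 0` is
nonnegative (`derivWithin_nonneg_of_min`). That derivative is `L_ξ(ω') - L_ξ(ω₀)`, because the
intensity of `e` changes at rate `1_{e ∈ ω'} - 1_{e ∈ ω₀}`. Hence `ω₀` has minimal length.
-/

/-- The traffic intensity on edge `e` induced by the repartition strategy `q`:
`i_q(e) = Σ_{ω ∋ e} q_ω`. -/
def trafficIntensity {Edge Path : Type*} [Fintype Path] [DecidableEq Edge]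
    (edges : Path → Finset Edge) (q : Path → ℝ) (e : Edge) : ℝ :=
  ∑ ω, if e ∈ edges ω then q ω else 0

/-- The demand induced by the strategy `q`: `γ_q(s,d) = Σ_{ω ∈ C(s,d)} q_ω`. -/
def inducedDemand {Src Dst Path : Type*} [Fintype Path] [DecidableEq Src] [DecidableEq Dst]
    (pair : Path → Src × Dst) (q : Path → ℝ) (sd : Src × Dst) : ℝ :=
  ∑ ω, if pair ω = sd then q ω else 0

/-- The strategy obtained from `q` by moving the mass `t` from the path `a` to the path `b`. -/
noncomputable def transferMass {Path : Type*} (q : Path → ℝ) (a b : Path) (t : ℝ) : Path → ℝ :=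
  open Classical in fun ω => q ω + t * ((if ω = b then 1 else 0) - (if ω = a then 1 else 0))

lemma transferMass_nonneg {Path : Type*} {q : Path → ℝ} (hq : ∀ ω, 0 ≤ q ω) (a b : Path)
    {t : ℝ} (ht : 0 ≤ t) (hta : t ≤ q a) (ω : Path) : 0 ≤ transferMass q a b t ω := by
  have := hq ω
  unfold transferMass
  split_ifs with hb ha ha
  · simpa using this
  · linarith
  · subst ha
    linarith
  · linarith

/-- Both the intensity on an edge and the demand of a pair are sums of `q` over the paths
satisfying a predicate `P`; this is how such a sum reacts to a transfer of mass. -/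
lemma sum_ite_transferMass {Path : Type*} [Fintype Path] (P : Path → Prop) [DecidablePred P]
    (q : Path → ℝ) (a b : Path) (t : ℝ) :
    (∑ ω, if P ω then transferMass q a b t ω else 0)
      = (∑ ω, if P ω then q ω else 0)
        + t * ((if P b then 1 else 0) - (if P a then 1 else 0)) := by
  classical
  have key : ∀ ω, (if P ω then transferMass q a b t ω else 0)
      = (if P ω then q ω else 0) + t * ((if ω = b then (if P b then 1 else 0) else 0)
        - (if ω = a then (if P a then 1 else 0) else 0)) := by
    intro ω
    unfold transferMass
    by_cases hb : ω = b <;> by_cases ha : ω = a <;> by_cases hP : P ω <;> grind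
  simp only [key, Finset.sum_add_distrib, ← Finset.mul_sum, Finset.sum_sub_distrib,
    Finset.sum_ite_eq', Finset.mem_univ, if_true]

lemma derivWithin_nonneg_of_min {F : ℝ → ℝ} {F' a : ℝ} (ha : 0 < a)
    (hF : HasDerivWithinAt F F' (Set.Icc 0 a) 0) (hmin : ∀ t ∈ Set.Icc 0 a, F 0 ≤ F t) :
    0 ≤ F' := by
  have h := (hasDerivWithinAt_iff_tendsto_slope' (by simp)).1 (hF.mono Set.Ioc_subset_Icc_self)
  have : (nhdsWithin (0 : ℝ) (Set.Ioc 0 a)).NeBot := by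
    rw [nhdsWithin_Ioc_eq_nhdsGT ha]
    infer_instance
  refine ge_of_tendsto h ?_
  filter_upwards [self_mem_nhdsWithin] with t ht
  rw [slope_def_field]
  have := hmin t (Set.Ioc_subset_Icc_self ht)
  exact div_nonneg (by linarith) (by linarith [ht.1])

/-- (Optimizers are Wardrop equilibria.)
If `q` minimizes `J(q) = Σ_e H(i_q(e))` among admissible strategies (`q ≥ 0`, `γ_q ∈ Γ`),
then, for the congested metric `ξ(e) = H'(i_q(e))` with lengths `L_ξ(ω) = Σ_{e∈ω} ξ(e)` and
distances `d_ξ(s,d) = min {L_ξ(ω') : ω' ∈ C(s,d)}`, every actually used path (`q_ω > 0`)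
realizes the minimal congested length: `L_ξ(ω) = d_ξ(s,d)` where `(s,d)` is the pair of `ω`. -/
theorem stmt5 {Edge Src Dst Path : Type*}
    [Fintype Edge] [Fintype Src] [Fintype Dst] [Fintype Path]
    [DecidableEq Edge] [DecidableEq Src] [DecidableEq Dst]
    (edges : Path → Finset Edge) (pair : Path → Src × Dst)
    (Γ : Set (Src × Dst → ℝ)) (hΓne : Γ.Nonempty) (hΓcl : IsClosed Γ) (hΓcx : Convex ℝ Γ)
    (hΓnn : ∀ γ ∈ Γ, ∀ sd, 0 ≤ γ sd)
    (H : ℝ → ℝ) (hHcx : ConvexOn ℝ (Set.Ici 0) H) (hHmono : MonotoneOn H (Set.Ici 0))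
    (hHd : DifferentiableOn ℝ H (Set.Ici 0))
    (q : Path → ℝ) (hq : ∀ ω, 0 ≤ q ω) (hqΓ : inducedDemand pair q ∈ Γ)
    (hqmin : ∀ q' : Path → ℝ, (∀ ω, 0 ≤ q' ω) → inducedDemand pair q' ∈ Γ →
      ∑ e, H (trafficIntensity edges q e) ≤ ∑ e, H (trafficIntensity edges q' e)) :
    ∀ ω₀ : Path, 0 < q ω₀ →
      (∑ e ∈ edges ω₀, derivWithin H (Set.Ici 0) (trafficIntensity edges q e))
        = sInf {r : ℝ | ∃ ω' : Path, pair ω' = pair ω₀ ∧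
            r = ∑ e ∈ edges ω', derivWithin H (Set.Ici 0) (trafficIntensity edges q e)} := by
  intro ω₀ hω₀
  set ξ : Edge → ℝ := fun e => derivWithin H (Set.Ici 0) (trafficIntensity edges q e) with hξ
  have hle : ∀ ω', pair ω' = pair ω₀ → ∑ e ∈ edges ω₀, ξ e ≤ ∑ e ∈ edges ω', ξ e := by
    intro ω' hpair
    -- `c e` is the rate of change of the intensity on `e` under the transfer.
    let c : Edge → ℝ := fun e => (if e ∈ edges ω' then 1 else 0) - (if e ∈ edges ω₀ then 1 else 0)
    have hint : ∀ t e, trafficIntensity edges (transferMass q ω₀ ω' t) e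
        = trafficIntensity edges q e + t * c e := fun t e =>
      sum_ite_transferMass (fun ω => e ∈ edges ω) q ω₀ ω' t
    have hdem : ∀ t, inducedDemand pair (transferMass q ω₀ ω' t) = inducedDemand pair q := by
      intro t
      funext sd
      refine (sum_ite_transferMass (fun ω => pair ω = sd) q ω₀ ω' t).trans ?_
      simp [hpair, inducedDemand]
    have hnn : ∀ t ∈ Set.Icc 0 (q ω₀), ∀ e, 0 ≤ trafficIntensity edges q e + t * c e := by
      intro t ht e
      rw [← hint]
      refine Finset.sum_nonneg fun ω _ => ?_
      split_ifs
      · exact transferMass_nonneg hq ω₀ ω' ht.1 ht.2 ω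
      · exact le_rfl
    have hder : HasDerivWithinAt (fun t => ∑ e, H (trafficIntensity edges q e + t * c e))
        (∑ e, ξ e * c e) (Set.Icc 0 (q ω₀)) 0 := by
      refine HasDerivWithinAt.fun_sum fun e _ => ?_
      have hlin : HasDerivWithinAt (fun t : ℝ => trafficIntensity edges q e + t * c e) (c e)
          (Set.Icc 0 (q ω₀)) 0 := by
        simpa using (((hasDerivAt_id (0 : ℝ)).mul_const (c e)).const_add
          (trafficIntensity edges q e)).hasDerivWithinAt
      have h0 : 0 ≤ trafficIntensity edges q e := by
        simpa using hnn 0 ⟨le_rfl, hω₀.le⟩ e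
      have hH : HasDerivWithinAt H (ξ e) (Set.Ici 0)
          (trafficIntensity edges q e + 0 * c e) := by
        simpa [hξ] using (hHd _ h0).hasDerivWithinAt
      exact hH.comp (0 : ℝ) hlin fun t ht => hnn t ht e
    have hpos := derivWithin_nonneg_of_min hω₀ hder fun t ht => by
      have := hqmin (transferMass q ω₀ ω' t) (transferMass_nonneg hq ω₀ ω' ht.1 ht.2)
        (by rw [hdem]; exact hqΓ)
      simpa [hint] using this
    have hsum : ∑ e, ξ e * c e = ∑ e ∈ edges ω', ξ e - ∑ e ∈ edges ω₀, ξ e := by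
      simp [c, mul_sub, Finset.sum_sub_distrib]
    linarith
  have hleast : IsLeast {r : ℝ | ∃ ω' : Path, pair ω' = pair ω₀ ∧ r = ∑ e ∈ edges ω', ξ e}
      (∑ e ∈ edges ω₀, ξ e) := by
    refine ⟨⟨ω₀, rfl, rfl⟩, ?_⟩
    rintro r ⟨ω', hω', rfl⟩
    exact hle ω' hω'
  exact hleast.csInf_eq.symm
end

section
/- In the discrete congested traffic setting (finite edge set E, finite path classes C(s,d), nonempty closed convex set Γ of demand matrices, H : [0,∞) → ℝ convex, increasing and differentiable), suppose q minimizes J(q) = Σ_{e∈E} H(i_q(e)) over all admissible strategies. Set ξ(e) := H'(i_q(e)) and d_ξ(s,d) := min{ Σ_{e∈ω} ξ(e) : ω ∈ C(s,d) }. Then the induced demand γ_q minimizes the Kantorovich-type cost γ ↦ Σ_{s,d} d_ξ(s,d) γ(s,d) over all γ ∈ Γ. In particular, when Γ = Π(μ,ν) is the set of couplings of two given marginals μ and ν on the sets of sources and destinations, γ_q solves the Kantorovich optimal transport problem for the cost d_ξ. -/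
/-- The congested distance `d_ξ(s,d) = min {Σ_{e∈ω} ξ(e) : ω ∈ C(s,d)}` associated with an
edge metric `ξ`. -/
noncomputable def congDist {Edge Src Dst Path : Type*} [Fintype Path] [DecidableEq Edge]
    (edges : Path → Finset Edge) (pair : Path → Src × Dst) (ξ : Edge → ℝ)
    (sd : Src × Dst) : ℝ :=
  sInf {r : ℝ | ∃ ω : Path, pair ω = sd ∧ r = ∑ e ∈ edges ω, ξ e}

lemma sum_mul_inducedDemand {Src Dst Path : Type*} [Fintype Src] [Fintype Dst] [Fintype Path]
    [DecidableEq Src] [DecidableEq Dst] (pair : Path → Src × Dst) (c : Src × Dst → ℝ)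
    (q : Path → ℝ) :
    ∑ sd, c sd * inducedDemand pair q sd = ∑ ω, c (pair ω) * q ω := by
  simp only [inducedDemand, Finset.mul_sum, mul_ite, mul_zero]
  rw [Finset.sum_comm]
  simp

lemma sum_mul_trafficIntensity {Edge Path : Type*} [Fintype Edge] [Fintype Path]
    [DecidableEq Edge] (edges : Path → Finset Edge) (ξ : Edge → ℝ) (q : Path → ℝ) :
    ∑ e, ξ e * trafficIntensity edges q e = ∑ ω, (∑ e ∈ edges ω, ξ e) * q ω := by
  simp only [trafficIntensity, Finset.mul_sum, mul_ite, mul_zero, Finset.sum_mul]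
  rw [Finset.sum_comm]
  simp

lemma trafficIntensity_nonneg {Edge Path : Type*} [Fintype Path] [DecidableEq Edge]
    (edges : Path → Finset Edge) (q : Path → ℝ) (hq : ∀ ω, 0 ≤ q ω) (e : Edge) :
    0 ≤ trafficIntensity edges q e :=
  Finset.sum_nonneg fun ω _ => by split_ifs <;> simp [hq]

lemma trafficIntensity_segment {Edge Path : Type*} [Fintype Path] [DecidableEq Edge]
    (edges : Path → Finset Edge) (q q' : Path → ℝ) (t : ℝ) (e : Edge) :
    trafficIntensity edges (fun ω => q ω + t * (q' ω - q ω)) e =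
      trafficIntensity edges q e
        + t * (trafficIntensity edges q' e - trafficIntensity edges q e) := by
  simp only [trafficIntensity, ← Finset.sum_sub_distrib, Finset.mul_sum, ← Finset.sum_add_distrib]
  refine Finset.sum_congr rfl fun ω _ => ?_
  split_ifs <;> simp

lemma inducedDemand_segment {Src Dst Path : Type*} [Fintype Path]
    [DecidableEq Src] [DecidableEq Dst] (pair : Path → Src × Dst) (q q' : Path → ℝ) (t : ℝ) :
    inducedDemand pair (fun ω => q ω + t * (q' ω - q ω)) =
      inducedDemand pair q + t • (inducedDemand pair q' - inducedDemand pair q) := by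
  funext sd
  simp only [inducedDemand, Pi.add_apply, Pi.smul_apply, Pi.sub_apply, smul_eq_mul,
    ← Finset.sum_sub_distrib, Finset.mul_sum, ← Finset.sum_add_distrib]
  refine Finset.sum_congr rfl fun ω _ => ?_
  split_ifs <;> simp

/-- Variational inequality for a minimizer on a segment: if `Σ_e H(a_e + t (b_e - a_e))` is minimal
over `t ∈ [0,1]` at `t = 0`, then the directional derivative of `Σ_e H` at `a` towards `b` is
nonnegative. -/
lemma first_order_segment {Edge : Type*} [Fintype Edge] (H : ℝ → ℝ)
    (hHd : DifferentiableOn ℝ H (Set.Ici 0)) (a b : Edge → ℝ) (ha : ∀ e, 0 ≤ a e)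
    (hb : ∀ e, 0 ≤ b e)
    (hmin : ∀ t ∈ Set.Icc (0 : ℝ) 1, ∑ e, H (a e) ≤ ∑ e, H (a e + t * (b e - a e))) :
    0 ≤ ∑ e, derivWithin H (Set.Ici 0) (a e) * (b e - a e) := by
  have hder : HasDerivWithinAt (fun t : ℝ => ∑ e, H (a e + t * (b e - a e)))
      (∑ e, derivWithin H (Set.Ici 0) (a e) * (b e - a e)) (Set.Icc 0 1) 0 := by
    refine HasDerivWithinAt.fun_sum fun e _ => ?_
    have h1 : HasDerivWithinAt (fun t : ℝ => a e + t * (b e - a e)) (b e - a e)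
        (Set.Icc 0 1) 0 := by
      simpa using (((hasDerivWithinAt_id (0 : ℝ) (Set.Icc 0 1)).mul_const
        (b e - a e)).const_add (a e))
    have h2 : HasDerivWithinAt H (derivWithin H (Set.Ici 0) (a e)) (Set.Ici 0)
        ((fun t : ℝ => a e + t * (b e - a e)) 0) := by
      simpa using (hHd (a e) (ha e)).hasDerivWithinAt
    refine h2.comp (0 : ℝ) h1 fun t ht => ?_
    have h3 := mul_nonneg (sub_nonneg.2 ht.2) (ha e)
    have h4 := mul_nonneg ht.1 (hb e)
    simp only [Set.mem_Ici]
    linarith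
  have hloc : IsLocalMinOn (fun t : ℝ => ∑ e, H (a e + t * (b e - a e))) (Set.Icc 0 1) 0 := by
    refine IsMinOn.localize fun t ht => ?_
    simpa using hmin t ht
  have hcone : (1 : ℝ) ∈ posTangentConeAt (Set.Icc (0 : ℝ) 1) 0 := by
    apply mem_posTangentConeAt_of_segment_subset
    simp [segment_eq_Icc]
  simpa using hloc.hasFDerivWithinAt_nonneg hder.hasFDerivWithinAt hcone

/-- A minimizing strategy also minimizes the linearized cost, i.e. the total length of the paths
used, measured with the edge lengths `H'(i_q(e))`. -/
lemma first_order_condition {Edge Src Dst Path : Type*} [Fintype Edge] [Fintype Path]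
    [DecidableEq Edge] [DecidableEq Src] [DecidableEq Dst]
    (edges : Path → Finset Edge) (pair : Path → Src × Dst)
    (Γ : Set (Src × Dst → ℝ)) (hΓcx : Convex ℝ Γ)
    (H : ℝ → ℝ) (hHd : DifferentiableOn ℝ H (Set.Ici 0))
    (q : Path → ℝ) (hq : ∀ ω, 0 ≤ q ω) (hqΓ : inducedDemand pair q ∈ Γ)
    (hqmin : ∀ q' : Path → ℝ, (∀ ω, 0 ≤ q' ω) → inducedDemand pair q' ∈ Γ →
      ∑ e, H (trafficIntensity edges q e) ≤ ∑ e, H (trafficIntensity edges q' e))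
    (q' : Path → ℝ) (hq' : ∀ ω, 0 ≤ q' ω) (hq'Γ : inducedDemand pair q' ∈ Γ) :
    ∑ ω, (∑ e ∈ edges ω, derivWithin H (Set.Ici 0) (trafficIntensity edges q e)) * q ω
      ≤ ∑ ω, (∑ e ∈ edges ω, derivWithin H (Set.Ici 0) (trafficIntensity edges q e)) * q' ω := by
  have key := first_order_segment H hHd (trafficIntensity edges q) (trafficIntensity edges q')
    (trafficIntensity_nonneg edges q hq) (trafficIntensity_nonneg edges q' hq') ?_
  · simp only [mul_sub, Finset.sum_sub_distrib] at key
    rw [sum_mul_trafficIntensity edges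
        (fun e => derivWithin H (Set.Ici 0) (trafficIntensity edges q e)),
      sum_mul_trafficIntensity edges
        (fun e => derivWithin H (Set.Ici 0) (trafficIntensity edges q e))] at key
    linarith
  · intro t ht
    have h := hqmin (fun ω => q ω + t * (q' ω - q ω)) (fun ω => ?_) ?_
    · simpa only [trafficIntensity_segment] using h
    · have h3 := mul_nonneg (sub_nonneg.2 ht.2) (hq ω)
      have h4 := mul_nonneg ht.1 (hq' ω)
      linarith
    · rw [inducedDemand_segment]
      exact hΓcx.add_smul_sub_mem hqΓ hq'Γ ht

lemma finite_lengths {Edge Src Dst Path : Type*} [Fintype Path]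
    (edges : Path → Finset Edge) (pair : Path → Src × Dst) (ξ : Edge → ℝ) (sd : Src × Dst) :
    {r : ℝ | ∃ ω : Path, pair ω = sd ∧ r = ∑ e ∈ edges ω, ξ e}.Finite := by
  refine (Set.finite_range fun ω : Path => ∑ e ∈ edges ω, ξ e).subset ?_
  rintro r ⟨ω, -, rfl⟩
  exact ⟨ω, rfl⟩

lemma congDist_le {Edge Src Dst Path : Type*} [Fintype Path] [DecidableEq Edge]
    (edges : Path → Finset Edge) (pair : Path → Src × Dst) (ξ : Edge → ℝ) (ω : Path) :
    congDist edges pair ξ (pair ω) ≤ ∑ e ∈ edges ω, ξ e :=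
  csInf_le (finite_lengths edges pair ξ _).bddBelow ⟨ω, rfl, rfl⟩

lemma exists_shortest_path {Edge Src Dst Path : Type*} [Fintype Path] [DecidableEq Edge]
    (edges : Path → Finset Edge) (pair : Path → Src × Dst) (ξ : Edge → ℝ) (ω : Path) :
    ∃ ω' : Path, pair ω' = pair ω ∧ congDist edges pair ξ (pair ω) = ∑ e ∈ edges ω', ξ e := by
  have hne : {r : ℝ | ∃ ω' : Path, pair ω' = pair ω ∧ r = ∑ e ∈ edges ω', ξ e}.Nonempty :=
    ⟨_, ω, rfl, rfl⟩
  exact hne.csInf_mem (finite_lengths edges pair ξ (pair ω))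

/-- (The induced demand of an optimal strategy solves a Kantorovich problem.)
If `q` minimizes `J(q) = Σ_e H(i_q(e))` among admissible strategies and every demand `γ ∈ Γ`
is achievable by some nonnegative strategy, then `γ_q` minimizes the Kantorovich-type cost
`γ ↦ Σ_{s,d} d_ξ(s,d) γ(s,d)` over `Γ`, where `ξ(e) = H'(i_q(e))`.  (In particular, when
`Γ = Π(μ,ν)` is the set of couplings of given marginals, `γ_q` solves the Kantorovich
optimal transport problem for the cost `d_ξ`.) -/
theorem stmt6 {Edge Src Dst Path : Type*}
    [Fintype Edge] [Fintype Src] [Fintype Dst] [Fintype Path]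
    [DecidableEq Edge] [DecidableEq Src] [DecidableEq Dst]
    (edges : Path → Finset Edge) (pair : Path → Src × Dst)
    (Γ : Set (Src × Dst → ℝ)) (hΓne : Γ.Nonempty) (hΓcl : IsClosed Γ) (hΓcx : Convex ℝ Γ)
    (hΓnn : ∀ γ ∈ Γ, ∀ sd, 0 ≤ γ sd)
    (hach : ∀ γ ∈ Γ, ∃ q' : Path → ℝ, (∀ ω, 0 ≤ q' ω) ∧ inducedDemand pair q' = γ)
    (H : ℝ → ℝ) (hHcx : ConvexOn ℝ (Set.Ici 0) H) (hHmono : MonotoneOn H (Set.Ici 0))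
    (hHd : DifferentiableOn ℝ H (Set.Ici 0))
    (q : Path → ℝ) (hq : ∀ ω, 0 ≤ q ω) (hqΓ : inducedDemand pair q ∈ Γ)
    (hqmin : ∀ q' : Path → ℝ, (∀ ω, 0 ≤ q' ω) → inducedDemand pair q' ∈ Γ →
      ∑ e, H (trafficIntensity edges q e) ≤ ∑ e, H (trafficIntensity edges q' e)) :
    ∀ γ ∈ Γ,
      ∑ sd : Src × Dst,
          congDist edges pair (fun e => derivWithin H (Set.Ici 0) (trafficIntensity edges q e)) sd
            * inducedDemand pair q sd
        ≤ ∑ sd : Src × Dst,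
            congDist edges pair (fun e => derivWithin H (Set.Ici 0) (trafficIntensity edges q e)) sd
              * γ sd := by
  intro γ hγ
  classical
  obtain ⟨p, hp, rfl⟩ := hach γ hγ
  set ξ : Edge → ℝ := fun e => derivWithin H (Set.Ici 0) (trafficIntensity edges q e) with hξ
  choose σ hσpair hσ using exists_shortest_path edges pair ξ
  -- The strategy `p` with the mass of each path `ω` moved to the shortest path `σ ω`.
  let p' : Path → ℝ := fun ω' => ∑ ω, if σ ω = ω' then p ω else 0
  have hsum : ∀ f : Path → ℝ, ∑ ω', f ω' * p' ω' = ∑ ω, f (σ ω) * p ω := by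
    intro f
    simp only [p', Finset.mul_sum, mul_ite, mul_zero]
    rw [Finset.sum_comm]
    simp
  have hp' : ∀ ω, 0 ≤ p' ω := fun ω =>
    Finset.sum_nonneg fun ω' _ => by split_ifs <;> simp [hp]
  have hdem : inducedDemand pair p' = inducedDemand pair p := by
    funext sd
    simpa [inducedDemand, hσpair] using hsum fun ω => if pair ω = sd then 1 else 0
  have hfo := first_order_condition edges pair Γ hΓcx H hHd q hq hqΓ hqmin p' hp' (hdem ▸ hγ)
  rw [hsum fun ω => ∑ e ∈ edges ω, derivWithin H (Set.Ici 0) (trafficIntensity edges q e)] at hfo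
  rw [sum_mul_inducedDemand, sum_mul_inducedDemand]
  calc ∑ ω, congDist edges pair ξ (pair ω) * q ω
      ≤ ∑ ω, (∑ e ∈ edges ω, ξ e) * q ω :=
        Finset.sum_le_sum fun ω _ =>
          mul_le_mul_of_nonneg_right (congDist_le edges pair ξ ω) (hq ω)
    _ ≤ ∑ ω, (∑ e ∈ edges (σ ω), ξ e) * p ω := hfo
    _ = ∑ ω, congDist edges pair ξ (pair ω) * p ω := by simp only [hσ]
end

section
/- Let Ω ⊂ ℝ^d be a compact set, p ≥ 1, and let μ, μ_1, ν ∈ P(Ω). Assume the Kantorovich potential for the transport from μ to ν with cost c(x,y)=|x−y|^p is unique up to additive constants (for instance, μ absolutely continuous with support equal to Ω). Set μ_ε := (1−ε)μ + ε μ_1 for ε ∈ [0,1]. Then the one-sided derivative of the Wasserstein cost along this perturbation is given by the Kantorovich potential: lim_{ε → 0^+} [W_p^p(μ_ε, ν) − W_p^p(μ, ν)] / ε = ∫_Ω ψ_{μ,ν} d(μ_1 − μ), where ψ_{μ,ν} is a Kantorovich potential for the transport from μ to ν with cost |x−y|^p. -/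
/-!
The lower bound `W(μ_ε) ≥ W(μ) + ε ∫ ψ d(μ₁ - μ)` is weak duality (`dual_le_Wpp`) for the
admissible pair `(ψ, ψ^c)`, tested against the marginals `μ_ε, ν`.

For the upper bound, strong duality for `(μ_ε, ν)` provides functions `f_ε` with
`W(μ_ε) ≤ ∫ f_ε dμ_ε + ∫ f_ε^c dν + ε²`. Together with weak duality for `(μ, ν)` this gives
`W(μ_ε) - W(μ) ≤ ε ∫ f_ε d(μ₁ - μ) + ε²`, and it also shows that `f_ε` almost maximizes the dual
problem for `(μ, ν)`. The `f_ε` can be chosen as normalized `c`-transforms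
(`exists_almost_maximizer`), which lie in a set that is compact for locally uniform convergence
(`isCompact_normalizedPotentials`). The dual functional is continuous on that set and its
maximizers all equal `ψ` up to a constant on `Ω`, so `∫ f_ε d(μ₁ - μ)` is eventually below
`∫ ψ d(μ₁ - μ) + η` for every `η > 0`.

Strong duality (`exists_plan_duality`) is obtained from Hahn–Banach and
Riesz–Markov–Kakutani: a linear functional on `C(X × X)` dominated by
`f ↦ inf {∫ φ dμ + ∫ χ dν : f ≤ φ ⊕ χ}` is positive and has the prescribed marginals, so it is
integration against a transport plan; choosing it to touch the sublinear functional at `-c` makes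
the plan optimal.
-/

open MeasureTheory
open scoped ENNReal

/-- The Kantorovich minimal cost `W_p^p(μ,ν) = inf {∫ |x-y|^p dγ : γ ∈ Π(μ,ν)}`. -/
noncomputable def Wpp {d : ℕ} (p : ℝ) (μ ν : Measure (EuclideanSpace ℝ (Fin d))) : ℝ :=
  sInf {r : ℝ | ∃ γ : Measure (EuclideanSpace ℝ (Fin d) × EuclideanSpace ℝ (Fin d)),
    γ.map Prod.fst = μ ∧ γ.map Prod.snd = ν ∧ r = ∫ q, ‖q.1 - q.2‖ ^ p ∂γ}

/-- The `c`-transform `ψ^c(y) = min_{x ∈ Ω} (|x-y|^p - ψ(x))`. -/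
noncomputable def ctransform {d : ℕ} (p : ℝ) (Ω : Set (EuclideanSpace ℝ (Fin d)))
    (ψ : EuclideanSpace ℝ (Fin d) → ℝ) (y : EuclideanSpace ℝ (Fin d)) : ℝ :=
  sInf {r : ℝ | ∃ x ∈ Ω, r = ‖x - y‖ ^ p - ψ x}

/-! ### Kantorovich duality on a compact metric space -/

section Duality

set_option linter.unusedSectionVars false

variable {X : Type*} [MetricSpace X] [CompactSpace X] [SecondCountableTopology X]
  [MeasurableSpace X] [BorelSpace X]

/-- The values `∫ φ dμ + ∫ χ dν` of the pairs of continuous functions with `f ≤ φ ⊕ χ`. -/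
def superValues (μ ν : Measure X) (f : C(X × X, ℝ)) : Set ℝ :=
  {r | ∃ φ χ : C(X, ℝ), (∀ x y, f (x, y) ≤ φ x + χ y) ∧ r = ∫ x, φ x ∂μ + ∫ y, χ y ∂ν}

/-- The sublinear functional `f ↦ inf {∫ φ dμ + ∫ χ dν : f ≤ φ ⊕ χ}` on `C(X × X)`. -/
noncomputable def superValue (μ ν : Measure X) (f : C(X × X, ℝ)) : ℝ :=
  sInf (superValues μ ν f)

lemma integrable_cont {Y : Type*} [TopologicalSpace Y] [CompactSpace Y]
    [MeasurableSpace Y] [BorelSpace Y] (μ : Measure Y) [IsFiniteMeasure μ]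
    (φ : C(Y, ℝ)) : Integrable (fun x => φ x) μ :=
  φ.continuous.integrable_of_hasCompactSupport (HasCompactSupport.of_compactSpace _)

variable (μ ν : Measure X) [IsProbabilityMeasure μ] [IsProbabilityMeasure ν]

lemma le_of_forall_le_add (φ χ : C(X, ℝ)) (m : ℝ) (h : ∀ x y, m ≤ φ x + χ y) :
    m ≤ ∫ x, φ x ∂μ + ∫ y, χ y ∂ν := by
  have h1 : ∀ y, m - χ y ≤ ∫ x, φ x ∂μ := by
    intro y
    have := integral_mono (integrable_const (m - χ y)) (integrable_cont μ φ)
      (fun x => by linarith [h x y])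
    simpa using this
  have := integral_mono (integrable_const (m - ∫ x, φ x ∂μ)) (integrable_cont ν χ)
      (fun y => by linarith [h1 y])
  have h2 : m - ∫ x, φ x ∂μ ≤ ∫ y, χ y ∂ν := by simpa using this
  linarith

lemma superValues_bddBelow (f : C(X × X, ℝ)) : BddBelow (superValues μ ν f) := by
  refine ⟨-‖f‖, ?_⟩
  rintro _ ⟨φ, χ, h, rfl⟩
  refine le_of_forall_le_add μ ν φ χ _ fun x y => le_trans ?_ (h x y)
  exact (abs_le.1 (f.norm_coe_le_norm (x, y))).1

lemma superValues_nonempty (f : C(X × X, ℝ)) : (superValues μ ν f).Nonempty :=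
  ⟨_, ContinuousMap.const X ‖f‖, 0, fun x y => by
    simpa using (abs_le.1 (f.norm_coe_le_norm (x, y))).2, rfl⟩

lemma superValue_le {f : C(X × X, ℝ)} (φ χ : C(X, ℝ)) (h : ∀ x y, f (x, y) ≤ φ x + χ y) :
    superValue μ ν f ≤ ∫ x, φ x ∂μ + ∫ y, χ y ∂ν :=
  csInf_le (superValues_bddBelow μ ν f) ⟨φ, χ, h, rfl⟩

lemma superValue_add (f g : C(X × X, ℝ)) :
    superValue μ ν (f + g) ≤ superValue μ ν f + superValue μ ν g := by
  refine le_of_forall_pos_le_add fun δ hδ => ?_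
  obtain ⟨_, ⟨φ, χ, h, rfl⟩, h1⟩ := exists_lt_of_csInf_lt (superValues_nonempty μ ν f)
    (lt_add_of_pos_right (superValue μ ν f) (half_pos hδ))
  obtain ⟨_, ⟨φ', χe, h', rfl⟩, h1'⟩ := exists_lt_of_csInf_lt (superValues_nonempty μ ν g)
    (lt_add_of_pos_right (superValue μ ν g) (half_pos hδ))
  have := superValue_le μ ν (f := f + g) (φ + φ') (χ + χe) (fun x y => by
    simp only [ContinuousMap.add_apply]; linarith [h x y, h' x y])
  simp only [ContinuousMap.add_apply] at this
  rw [integral_add (integrable_cont μ φ) (integrable_cont μ φ'),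
    integral_add (integrable_cont ν χ) (integrable_cont ν χe)] at this
  linarith

lemma superValue_smul_le (t : ℝ) (ht : 0 < t) (f : C(X × X, ℝ)) :
    superValue μ ν (t • f) ≤ t * superValue μ ν f := by
  rw [← div_le_iff₀' ht]
  refine le_csInf (superValues_nonempty μ ν f) ?_
  rintro _ ⟨φ, χ, h, rfl⟩
  rw [div_le_iff₀' ht]
  have := superValue_le μ ν (f := t • f) (t • φ) (t • χ) (fun x y => by
    simp only [ContinuousMap.smul_apply, smul_eq_mul]
    rw [← mul_add]; exact mul_le_mul_of_nonneg_left (h x y) ht.le)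
  simp only [ContinuousMap.smul_apply, smul_eq_mul, integral_const_mul] at this
  linarith

lemma superValue_smul (t : ℝ) (ht : 0 < t) (f : C(X × X, ℝ)) :
    superValue μ ν (t • f) = t * superValue μ ν f := by
  refine le_antisymm (superValue_smul_le μ ν t ht f) ?_
  have := superValue_smul_le μ ν t⁻¹ (inv_pos.2 ht) (t • f)
  rw [smul_smul, inv_mul_cancel₀ ht.ne', one_smul] at this
  rwa [← le_inv_mul_iff₀ ht]

lemma superValue_zero : superValue μ ν (0 : C(X × X, ℝ)) = 0 := by
  have := superValue_smul μ ν 2 two_pos 0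
  rw [smul_zero] at this
  linarith

/-- Hahn–Banach: a linear functional dominated by `superValue` and touching it at `f₀`. -/
lemma exists_linear_le_superValue (f₀ : C(X × X, ℝ)) :
    ∃ l : C(X × X, ℝ) →ₗ[ℝ] ℝ, l f₀ = superValue μ ν f₀ ∧ ∀ f, l f ≤ superValue μ ν f := by
  have H : ∀ t : ℝ, t • f₀ = 0 → (RingHom.id ℝ) t • superValue μ ν f₀ = 0 := by
    intro t ht
    rcases smul_eq_zero.1 ht with h | h
    · simp [h]
    · simp [h, superValue_zero]
  obtain ⟨l, hl, hle⟩ := exists_extension_of_le_sublinear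
    (LinearPMap.mkSpanSingleton' f₀ (superValue μ ν f₀) H) (superValue μ ν)
    (superValue_smul μ ν) (superValue_add μ ν) (by
      rintro ⟨x, hx⟩
      obtain ⟨t, rfl⟩ := Submodule.mem_span_singleton.1 hx
      rw [LinearPMap.mkSpanSingleton'_apply]
      simp only [RingHom.id_apply, smul_eq_mul]
      rcases lt_trichotomy t 0 with h | h | h
      · have h1 := superValue_add μ ν (t • f₀) ((-t) • f₀)
        rw [superValue_smul μ ν (-t) (by linarith), ← add_smul, add_neg_cancel, zero_smul,
          superValue_zero] at h1
        linarith
      · simp [h, superValue_zero]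
      · rw [superValue_smul μ ν t h])
  refine ⟨l, ?_, hle⟩
  exact (hl ⟨f₀, Submodule.mem_span_singleton_self f₀⟩).trans
    (LinearPMap.mkSpanSingleton'_apply_self ..)

/-- **Kantorovich duality** on a compact metric space: some transport plan is, up to an
arbitrarily small error, no more expensive than a dual admissible pair. -/
lemma exists_plan_duality (c : C(X × X, ℝ)) :
    ∃ γ : Measure (X × X), γ.map Prod.fst = μ ∧ γ.map Prod.snd = ν ∧
      ∀ δ > 0, ∃ φ χ : C(X, ℝ), (∀ x y, φ x + χ y ≤ c (x, y)) ∧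
        ∫ q, c q ∂γ ≤ ∫ x, φ x ∂μ + ∫ y, χ y ∂ν + δ := by
  obtain ⟨l, hl0, hl⟩ := exists_linear_le_superValue μ ν (-c)
  have hpos : ∀ f : C(X × X, ℝ), (∀ q, 0 ≤ f q) → 0 ≤ l f := by
    intro f hf
    have h1 := (hl (-f)).trans (superValue_le μ ν 0 0 fun x y => by simpa using hf (x, y))
    rw [map_neg] at h1
    simpa using h1
  let L : CompactlySupportedContinuousMap (X × X) ℝ →ₗ[ℝ] ℝ :=
    { toFun := fun f => l f.toContinuousMap
      map_add' := fun f g => by rw [← map_add]; rfl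
      map_smul' := fun t f => by rw [← map_smul]; rfl }
  let Λ := PositiveLinearMap.mk₀ L (fun f hf => hpos _ (CompactlySupportedContinuousMap.le_def.1 hf))
  have hInt : ∀ f : C(X × X, ℝ), ∫ q, f q ∂(RealRMK.rieszMeasure Λ) = l f := by
    intro f
    exact RealRMK.integral_rieszMeasure Λ
      (CompactlySupportedContinuousMap.continuousMapEquiv f)
  have hadd : ∀ φ χ : C(X, ℝ),
      l (φ.comp ContinuousMap.fst + χ.comp ContinuousMap.snd)
        ≤ ∫ x, φ x ∂μ + ∫ y, χ y ∂ν := fun φ χ =>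
    (hl _).trans (superValue_le μ ν φ χ fun x y => by simp)
  refine ⟨RealRMK.rieszMeasure Λ, ?_, ?_, ?_⟩
  · refine ext_of_forall_integral_eq_of_IsFiniteMeasure fun f => ?_
    rw [integral_map measurable_fst.aemeasurable f.continuous.aestronglyMeasurable]
    refine (hInt (f.toContinuousMap.comp ContinuousMap.fst)).trans ?_
    have h1 := hadd f.toContinuousMap 0
    have h2 := hadd (-f.toContinuousMap) 0
    simp only [ContinuousMap.zero_comp, add_zero, ContinuousMap.neg_comp, map_neg,
      ContinuousMap.neg_apply, ContinuousMap.zero_apply, integral_zero, integral_neg] at h1 h2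
    exact le_antisymm h1 (neg_le_neg_iff.1 h2)
  · refine ext_of_forall_integral_eq_of_IsFiniteMeasure fun f => ?_
    rw [integral_map measurable_snd.aemeasurable f.continuous.aestronglyMeasurable]
    refine (hInt (f.toContinuousMap.comp ContinuousMap.snd)).trans ?_
    have h1 := hadd 0 f.toContinuousMap
    have h2 := hadd 0 (-f.toContinuousMap)
    simp only [ContinuousMap.zero_comp, zero_add, ContinuousMap.neg_comp, map_neg,
      ContinuousMap.neg_apply, ContinuousMap.zero_apply, integral_zero, integral_neg] at h1 h2
    exact le_antisymm h1 (neg_le_neg_iff.1 h2)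
  · intro δ hδ
    obtain ⟨_, ⟨φ, χ, h, rfl⟩, h1⟩ := exists_lt_of_csInf_lt (superValues_nonempty μ ν (-c))
      (lt_add_of_pos_right (superValue μ ν (-c)) hδ)
    refine ⟨-φ, -χ, fun x y => ?_, ?_⟩
    · have := h x y
      simp only [ContinuousMap.neg_apply] at this ⊢
      linarith
    · rw [hInt c]
      rw [← hl0, map_neg] at h1
      simp only [ContinuousMap.neg_apply, integral_neg]
      linarith

end Duality

/-! ### `c`-transforms, compactness and duality on a compact subset of Euclidean space -/

section Potentials

variable {d : ℕ}

local notation "E" => EuclideanSpace ℝ (Fin d)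

variable {Ω : Set (EuclideanSpace ℝ (Fin d))} {p : ℝ}

lemma continuous_cost (hp : 1 ≤ p) : Continuous fun q : E × E => ‖q.1 - q.2‖ ^ p :=
  (continuous_fst.sub continuous_snd).norm.rpow_const fun _ => Or.inr (by linarith)

lemma continuous_cost_comp {Z : Type*} [TopologicalSpace Z] (hp : 1 ≤ p) {f g : Z → E}
    (hf : Continuous f) (hg : Continuous g) : Continuous fun z => ‖f z - g z‖ ^ p :=
  (hf.sub hg).norm.rpow_const fun _ => Or.inr (by linarith)

lemma ae_mem_of_measure_eq_one (hΩ : IsCompact Ω) {μ : Measure E} [IsProbabilityMeasure μ]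
    (hμ : μ Ω = 1) : ∀ᵐ x ∂μ, x ∈ Ω :=
  (prob_compl_eq_zero_iff hΩ.measurableSet).2 hμ

lemma integrable_of_ae_mem {Y : Type*} [TopologicalSpace Y] [T2Space Y] [MeasurableSpace Y]
    [BorelSpace Y] {K : Set Y} (hK : IsCompact K) {μ : Measure Y} [IsFiniteMeasure μ]
    (hμ : ∀ᵐ x ∂μ, x ∈ K) {f : Y → ℝ} (hf : Continuous f) : Integrable f μ := by
  rw [← Measure.restrict_eq_self_of_ae_mem hμ]
  exact hf.continuousOn.integrableOn_compact hK

lemma abs_integral_sub_le {Y : Type*} [TopologicalSpace Y] [T2Space Y] [MeasurableSpace Y]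
    [BorelSpace Y] {K : Set Y} (hK : IsCompact K) {μ : Measure Y} [IsProbabilityMeasure μ]
    (hμ : ∀ᵐ x ∂μ, x ∈ K) {f g : Y → ℝ} (hf : Continuous f) (hg : Continuous g) {δ : ℝ}
    (h : ∀ x ∈ K, |f x - g x| ≤ δ) : |∫ x, f x ∂μ - ∫ x, g x ∂μ| ≤ δ := by
  rw [← integral_sub (integrable_of_ae_mem hK hμ hf) (integrable_of_ae_mem hK hμ hg)]
  have := norm_integral_le_of_norm_le_const (μ := μ) (f := fun x => f x - g x) (C := δ)
    (hμ.mono fun x hx => h x hx)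
  simpa using this

lemma ctransform_eq (ψ : E → ℝ) (y : E) :
    ctransform p Ω ψ y = sInf ((fun x => ‖x - y‖ ^ p - ψ x) '' Ω) := by
  unfold ctransform
  congr 1
  ext r
  simp only [Set.mem_ofPred_eq, Set.mem_image, eq_comm]

lemma continuous_cost_sub (hp : 1 ≤ p) {ψ : E → ℝ} (hψ : Continuous ψ) :
    Continuous fun q : E × E => ‖q.2 - q.1‖ ^ p - ψ q.2 :=
  (continuous_cost_comp hp continuous_snd continuous_fst).sub (hψ.comp continuous_snd)

lemma continuous_ctransform (hΩ : IsCompact Ω) (hp : 1 ≤ p) {ψ : E → ℝ} (hψ : Continuous ψ) :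
    Continuous (ctransform p Ω ψ) := by
  have h := hΩ.continuous_sInf (f := fun y x : E => ‖x - y‖ ^ p - ψ x)
    (continuous_cost_sub hp hψ)
  rwa [show ctransform p Ω ψ = _ from funext (ctransform_eq ψ)]

lemma ctransform_le (hΩ : IsCompact Ω) (hp : 1 ≤ p) {ψ : E → ℝ} (hψ : Continuous ψ)
    {x : E} (hx : x ∈ Ω) (y : E) : ctransform p Ω ψ y ≤ ‖x - y‖ ^ p - ψ x := by
  rw [ctransform_eq]
  refine csInf_le (hΩ.image ?_).bddBelow ⟨x, hx, rfl⟩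
  exact (continuous_cost_comp hp continuous_id continuous_const).sub hψ

lemma le_ctransform (hΩne : Ω.Nonempty) {ψ : E → ℝ} {y : E} {m : ℝ}
    (h : ∀ x ∈ Ω, m ≤ ‖x - y‖ ^ p - ψ x) : m ≤ ctransform p Ω ψ y := by
  rw [ctransform_eq]
  refine le_csInf (hΩne.image _) ?_
  rintro _ ⟨x, hx, rfl⟩
  exact h x hx

lemma ctransform_sub_le (hΩ : IsCompact Ω) (hΩne : Ω.Nonempty) (hp : 1 ≤ p) {f g : E → ℝ}
    (hf : Continuous f) {δ : ℝ} (h : ∀ x ∈ Ω, g x - f x ≤ δ) (y : E) :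
    ctransform p Ω f y - ctransform p Ω g y ≤ δ := by
  have : ctransform p Ω f y - δ ≤ ctransform p Ω g y := le_ctransform hΩne fun x hx => by
    linarith [h x hx, ctransform_le hΩ hp hf hx y]
  linarith

/-- The common modulus of continuity of all `c`-transforms. -/
noncomputable def costModulus (p : ℝ) (Ω : Set (EuclideanSpace ℝ (Fin d))) (x y : E) : ℝ :=
  sSup ((fun z => |‖z - x‖ ^ p - ‖z - y‖ ^ p|) '' Ω)

lemma continuous_costModulus (hΩ : IsCompact Ω) (hp : 1 ≤ p) (x : E) :
    Continuous (costModulus p Ω x) := by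
  refine hΩ.continuous_sSup (f := fun y z : E => |‖z - x‖ ^ p - ‖z - y‖ ^ p|) ?_
  refine Continuous.abs (Continuous.sub ?_ ?_)
  · exact continuous_cost_comp hp continuous_snd continuous_const
  · exact continuous_cost_comp hp continuous_snd continuous_fst

lemma costModulus_self (hΩne : Ω.Nonempty) (x : E) : costModulus p Ω x x = 0 := by
  simp [costModulus, hΩne.image_const]

lemma le_costModulus (hΩ : IsCompact Ω) (hp : 1 ≤ p) (x y : E) {z : E} (hz : z ∈ Ω) :
    |‖z - x‖ ^ p - ‖z - y‖ ^ p| ≤ costModulus p Ω x y := by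
  refine le_csSup (hΩ.image ?_).bddAbove ⟨z, hz, rfl⟩
  refine Continuous.abs (Continuous.sub ?_ ?_)
  · exact continuous_cost_comp hp continuous_id continuous_const
  · exact continuous_cost_comp hp continuous_id continuous_const

lemma ctransform_sub_le_costModulus (hΩ : IsCompact Ω) (hΩne : Ω.Nonempty) (hp : 1 ≤ p)
    {χ : E → ℝ} (hχ : Continuous χ) (x y : E) :
    |ctransform p Ω χ x - ctransform p Ω χ y| ≤ costModulus p Ω x y := by
  have h1 : ctransform p Ω χ x - costModulus p Ω x y ≤ ctransform p Ω χ y :=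
    le_ctransform hΩne fun z hz => by
      linarith [ctransform_le hΩ hp hχ hz x, (abs_le.1 (le_costModulus hΩ hp x y hz)).2]
  have h2 : ctransform p Ω χ y - costModulus p Ω x y ≤ ctransform p Ω χ x :=
    le_ctransform hΩne fun z hz => by
      linarith [ctransform_le hΩ hp hχ hz y, (abs_le.1 (le_costModulus hΩ hp x y hz)).1]
  rw [abs_le]; constructor <;> linarith

/-- Continuous functions with modulus of continuity `costModulus`, normalized to vanish at the
origin. -/
def normalizedPotentials (p : ℝ) (Ω : Set (EuclideanSpace ℝ (Fin d))) : Set C(E, ℝ) :=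
  {f | f 0 = 0 ∧ ∀ x y, |f x - f y| ≤ costModulus p Ω x y}

/-- Compactness by Arzelà–Ascoli, in the compact-open topology: the modulus bounds each `f x` by
`costModulus p Ω x 0`. -/
lemma isCompact_normalizedPotentials (hΩ : IsCompact Ω) (hΩne : Ω.Nonempty) (hp : 1 ≤ p) :
    IsCompact (normalizedPotentials p Ω) := by
  have hcont : ∀ x : E, Filter.Tendsto (costModulus p Ω x) (nhds x) (nhds 0) := by
    intro x
    have := (continuous_costModulus hΩ hp x).tendsto x
    rwa [costModulus_self hΩne] at this
  refine ArzelaAscoli.isCompact_of_equicontinuous _ ?_ ?_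
  · have himg : ContinuousMap.toFun '' normalizedPotentials p Ω =
        {f : E → ℝ | f 0 = 0 ∧ ∀ x y, |f x - f y| ≤ costModulus p Ω x y} := by
      ext f
      constructor
      · rintro ⟨g, hg, rfl⟩; exact hg
      · intro hf
        refine ⟨⟨f, ?_⟩, hf, rfl⟩
        rw [continuous_iff_continuousAt]
        intro x
        rw [ContinuousAt, tendsto_iff_dist_tendsto_zero]
        refine squeeze_zero (fun _ => dist_nonneg) (fun y => ?_) (hcont x)
        rw [dist_comm]
        exact hf.2 x y
    rw [himg]
    refine IsCompact.of_isClosed_subset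
      (isCompact_univ_pi fun x : E => isCompact_Icc (a := -costModulus p Ω x 0)
        (b := costModulus p Ω x 0)) ?_ ?_
    · simp only [Set.ofPred_and, Set.ofPred_forall]
      refine (isClosed_eq (continuous_apply _) continuous_const).inter
        (isClosed_iInter fun x => isClosed_iInter fun y => ?_)
      exact isClosed_le ((continuous_apply x).sub (continuous_apply y)).abs continuous_const
    · rintro f ⟨h0, hf⟩ x -
      have := hf x 0
      rw [h0, sub_zero] at this
      exact abs_le.1 this
  · intro x
    refine Metric.equicontinuousAt_of_continuity_modulus _ (hcont x) _ ?_
    exact Filter.Eventually.of_forall fun y f => f.2.2 x y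

/-- A functional controlled by the sup-distance on `Ω` is continuous for the compact-open
topology. -/
lemma continuous_of_control (hΩ : IsCompact Ω) (F : C(E, ℝ) → ℝ)
    (h : ∀ (f g : C(E, ℝ)) (δ : ℝ), (∀ x ∈ Ω, |f x - g x| ≤ δ) → |F f - F g| ≤ δ) :
    Continuous F := by
  rw [continuous_iff_continuousAt]
  intro g
  rw [ContinuousAt, Metric.tendsto_nhds]
  intro η hη
  have := (ContinuousMap.tendsto_iff_forall_isCompact_tendstoUniformlyOn.1
    (Filter.tendsto_id (x := nhds g))) Ω hΩ
  rw [Metric.tendstoUniformlyOn_iff] at this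
  filter_upwards [this (η / 2) (half_pos hη)] with f hf
  refine lt_of_le_of_lt (h f g (η / 2) fun x hx => ?_) (half_lt_self hη)
  have := hf x hx
  rw [dist_comm] at this
  exact this.le

lemma continuous_integral (hΩ : IsCompact Ω) {μ : Measure E} [IsProbabilityMeasure μ]
    (hμ : μ Ω = 1) : Continuous fun f : C(E, ℝ) => ∫ x, f x ∂μ :=
  continuous_of_control hΩ _ fun f g _ h =>
    abs_integral_sub_le hΩ (ae_mem_of_measure_eq_one hΩ hμ) f.continuous g.continuous h

lemma continuous_integral_ctransform (hΩ : IsCompact Ω) (hΩne : Ω.Nonempty) (hp : 1 ≤ p)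
    {ν : Measure E} [IsProbabilityMeasure ν] (hν : ν Ω = 1) :
    Continuous fun f : C(E, ℝ) => ∫ y, ctransform p Ω f y ∂ν :=
  continuous_of_control hΩ _ fun f g δ h =>
    abs_integral_sub_le hΩ (ae_mem_of_measure_eq_one hΩ hν)
      (continuous_ctransform hΩ hp f.continuous) (continuous_ctransform hΩ hp g.continuous)
      fun y _ => by
        have h1 := ctransform_sub_le hΩ hΩne hp f.continuous (g := g) (δ := δ)
          (fun x hx => by linarith [(abs_le.1 (h x hx)).1]) y
        have h2 := ctransform_sub_le hΩ hΩne hp g.continuous (g := f) (δ := δ)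
          (fun x hx => by linarith [(abs_le.1 (h x hx)).2]) y
        rw [abs_le]; constructor <;> linarith

variable (μ ν : Measure (EuclideanSpace ℝ (Fin d))) [IsProbabilityMeasure μ]
  [IsProbabilityMeasure ν]

/-- Weak duality; the product plan makes the infimum in `Wpp` one over a nonempty set. -/
lemma dual_le_Wpp (hΩ : IsCompact Ω) (hp : 1 ≤ p) (hμ : μ Ω = 1) (hν : ν Ω = 1)
    {f : E → ℝ} (hf : Continuous f) :
    ∫ x, f x ∂μ + ∫ y, ctransform p Ω f y ∂ν ≤ Wpp p μ ν := by
  refine le_csInf ⟨_, μ.prod ν, by simp, by simp, rfl⟩ ?_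
  rintro _ ⟨γ, h1, h2, rfl⟩
  have : IsProbabilityMeasure γ :=
    ⟨by rw [← Set.preimage_univ (f := Prod.fst), ← Measure.map_apply measurable_fst .univ, h1,
      measure_univ]⟩
  have hae1 : ∀ᵐ q ∂γ, q.1 ∈ Ω := by
    have := ae_mem_of_measure_eq_one hΩ hμ
    rw [← h1] at this
    exact ae_of_ae_map measurable_fst.aemeasurable this
  have hae2 : ∀ᵐ q ∂γ, q.2 ∈ Ω := by
    have := ae_mem_of_measure_eq_one hΩ hν
    rw [← h2] at this
    exact ae_of_ae_map measurable_snd.aemeasurable this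
  have hae : ∀ᵐ q ∂γ, q ∈ Ω ×ˢ Ω := by
    filter_upwards [hae1, hae2] with q a b using ⟨a, b⟩
  have hK := hΩ.prod hΩ
  have hc := continuous_ctransform hΩ hp hf
  have hi1 : Integrable (fun q : E × E => f q.1) γ :=
    integrable_of_ae_mem hK hae (hf.comp continuous_fst)
  have hi2 : Integrable (fun q : E × E => ctransform p Ω f q.2) γ :=
    integrable_of_ae_mem hK hae (hc.comp continuous_snd)
  rw [← h1, ← h2, integral_map measurable_fst.aemeasurable hf.aestronglyMeasurable,
    integral_map measurable_snd.aemeasurable hc.aestronglyMeasurable,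
    ← integral_add hi1 hi2]
  refine integral_mono_ae (hi1.add hi2)
    (integrable_of_ae_mem hK hae (continuous_cost hp)) ?_
  filter_upwards [hae1] with q hq
  have := ctransform_le hΩ hp hf hq q.2
  linarith

/-- Strong duality with normalized almost-maximizers: a dual admissible pair on `Ω` is improved by
replacing its first function with the `c`-transform of the second, then shifted by a constant. -/
lemma exists_almost_maximizer (hΩ : IsCompact Ω) (hΩne : Ω.Nonempty) (hp : 1 ≤ p)
    (hμ : μ Ω = 1) (hν : ν Ω = 1) {δ : ℝ} (hδ : 0 < δ) :
    ∃ f ∈ normalizedPotentials p Ω,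
      Wpp p μ ν ≤ ∫ x, f x ∂μ + ∫ y, ctransform p Ω f y ∂ν + δ := by
  have hcompact : CompactSpace Ω := isCompact_iff_compactSpace.1 hΩ
  have hmap : ∀ (ρ : Measure E) [IsProbabilityMeasure ρ], ρ Ω = 1 →
      (ρ.comap ((↑) : Ω → E)).map (↑) = ρ := fun ρ _ hρ => by
    rw [map_comap_subtype_coe hΩ.measurableSet,
      Measure.restrict_eq_self_of_ae_mem (ae_mem_of_measure_eq_one hΩ hρ)]
  have hprob : ∀ (ρ : Measure E) [IsProbabilityMeasure ρ], ρ Ω = 1 →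
      IsProbabilityMeasure (ρ.comap ((↑) : Ω → E)) := fun ρ _ hρ => ⟨by
    rw [comap_subtype_coe_apply hΩ.measurableSet]; simpa using hρ⟩
  have := hprob μ hμ
  have := hprob ν hν
  obtain ⟨γ, h1, h2, hγ⟩ := exists_plan_duality (μ.comap ((↑) : Ω → E)) (ν.comap ((↑) : Ω → E))
    ⟨fun q => ‖(q.1 : E) - q.2‖ ^ p, continuous_cost_comp hp
      (continuous_subtype_val.comp continuous_fst) (continuous_subtype_val.comp continuous_snd)⟩
  obtain ⟨φ, χ, hφχ, hle⟩ := hγ δ hδ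
  simp only [ContinuousMap.coe_mk] at hφχ hle
  have hval : Measurable ((↑) : Ω → E) := measurable_subtype_coe
  have hW : Wpp p μ ν ≤ ∫ q, ‖(q.1 : E) - q.2‖ ^ p ∂γ := by
    refine csInf_le ⟨0, ?_⟩ ⟨γ.map (Prod.map (↑) (↑)), ?_, ?_, ?_⟩
    · rintro _ ⟨γ', -, -, rfl⟩
      exact integral_nonneg fun q => by positivity
    · rw [Measure.map_map measurable_fst (hval.prodMap hval)]
      conv_rhs => rw [← hmap μ hμ, ← h1, Measure.map_map hval measurable_fst]
      rfl
    · rw [Measure.map_map measurable_snd (hval.prodMap hval)]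
      conv_rhs => rw [← hmap ν hν, ← h2, Measure.map_map hval measurable_snd]
      rfl
    · rw [integral_map (hval.prodMap hval).aemeasurable
        (continuous_cost hp).aestronglyMeasurable]
      rfl
  obtain ⟨χe, hχe⟩ := ContinuousMap.exists_restrict_eq hΩ.isClosed χ
  have hχv : ∀ y : Ω, χe y = χ y := fun y => by rw [← hχe]; rfl
  have hcc := continuous_ctransform hΩ hp χe.continuous
  set a := ctransform p Ω χe 0 with ha
  let f : C(E, ℝ) := ⟨fun x => ctransform p Ω χe x - a, hcc.sub continuous_const⟩
  have hfapp : ∀ x, f x = ctransform p Ω χe x - a := fun _ => rfl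
  refine ⟨f, ⟨by simp [hfapp, ha], fun x y => ?_⟩, ?_⟩
  · rw [hfapp, hfapp, sub_sub_sub_cancel_right]
    exact ctransform_sub_le_costModulus hΩ hΩne hp χe.continuous x y
  · have hφ : ∫ x, φ x ∂(μ.comap ((↑) : Ω → E)) ≤ ∫ x, f x ∂μ + a := by
      have h3 : ∫ x, f x ∂μ + a = ∫ x, ctransform p Ω χe x ∂μ := by
        simp only [hfapp]
        rw [integral_sub (integrable_of_ae_mem hΩ (ae_mem_of_measure_eq_one hΩ hμ) hcc)
          (integrable_const a)]
        simp
      rw [h3]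
      conv_rhs => rw [← hmap μ hμ]
      rw [integral_map hval.aemeasurable hcc.aestronglyMeasurable]
      refine integral_mono (integrable_cont _ φ)
        (integrable_cont _ ⟨_, hcc.comp continuous_subtype_val⟩) fun x => ?_
      refine le_ctransform hΩne fun y hy => ?_
      have := hφχ x ⟨y, hy⟩
      rw [← hχv, norm_sub_rev] at this
      linarith
    have hχ2 : ∫ y, χ y ∂(ν.comap ((↑) : Ω → E)) ≤ ∫ y, ctransform p Ω f y ∂ν - a := by
      have hcf := continuous_ctransform hΩ hp f.continuous
      have h3 : ∫ y, ctransform p Ω f y ∂ν - a = ∫ y, (ctransform p Ω f y - a) ∂ν := by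
        rw [integral_sub (integrable_of_ae_mem hΩ (ae_mem_of_measure_eq_one hΩ hν) hcf)
          (integrable_const a)]
        simp
      rw [h3]
      conv_rhs => rw [← hmap ν hν]
      have hca : Continuous fun y => ctransform p Ω f y - a := hcf.sub continuous_const
      rw [integral_map hval.aemeasurable hca.aestronglyMeasurable]
      refine integral_mono (integrable_cont _ χ)
        (integrable_cont _ ⟨_, hca.comp continuous_subtype_val⟩)
        fun y => ?_
      have : χ y + a ≤ ctransform p Ω f y := le_ctransform hΩne fun x hx => by
        have := ctransform_le hΩ hp χe.continuous y.2 x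
        rw [hfapp, ← hχv, norm_sub_rev]
        linarith
      exact le_sub_iff_add_le.2 this
    linarith

end Potentials

/-! ### The one-sided derivative -/

/-- (Kantorovich potentials as Gateaux derivatives of `W_p^p(·,ν)`.)
Assume the Kantorovich potential for the transport from `μ` to `ν` with cost `|x-y|^p` is
unique up to additive constants on `Ω`.  Then, with `μ_ε := (1-ε)μ + εμ₁`,
`lim_{ε→0⁺} (W_p^p(μ_ε,ν) - W_p^p(μ,ν))/ε = ∫ ψ_{μ,ν} d(μ₁ - μ)`,
where `ψ_{μ,ν}` is a (continuous) Kantorovich potential, i.e. a maximizer of the dual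
problem: `∫ψ dμ + ∫ψ^c dν = W_p^p(μ,ν)`. -/
theorem stmt15 {d : ℕ} (Ω : Set (EuclideanSpace ℝ (Fin d)))
    (hΩ : IsCompact Ω) (hΩne : Ω.Nonempty)
    (p : ℝ) (hp : 1 ≤ p)
    (μ μ₁ ν : Measure (EuclideanSpace ℝ (Fin d)))
    [IsProbabilityMeasure μ] [IsProbabilityMeasure μ₁] [IsProbabilityMeasure ν]
    (hμ : μ Ω = 1) (hμ₁ : μ₁ Ω = 1) (hν : ν Ω = 1)
    (huniq : ∀ ψ₁ ψ₂ : EuclideanSpace ℝ (Fin d) → ℝ, Continuous ψ₁ → Continuous ψ₂ →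
      (∫ x, ψ₁ x ∂μ + ∫ y, ctransform p Ω ψ₁ y ∂ν = Wpp p μ ν) →
      (∫ x, ψ₂ x ∂μ + ∫ y, ctransform p Ω ψ₂ y ∂ν = Wpp p μ ν) →
      ∃ c : ℝ, ∀ x ∈ Ω, ψ₁ x = ψ₂ x + c)
    (ψ : EuclideanSpace ℝ (Fin d) → ℝ) (hψc : Continuous ψ)
    (hdual : ∫ x, ψ x ∂μ + ∫ y, ctransform p Ω ψ y ∂ν = Wpp p μ ν) :
    Filter.Tendsto
      (fun ε : ℝ =>
        (Wpp p (ENNReal.ofReal (1 - ε) • μ + ENNReal.ofReal ε • μ₁) ν - Wpp p μ ν) / ε)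
      (nhdsWithin 0 (Set.Ioi 0))
      (nhds (∫ x, ψ x ∂μ₁ - ∫ x, ψ x ∂μ)) := by
  set W := Wpp p μ ν with hW
  set L := ∫ x, ψ x ∂μ₁ - ∫ x, ψ x ∂μ with hL
  have hμae := ae_mem_of_measure_eq_one hΩ hμ
  have hμ₁ae := ae_mem_of_measure_eq_one hΩ hμ₁
  -- The value of the dual problem, and its derivative in the direction `μ₁ - μ`.
  let A : C(EuclideanSpace ℝ (Fin d), ℝ) → ℝ :=
    fun f => ∫ x, f x ∂μ + ∫ y, ctransform p Ω f y ∂ν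
  let B : C(EuclideanSpace ℝ (Fin d), ℝ) → ℝ := fun f => ∫ x, f x ∂μ₁ - ∫ x, f x ∂μ
  have hAcont : Continuous A :=
    (continuous_integral hΩ hμ).add (continuous_integral_ctransform hΩ hΩne hp hν)
  have hBcont : Continuous B := (continuous_integral hΩ hμ₁).sub (continuous_integral hΩ hμ)
  have hAW : ∀ f, A f ≤ W := fun f => dual_le_Wpp μ ν hΩ hp hμ hν f.continuous
  have hAB : ∀ f, A f = W → B f = L := by
    intro f hf
    obtain ⟨c, hc⟩ := huniq f ψ f.continuous hψc hf hdual
    have key : ∀ (ρ : Measure (EuclideanSpace ℝ (Fin d))) [IsProbabilityMeasure ρ],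
        (∀ᵐ x ∂ρ, x ∈ Ω) → ∫ x, f x ∂ρ = ∫ x, ψ x ∂ρ + c := by
      intro ρ _ hρ
      rw [integral_congr_ae (hρ.mono hc),
        integral_add (integrable_of_ae_mem hΩ hρ hψc) (integrable_const c)]
      simp
    simp only [B, hL]
    rw [key μ hμae, key μ₁ hμ₁ae]
    ring
  have hprob : ∀ ε : ℝ, 0 < ε → ε < 1 →
      IsProbabilityMeasure (ENNReal.ofReal (1 - ε) • μ + ENNReal.ofReal ε • μ₁) := by
    intro ε h0 h1
    refine ⟨?_⟩
    simp only [Measure.add_apply, Measure.smul_apply, measure_univ, smul_eq_mul, mul_one]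
    rw [← ENNReal.ofReal_add (by linarith) h0.le]
    simp
  have hmass : ∀ ε : ℝ, 0 < ε → ε < 1 →
      (ENNReal.ofReal (1 - ε) • μ + ENNReal.ofReal ε • μ₁) Ω = 1 := by
    intro ε h0 h1
    simp only [Measure.add_apply, Measure.smul_apply, hμ, hμ₁, smul_eq_mul, mul_one]
    rw [← ENNReal.ofReal_add (by linarith) h0.le]
    simp
  have hInt : ∀ ε : ℝ, 0 < ε → ε < 1 → ∀ f : EuclideanSpace ℝ (Fin d) → ℝ, Continuous f →
      ∫ x, f x ∂(ENNReal.ofReal (1 - ε) • μ + ENNReal.ofReal ε • μ₁) =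
        ∫ x, f x ∂μ + ε * (∫ x, f x ∂μ₁ - ∫ x, f x ∂μ) := by
    intro ε h0 h1 f hf
    rw [integral_add_measure
      ((integrable_of_ae_mem hΩ hμae hf).smul_measure ENNReal.ofReal_ne_top)
      ((integrable_of_ae_mem hΩ hμ₁ae hf).smul_measure ENNReal.ofReal_ne_top),
      integral_smul_measure, integral_smul_measure, ENNReal.toReal_ofReal (by linarith),
      ENNReal.toReal_ofReal h0.le]
    simp only [smul_eq_mul]
    ring
  have hlower : ∀ ε : ℝ, 0 < ε → ε < 1 →
      W + ε * L ≤ Wpp p (ENNReal.ofReal (1 - ε) • μ + ENNReal.ofReal ε • μ₁) ν := by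
    intro ε h0 h1
    have := hprob ε h0 h1
    have h2 := dual_le_Wpp _ ν hΩ hp (hmass ε h0 h1) hν hψc
    rw [hInt ε h0 h1 ψ hψc] at h2
    linarith
  have hsmall : ∀ᶠ ε : ℝ in nhdsWithin 0 (Set.Ioi 0), 0 < ε ∧ ε < 1 := by
    filter_upwards [Ioo_mem_nhdsGT (zero_lt_one (α := ℝ))] with ε hε using hε
  refine tendsto_order.2 ⟨fun b hb => ?_, fun b hb => ?_⟩
  · filter_upwards [hsmall] with ε ⟨h0, h1⟩
    rw [lt_div_iff₀ h0]
    have := hlower ε h0 h1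
    nlinarith
  · have hS := isCompact_normalizedPotentials hΩ hΩne hp
    -- Almost maximizers of the dual problem for `μ` have almost the right derivative.
    have hgap : ∃ δ > 0, ∀ f ∈ normalizedPotentials p Ω, W - δ < A f → B f < (L + b) / 2 := by
      have hT : IsCompact (normalizedPotentials p Ω ∩ {f | (L + b) / 2 ≤ B f}) :=
        hS.inter_right (isClosed_le continuous_const hBcont)
      rcases Set.eq_empty_or_nonempty
        (normalizedPotentials p Ω ∩ {f | (L + b) / 2 ≤ B f}) with h | h
      · refine ⟨1, one_pos, fun f hf _ => ?_⟩
        by_contra hcon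
        exact Set.eq_empty_iff_forall_notMem.1 h f ⟨hf, not_lt.1 hcon⟩
      · obtain ⟨g, ⟨-, hgB⟩, hgmax⟩ := hT.exists_isMaxOn h hAcont.continuousOn
        have hgB' : (L + b) / 2 ≤ B g := hgB
        have hne : A g ≠ W := fun heq => by
          have := hAB g heq
          linarith
        refine ⟨W - A g, sub_pos.2 (lt_of_le_of_ne (hAW g) hne), fun f hf hAf => ?_⟩
        by_contra hcon
        have : A f ≤ A g := hgmax ⟨hf, not_lt.1 hcon⟩
        linarith
    obtain ⟨δ, hδ, hgap⟩ := hgap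
    obtain ⟨C, hC⟩ := hS.exists_bound_of_continuousOn hBcont.continuousOn
    have hlim : Filter.Tendsto (fun ε : ℝ => ε * (|L| + C + ε)) (nhdsWithin 0 (Set.Ioi 0))
        (nhds 0) := by
      have : Continuous fun ε : ℝ => ε * (|L| + C + ε) := by fun_prop
      simpa using (this.tendsto 0).mono_left nhdsWithin_le_nhds
    have hb2 : (0 : ℝ) < (b - L) / 2 := by linarith
    filter_upwards [hsmall, hlim.eventually_lt_const hδ, Ioo_mem_nhdsGT hb2]
      with ε ⟨h0, h1⟩ hεδ hεb
    have := hprob ε h0 h1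
    obtain ⟨f, hf, hle⟩ := exists_almost_maximizer
      (ENNReal.ofReal (1 - ε) • μ + ENNReal.ofReal ε • μ₁) ν hΩ hΩne hp (hmass ε h0 h1) hν
      (mul_pos h0 h0)
    rw [hInt ε h0 h1 f f.continuous] at hle
    have hle' : Wpp p (ENNReal.ofReal (1 - ε) • μ + ENNReal.ofReal ε • μ₁) ν
        ≤ A f + ε * B f + ε * ε := by
      simp only [A, B]
      linarith
    have hBC : B f ≤ C := (le_abs_self _).trans (hC f hf)
    have hBf : B f < (L + b) / 2 := by
      refine hgap f hf ?_
      have h2 := hlower ε h0 h1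
      have h3 : ε * B f ≤ ε * C := mul_le_mul_of_nonneg_left hBC h0.le
      have h4 : ε * -|L| ≤ ε * L := mul_le_mul_of_nonneg_left (neg_abs_le L) h0.le
      linarith
    rw [div_lt_iff₀ h0]
    have h2 : ε * (B f + ε) < ε * b := by
      refine mul_lt_mul_of_pos_left ?_ h0
      linarith [hεb.2]
    linarith [hAW f]
end
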